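/- arXiv:1206.4541 — 2 statements merged into one kernel-verified Lean document; each statement's English description precedes it below -/
import Mathlib

section
/- Let c > 0 be a real number, let δ be a real number with 0 < δ < (5π/4)·c, and let n be a positive integer with n > 2c/π + (2/π²)·δ·log(4·e·π·c/δ). Let ψ be the n-th PSWF with band limit c, with ODE eigenvalue χ_n. Then δ·(1 − δ/(2·π·c)) < √χ_n · ( F(√((χ_n − c²)/χ_n)) − E(√((χ_n − c²)/χ_n)) ). -/
open Real

/-- `IsPSWF c n ψ χ lam` : `ψ` is the `n`-th prolate spheroidal wave function with
band limit `c`, ODE eigenvalue `χ` and integral eigenvalue `lam`. -/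
def IsPSWF (c : ℝ) (n : ℕ) (ψ : ℝ → ℝ) (χ : ℝ) (lam : ℂ) : Prop :=
  ContinuousOn ψ (Set.Icc (-1) 1) ∧
  (∀ x ∈ Set.Ioo (-1 : ℝ) 1, DifferentiableAt ℝ ψ x ∧ DifferentiableAt ℝ (deriv ψ) x) ∧
  (∀ x ∈ Set.Ioo (-1 : ℝ) 1,
    (1 - x ^ 2) * deriv (deriv ψ) x - 2 * x * deriv ψ x + (χ - c ^ 2 * x ^ 2) * ψ x = 0) ∧
  {x | x ∈ Set.Ioo (-1 : ℝ) 1 ∧ ψ x = 0}.Finite ∧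
  {x | x ∈ Set.Ioo (-1 : ℝ) 1 ∧ ψ x = 0}.ncard = n ∧
  (∫ t in (-1 : ℝ)..1, (ψ t) ^ 2) = 1 ∧
  ∀ x ∈ Set.Icc (-1 : ℝ) 1,
    lam * (ψ x : ℂ) =
      ∫ t in (-1 : ℝ)..1, (ψ t : ℂ) * Complex.exp (Complex.I * (c : ℂ) * (x : ℂ) * (t : ℂ))

/-- The complete elliptic integral of the first kind. -/
noncomputable def EllipticF (k : ℝ) : ℝ :=
  ∫ θ in (0 : ℝ)..(π / 2), 1 / Real.sqrt (1 - k ^ 2 * Real.sin θ ^ 2)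

/-- The complete elliptic integral of the second kind. -/
noncomputable def EllipticE (k : ℝ) : ℝ :=
  ∫ θ in (0 : ℝ)..(π / 2), Real.sqrt (1 - k ^ 2 * Real.sin θ ^ 2)

/-!
Write `K`, `E` for the complete elliptic integrals as functions of the parameter `m = k²`.

*Counting zeros.* Scale the logarithmic derivative of a solution `ψ` of the spheroidal equation to
`z = q ψ' / ψ`, where `q² = (1 - t²) / (χ - c² t²)`. The Prüfer angle `arctan z + ∫ dt / q`,
corrected by `a z² / (1 + z²)` with a suitable `a(t)`, increases between the zeros of `ψ`. Following
it from `-1` to `1` through the `n` zeros gives `n π ≤ 2 √χ E(c² / χ)` when `χ ≥ c²`. When `χ ≤ c²`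
the same argument with `q` taken at `χ = c²` gives `n π ≤ 2 c`, which the hypothesis on `n`
excludes.

*Comparing elliptic integrals.* Put `m = (χ - c²) / χ`. The quantity to be bounded from below is `c`
times the gap `(K(m) - E(m)) / √(1 - m)`, and the bound on `n π / 2` is `c` times the phase
`E(1 - m) / √(1 - m)`. Their derivatives in `m` are `K(m)` and `K(1 - m)` up to the same factor, and
`π K(1 - m) ≤ K(m) log (16 / m)`, which rests on Legendre's relation, integrates to an upper bound
for the phase in terms of the gap. With `d = δ / c`, a gap of at most `d (1 - d / (2π))` forces the
phase to be at most `1 + (d / π) log (4 e π / d)`, contrary to the hypothesis on `n`.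
-/

/-- The family `∫ θ in 0..π/2, (1 - m sin² θ) ^ p` of complete elliptic integrals in the
*parameter* `m = k²`; `p = -1/2` and `p = 1/2` are the integrals of the first and second kind, and
having all exponents at hand lets one differentiation lemma serve both. -/
noncomputable def ellipticPow (p m : ℝ) : ℝ := ∫ θ in 0..π / 2, (1 - m * sin θ ^ 2) ^ p

local notation "𝒦" => ellipticPow (-(1 / 2))
local notation "ℰ" => ellipticPow (1 / 2)

section EllipticIntegrals

variable {m p : ℝ}

lemma one_sub_mul_sin_sq_pos (hm : m < 1) (θ : ℝ) : 0 < 1 - m * sin θ ^ 2 := by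
  rcases le_or_gt m 0 with h | h <;> nlinarith [sin_sq_le_one θ, sq_nonneg (sin θ)]

lemma continuous_one_sub_mul_sin_sq_rpow (hm : m < 1) (p : ℝ) :
    Continuous fun θ => (1 - m * sin θ ^ 2) ^ p :=
  Continuous.rpow_const (by fun_prop) fun θ => .inl (one_sub_mul_sin_sq_pos hm θ).ne'

lemma intervalIntegrable_one_sub_mul_sin_sq_rpow (hm : m < 1) (p a b : ℝ) :
    IntervalIntegrable (fun θ => (1 - m * sin θ ^ 2) ^ p) MeasureTheory.volume a b :=
  (continuous_one_sub_mul_sin_sq_rpow hm p).intervalIntegrable a b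

lemma one_sub_mul_sin_sq_rpow_half (m θ : ℝ) :
    (1 - m * sin θ ^ 2) ^ (1 / 2 : ℝ) = √(1 - m * sin θ ^ 2) :=
  (sqrt_eq_rpow _).symm

lemma one_sub_mul_sin_sq_rpow_neg_half (hm : m < 1) (θ : ℝ) :
    (1 - m * sin θ ^ 2) ^ (-(1 / 2) : ℝ) = 1 / √(1 - m * sin θ ^ 2) := by
  rw [rpow_neg (one_sub_mul_sin_sq_pos hm θ).le, ← sqrt_eq_rpow, one_div]

lemma ellipticE_sqrt (hm : 0 ≤ m) : EllipticE √m = ℰ m := by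
  simp only [EllipticE, ellipticPow, sq_sqrt hm, one_sub_mul_sin_sq_rpow_half]

lemma ellipticF_sqrt (hm₀ : 0 ≤ m) (hm : m < 1) : EllipticF √m = 𝒦 m := by
  simp only [EllipticF, ellipticPow, sq_sqrt hm₀, one_sub_mul_sin_sq_rpow_neg_half hm]

lemma continuous_ellipticPow (hp : 0 ≤ p) : Continuous (ellipticPow p) :=
  intervalIntegral.continuous_parametric_intervalIntegral_of_continuous'
    (f := fun m θ => (1 - m * sin θ ^ 2) ^ p)
    (Continuous.rpow_const (by fun_prop) fun _ => .inr hp) _ _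

@[simp]
lemma ellipticPow_zero_right (p : ℝ) : ellipticPow p 0 = π / 2 := by simp [ellipticPow]

lemma ellipticPow_half_one : ℰ 1 = 1 := by
  have sqrt_eq_cos : ∀ θ ∈ Set.uIcc 0 (π / 2), (1 - 1 * sin θ ^ 2) ^ (1 / 2 : ℝ) = cos θ := by
    intro θ hθ
    rw [Set.uIcc_of_le (by positivity)] at hθ
    rw [← sqrt_eq_rpow, one_mul, ← cos_sq', sqrt_sq]
    exact cos_nonneg_of_mem_Icc ⟨by linarith [hθ.1, pi_pos], hθ.2⟩
  rw [ellipticPow, intervalIntegral.integral_congr sqrt_eq_cos]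
  simp

lemma antitoneOn_ellipticPow (hp : 0 ≤ p) : AntitoneOn (ellipticPow p) (Set.Iic 1) := by
  intro a _ b hb hab
  have integrable (m : ℝ) : IntervalIntegrable (fun θ => (1 - m * sin θ ^ 2) ^ p)
      MeasureTheory.volume 0 (π / 2) :=
    (Continuous.rpow_const (by fun_prop) fun _ => .inr hp).intervalIntegrable _ _
  refine intervalIntegral.integral_mono_on (by positivity) (integrable b) (integrable a) ?_
  intro θ _
  have hbθ : b * sin θ ^ 2 ≤ 1 := by
    nlinarith [sin_sq_le_one θ, sq_nonneg (sin θ), Set.mem_Iic.1 hb]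
  exact rpow_le_rpow (by linarith) (by gcongr) hp

lemma monotoneOn_ellipticPow (hp : p ≤ 0) : MonotoneOn (ellipticPow p) (Set.Iio 1) := by
  intro a ha b hb hab
  refine intervalIntegral.integral_mono_on (by positivity)
    (intervalIntegrable_one_sub_mul_sin_sq_rpow ha p _ _)
    (intervalIntegrable_one_sub_mul_sin_sq_rpow hb p _ _) fun θ _ => ?_
  exact rpow_le_rpow_of_nonpos (one_sub_mul_sin_sq_pos hb θ) (by gcongr) hp

lemma pi_div_two_le_ellipticPow (hp : p ≤ 0) (hm₀ : 0 ≤ m) (hm : m < 1) :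
    π / 2 ≤ ellipticPow p m := by
  simpa using monotoneOn_ellipticPow hp (by simp) hm hm₀

lemma ellipticPow_pos_of_nonpos (hp : p ≤ 0) (hm₀ : 0 ≤ m) (hm : m < 1) : 0 < ellipticPow p m :=
  pi_div_two_pos.trans_le (pi_div_two_le_ellipticPow hp hm₀ hm)

lemma ellipticPow_le_of_nonpos (hp : p ≤ 0) (hm₀ : 0 ≤ m) (hm : m < 1) :
    ellipticPow p m ≤ π / 2 * (1 - m) ^ p := by
  have integral_const : ∫ _ in 0..π / 2, (1 - m) ^ p = π / 2 * (1 - m) ^ p := by simp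
  rw [← integral_const]
  refine intervalIntegral.integral_mono_on (by positivity)
    (intervalIntegrable_one_sub_mul_sin_sq_rpow hm p _ _) (by simp) fun θ _ => ?_
  exact rpow_le_rpow_of_nonpos (by linarith) (by nlinarith [sin_sq_le_one θ]) hp

lemma ellipticPow_sub_one_sub_ellipticPow (hm : m < 1) (p : ℝ) :
    ellipticPow (p - 1) m - ellipticPow p m =
      ∫ θ in 0..π / 2, m * (sin θ ^ 2 * (1 - m * sin θ ^ 2) ^ (p - 1)) := by
  rw [ellipticPow, ellipticPow, ← intervalIntegral.integral_sub
    (intervalIntegrable_one_sub_mul_sin_sq_rpow hm _ _ _)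
    (intervalIntegrable_one_sub_mul_sin_sq_rpow hm _ _ _)]
  refine intervalIntegral.integral_congr fun θ _ => ?_
  have hpos := one_sub_mul_sin_sq_pos hm θ
  simp only [rpow_sub_one hpos.ne']
  field_simp
  ring

lemma hasDerivAt_ellipticPow_integral (hm : m < 1) (p : ℝ) :
    HasDerivAt (ellipticPow p)
      (∫ θ in 0..π / 2, -p * (sin θ ^ 2 * (1 - m * sin θ ^ 2) ^ (p - 1))) m := by
  have continuous_deriv {x : ℝ} (hx : x < 1) :
      Continuous fun θ => -p * (sin θ ^ 2 * (1 - x * sin θ ^ 2) ^ (p - 1)) := by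
    have := continuous_one_sub_mul_sin_sq_rpow hx (p - 1)
    fun_prop
  obtain ⟨C, hC⟩ : ∃ C, ∀ x ∈ Set.Icc (m - 1) ((m + 1) / 2) ×ˢ Set.Icc 0 (π / 2),
      ‖-p * (sin x.2 ^ 2 * (1 - x.1 * sin x.2 ^ 2) ^ (p - 1))‖ ≤ C := by
    refine (isCompact_Icc.prod isCompact_Icc).exists_bound_of_continuousOn ?_
    refine continuousOn_const.mul (ContinuousOn.mul (by fun_prop) ?_)
    refine ContinuousOn.rpow_const (by fun_prop) fun x hx => .inl ?_
    exact (one_sub_mul_sin_sq_pos (by linarith [hx.1.2]) x.2).ne'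
  refine (intervalIntegral.hasDerivAt_integral_of_dominated_loc_of_deriv_le
    (F := fun m θ => (1 - m * sin θ ^ 2) ^ p)
    (F' := fun m θ => -p * (sin θ ^ 2 * (1 - m * sin θ ^ 2) ^ (p - 1)))
    (s := Set.Ioo (m - 1) ((m + 1) / 2))
    (bound := fun _ => C) (Ioo_mem_nhds (by linarith) (by linarith)) ?_
    (intervalIntegrable_one_sub_mul_sin_sq_rpow hm p _ _)
    (continuous_deriv hm).aestronglyMeasurable ?_ (by simp) ?_).2
  · filter_upwards [Iio_mem_nhds hm] with x hx
    exact (continuous_one_sub_mul_sin_sq_rpow hx p).aestronglyMeasurable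
  · refine .of_forall fun θ hθ x hx => hC (x, θ) ⟨Set.Ioo_subset_Icc_self hx, ?_⟩
    rw [Set.uIoc_of_le (by positivity)] at hθ
    exact Set.Ioc_subset_Icc_self hθ
  · refine .of_forall fun θ _ x hx => ?_
    have hpos := one_sub_mul_sin_sq_pos (by linarith [hx.2] : x < 1) θ
    have := (((hasDerivAt_id x).mul_const (sin θ ^ 2)).const_sub 1).rpow_const (p := p)
      (.inl hpos.ne')
    exact this.congr_deriv (by simp only [id]; ring)

lemma continuousAt_ellipticPow (hm : m < 1) (p : ℝ) : ContinuousAt (ellipticPow p) m :=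
  (hasDerivAt_ellipticPow_integral hm p).continuousAt

lemma hasDerivAt_ellipticPow (hm₀ : m ≠ 0) (hm : m < 1) (p : ℝ) :
    HasDerivAt (ellipticPow p) (p * (ellipticPow p m - ellipticPow (p - 1) m) / m) m := by
  refine (hasDerivAt_ellipticPow_integral hm p).congr_deriv ?_
  have hsub := ellipticPow_sub_one_sub_ellipticPow hm p
  rw [intervalIntegral.integral_const_mul] at hsub ⊢
  rw [eq_div_iff hm₀]
  linear_combination p * hsub

lemma ellipticPow_neg_three_halves (hm : m < 1) : ellipticPow (-(3 / 2)) m = ℰ m / (1 - m) := by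
  have hasDeriv : ∀ θ ∈ Set.uIcc 0 (π / 2), HasDerivAt
      (fun θ => m * (sin θ * cos θ * (1 - m * sin θ ^ 2) ^ (-(1 / 2) : ℝ)))
      ((1 - m * sin θ ^ 2) ^ (1 / 2 : ℝ) - (1 - m) * (1 - m * sin θ ^ 2) ^ (-(3 / 2) : ℝ)) θ := by
    intro θ _
    have hpos := one_sub_mul_sin_sq_pos hm θ
    have h := (((hasDerivAt_sin θ).mul (hasDerivAt_cos θ)).mul
      (((((hasDerivAt_sin θ).pow 2).const_mul m).const_sub 1).rpow_const (p := -(1 / 2))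
        (.inl hpos.ne'))).const_mul m
    refine h.congr_deriv ?_
    have rpow_neg_half := rpow_add_one hpos.ne' (-(3 / 2))
    have rpow_half := rpow_add_one hpos.ne' (-(1 / 2))
    rw [show (-(3 / 2) + 1 : ℝ) = -(1 / 2) by norm_num] at rpow_neg_half
    rw [show (-(1 / 2) + 1 : ℝ) = 1 / 2 by norm_num] at rpow_half
    simp only [Pi.mul_apply, Pi.pow_apply, show (-(1 / 2) - 1 : ℝ) = -(3 / 2) by norm_num,
      rpow_half, rpow_neg_half]
    simp only [Nat.cast_ofNat, Nat.add_one_sub_one, pow_one]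
    linear_combination (m * (1 - m * sin θ ^ 2) + m ^ 2 * sin θ ^ 2) *
      (1 - m * sin θ ^ 2) ^ (-(3 / 2) : ℝ) * (sin_sq_add_cos_sq θ)
  have h₁ := intervalIntegrable_one_sub_mul_sin_sq_rpow hm (1 / 2) 0 (π / 2)
  have h₂ := (intervalIntegrable_one_sub_mul_sin_sq_rpow hm (-(3 / 2)) 0 (π / 2)).const_mul (1 - m)
  have hint := intervalIntegral.integral_eq_sub_of_hasDerivAt hasDeriv (h₁.sub h₂)
  rw [intervalIntegral.integral_sub h₁ h₂, intervalIntegral.integral_const_mul] at hint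
  rw [eq_div_iff (by linarith), ellipticPow, ellipticPow]
  simp only [cos_pi_div_two, sin_zero, mul_zero, zero_mul, sub_zero] at hint
  linarith

lemma hasDerivAt_ellipticPow_half (hm₀ : m ≠ 0) (hm : m < 1) :
    HasDerivAt ℰ ((ℰ m - 𝒦 m) / (2 * m)) m := by
  have h := hasDerivAt_ellipticPow hm₀ hm (1 / 2)
  rw [show (1 / 2 - 1 : ℝ) = -(1 / 2) by norm_num] at h
  exact h.congr_deriv (by field_simp)

lemma hasDerivAt_ellipticPow_neg_half (hm₀ : m ≠ 0) (hm : m < 1) :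
    HasDerivAt 𝒦 ((ℰ m / (1 - m) - 𝒦 m) / (2 * m)) m := by
  have h := hasDerivAt_ellipticPow hm₀ hm (-(1 / 2))
  rw [show (-(1 / 2) - 1 : ℝ) = -(3 / 2) by norm_num, ellipticPow_neg_three_halves hm] at h
  exact h.congr_deriv (by field_simp; ring)

lemma ellipticPow_half_le_neg_half (hm₀ : 0 ≤ m) (hm : m < 1) : ℰ m ≤ 𝒦 m := by
  have hE : ℰ m ≤ ℰ 0 := antitoneOn_ellipticPow one_half_pos.le (by simp) hm.le hm₀
  have hK : π / 2 ≤ 𝒦 m := pi_div_two_le_ellipticPow (by norm_num) hm₀ hm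
  rw [ellipticPow_zero_right] at hE
  exact hE.trans hK

lemma ellipticPow_neg_half_sub_half (hm : m < 1) :
    𝒦 m - ℰ m = ∫ θ in 0..π / 2, m * (sin θ ^ 2 * (1 - m * sin θ ^ 2) ^ (-(1 / 2) : ℝ)) := by
  have h := ellipticPow_sub_one_sub_ellipticPow hm (1 / 2)
  rwa [show (1 / 2 - 1 : ℝ) = -(1 / 2) by norm_num] at h

lemma ellipticPow_neg_half_sub_half_le (hm₀ : 0 ≤ m) (hm : m < 1) : 𝒦 m - ℰ m ≤ m * 𝒦 m := by
  rw [ellipticPow_neg_half_sub_half hm, intervalIntegral.integral_const_mul, ellipticPow]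
  have hcont := continuous_one_sub_mul_sin_sq_rpow hm (-(1 / 2))
  refine mul_le_mul_of_nonneg_left (intervalIntegral.integral_mono_on (by positivity)
    (Continuous.intervalIntegrable (by fun_prop) _ _) (hcont.intervalIntegrable _ _) ?_) hm₀
  intro θ _
  exact mul_le_of_le_one_left (rpow_nonneg (one_sub_mul_sin_sq_pos hm θ).le _) (sin_sq_le_one θ)

lemma ellipticPow_neg_half_le (hm₀ : 0 ≤ m) (hm : m < 1) : 𝒦 m ≤ π / 2 / √(1 - m) := by
  have h := ellipticPow_le_of_nonpos (p := -(1 / 2)) (by norm_num) hm₀ hm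
  rwa [rpow_neg (by linarith), ← sqrt_eq_rpow, ← div_eq_mul_inv] at h

lemma hasDerivAt_ellipticPow_half_one_sub (hm₀ : 0 < m) (hm : m ≠ 1) :
    HasDerivAt (fun m => ℰ (1 - m)) (-((ℰ (1 - m) - 𝒦 (1 - m)) / (2 * (1 - m)))) m := by
  have h := (hasDerivAt_ellipticPow_half (sub_ne_zero.2 hm.symm) (by linarith)).comp m
    ((hasDerivAt_id m).const_sub 1)
  exact h.congr_deriv (by simp)

lemma hasDerivAt_ellipticPow_neg_half_one_sub (hm₀ : 0 < m) (hm : m ≠ 1) :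
    HasDerivAt (fun m => 𝒦 (1 - m)) (-((ℰ (1 - m) / m - 𝒦 (1 - m)) / (2 * (1 - m)))) m := by
  have h := (hasDerivAt_ellipticPow_neg_half (sub_ne_zero.2 hm.symm) (by linarith)).comp m
    ((hasDerivAt_id m).const_sub 1)
  exact h.congr_deriv (by simp)

lemma hasDerivAt_legendre (hm₀ : 0 < m) (hm : m < 1) :
    HasDerivAt (fun m => ℰ (1 - m) * 𝒦 m - (𝒦 m - ℰ m) * 𝒦 (1 - m)) 0 m := by
  have hE := hasDerivAt_ellipticPow_half hm₀.ne' hm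
  have hK := hasDerivAt_ellipticPow_neg_half hm₀.ne' hm
  have h := ((hasDerivAt_ellipticPow_half_one_sub hm₀ hm.ne).mul hK).sub
    ((hK.sub hE).mul (hasDerivAt_ellipticPow_neg_half_one_sub hm₀ hm.ne))
  refine h.congr_deriv ?_
  have : 1 - m ≠ 0 := by linarith
  simp only [Pi.sub_apply]
  field_simp
  ring

open Filter Topology in
lemma tendsto_ellipticPow_neg_half_zero : Tendsto 𝒦 (𝓝[>] 0) (𝓝 (π / 2)) := by
  simpa using (continuousAt_ellipticPow zero_lt_one (-(1 / 2))).tendsto.mono_left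
    nhdsWithin_le_nhds

open Filter Topology in
lemma tendsto_ellipticPow_sub_mul_ellipticPow_one_sub_zero :
    Tendsto (fun m => (𝒦 m - ℰ m) * 𝒦 (1 - m)) (𝓝[>] 0) (𝓝 0) := by
  have hsqrt : Tendsto (fun m : ℝ => √m) (𝓝[>] 0) (𝓝 0) := by
    simpa using (continuous_sqrt.tendsto 0).mono_left (nhdsWithin_le_nhds (s := Set.Ioi 0))
  have upper : Tendsto (fun m => 𝒦 m * (π / 2) * √m) (𝓝[>] 0) (𝓝 0) := by
    simpa using (tendsto_ellipticPow_neg_half_zero.mul_const (π / 2)).mul hsqrt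
  refine tendsto_of_tendsto_of_tendsto_of_le_of_le' tendsto_const_nhds upper ?_ ?_
  all_goals
    filter_upwards [Ioo_mem_nhdsGT zero_lt_one] with m ⟨hm₀, hm⟩
    have hK' : 0 ≤ 𝒦 (1 - m) :=
      (ellipticPow_pos_of_nonpos (by norm_num) (by linarith) (by linarith)).le
  · exact mul_nonneg (sub_nonneg.2 (ellipticPow_half_le_neg_half hm₀.le hm)) hK'
  · have hKpos : 0 < 𝒦 m := ellipticPow_pos_of_nonpos (by norm_num) hm₀.le hm
    have hle := ellipticPow_neg_half_le (m := 1 - m) (by linarith) (by linarith)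
    rw [sub_sub_cancel] at hle
    calc (𝒦 m - ℰ m) * 𝒦 (1 - m) ≤ m * 𝒦 m * (π / 2 / √m) :=
          mul_le_mul (ellipticPow_neg_half_sub_half_le hm₀.le hm) hle hK' (by positivity)
      _ = 𝒦 m * (π / 2) * √m := by
          nth_rewrite 1 [← mul_self_sqrt hm₀.le]
          field_simp

open Filter Topology in
lemma tendsto_legendre_zero :
    Tendsto (fun m => ℰ (1 - m) * 𝒦 m - (𝒦 m - ℰ m) * 𝒦 (1 - m)) (𝓝[>] 0) (𝓝 (π / 2)) := by
  have hE : Tendsto (fun m => ℰ (1 - m)) (𝓝[>] 0) (𝓝 1) := by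
    have h : ContinuousAt (fun m => ℰ (1 - m)) 0 :=
      ((continuous_ellipticPow one_half_pos.le).comp (continuous_sub_left 1)).continuousAt
    have h' := h.tendsto.mono_left (nhdsWithin_le_nhds (s := Set.Ioi 0))
    rwa [sub_zero, ellipticPow_half_one] at h'
  simpa using (hE.mul tendsto_ellipticPow_neg_half_zero).sub
    tendsto_ellipticPow_sub_mul_ellipticPow_one_sub_zero

theorem legendre_relation (hm₀ : 0 < m) (hm : m < 1) :
    ℰ (1 - m) * 𝒦 m - (𝒦 m - ℰ m) * 𝒦 (1 - m) = π / 2 := by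
  obtain ⟨L, hL⟩ := isOpen_Ioo.exists_is_const_of_deriv_eq_zero isPreconnected_Ioo
    (fun x hx => (hasDerivAt_legendre hx.1 hx.2).differentiableAt.differentiableWithinAt)
    fun x hx => (hasDerivAt_legendre hx.1 hx.2).deriv
  rw [hL m ⟨hm₀, hm⟩]
  refine tendsto_nhds_unique (tendsto_const_nhds.congr' ?_) tendsto_legendre_zero
  filter_upwards [Ioo_mem_nhdsGT zero_lt_one] with x hx using (hL x hx).symm

lemma integral_le_arsinh_tan {e α : ℝ} (he : 0 < e) (hα₀ : 0 ≤ α) (hα : α < π / 2) :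
    ∫ θ in 0..α, (1 - (1 - e ^ 4) * sin θ ^ 2) ^ (-(1 / 2) : ℝ) ≤ arsinh (tan α) := by
  have hm : 1 - e ^ 4 < 1 := by linarith [pow_pos he 4]
  have cos_pos {θ : ℝ} (hθ : θ ∈ Set.Icc 0 α) : 0 < cos θ :=
    cos_pos_of_mem_Ioo ⟨by linarith [hθ.1], by linarith [hθ.2]⟩
  have hasDeriv {θ : ℝ} (hθ : θ ∈ Set.Icc 0 α) :
      HasDerivAt (fun θ => arsinh (tan θ)) (1 / cos θ) θ := by
    have hcos := cos_pos hθ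
    refine (hasDerivAt_tan hcos.ne').arsinh.congr_deriv ?_
    rw [show 1 + tan θ ^ 2 = (1 / cos θ) ^ 2 by
      rw [one_div, inv_pow, ← inv_one_add_tan_sq hcos.ne', inv_inv], sqrt_sq (by positivity)]
    simp only [smul_eq_mul]
    field_simp
  have h := intervalIntegral.integral_le_sub_of_hasDeriv_right_of_le hα₀
    (fun θ hθ => (hasDeriv hθ).continuousAt.continuousWithinAt)
    (fun θ hθ => (hasDeriv (Set.Ioo_subset_Icc_self hθ)).hasDerivWithinAt)
    (continuous_one_sub_mul_sin_sq_rpow hm (-(1 / 2))).continuousOn.integrableOn_Icc fun θ hθ => by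
      rw [one_sub_mul_sin_sq_rpow_neg_half hm]
      refine one_div_le_one_div_of_le (cos_pos (Set.Ioo_subset_Icc_self hθ)) (le_sqrt_of_sq_le ?_)
      nlinarith [sin_sq_add_cos_sq θ, mul_nonneg (pow_pos he 4).le (sq_nonneg (sin θ))]
  simpa using h

lemma hasDerivAt_neg_arsinh_cot {e θ : ℝ} (he : 0 < e) (hθ : 0 < sin θ) :
    HasDerivAt (fun θ => -arsinh (cos θ / sin θ / e ^ 2))
      (1 / (sin θ * √(1 - (1 - e ^ 4) * sin θ ^ 2))) θ := by
  have hpos := one_sub_mul_sin_sq_pos (by linarith [pow_pos he 4] : 1 - e ^ 4 < 1) θ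
  have sq_eq : 1 + (cos θ / sin θ / e ^ 2) ^ 2 =
      (√(1 - (1 - e ^ 4) * sin θ ^ 2) / (sin θ * e ^ 2)) ^ 2 := by
    rw [div_pow √_, sq_sqrt hpos.le, div_div, div_pow, cos_sq']
    field_simp
    ring
  refine (((hasDerivAt_cos θ).div (hasDerivAt_sin θ) hθ.ne').div_const
    (e ^ 2)).arsinh.neg.congr_deriv ?_
  have := sqrt_pos.2 hpos
  simp only [Pi.div_apply, sq_eq, smul_eq_mul]
  rw [sqrt_sq (by positivity)]
  field_simp
  linarith [sin_sq_add_cos_sq θ]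

lemma integral_le_arsinh_cot {e α : ℝ} (he : 0 < e) (hα₀ : 0 < α) (hα : α ≤ π / 2) :
    ∫ θ in α..π / 2, (1 - (1 - e ^ 4) * sin θ ^ 2) ^ (-(1 / 2) : ℝ) ≤
      arsinh (cos α / sin α / e ^ 2) := by
  have hm : 1 - e ^ 4 < 1 := by linarith [pow_pos he 4]
  have sin_pos {θ : ℝ} (hθ : θ ∈ Set.Icc α (π / 2)) : 0 < sin θ :=
    sin_pos_of_pos_of_lt_pi (by linarith [hθ.1]) (by linarith [hθ.2, pi_pos])
  have h := intervalIntegral.integral_le_sub_of_hasDeriv_right_of_le hα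
    (fun θ hθ => (hasDerivAt_neg_arsinh_cot he (sin_pos hθ)).continuousAt.continuousWithinAt)
    (fun θ hθ => (hasDerivAt_neg_arsinh_cot he
      (sin_pos (Set.Ioo_subset_Icc_self hθ))).hasDerivWithinAt)
    (continuous_one_sub_mul_sin_sq_rpow hm (-(1 / 2))).continuousOn.integrableOn_Icc fun θ hθ => by
      have hsin := sin_pos (Set.Ioo_subset_Icc_self hθ)
      have hsqrt := sqrt_pos.2 (one_sub_mul_sin_sq_pos hm θ)
      rw [one_sub_mul_sin_sq_rpow_neg_half hm]
      exact one_div_le_one_div_of_le (by positivity)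
        (mul_le_of_le_one_left hsqrt.le (sin_le_one θ))
  simpa using h

-- The two halves of the integral, split at `tan θ = 1 / e`, are exchanged by
-- `tan θ ↦ 1 / (e² tan θ)`, so they obey the same bound.
lemma ellipticPow_neg_half_le_arsinh {e : ℝ} (he : 0 < e) :
    𝒦 (1 - e ^ 4) ≤ 2 * arsinh (1 / e) := by
  have hint := intervalIntegrable_one_sub_mul_sin_sq_rpow
    (by linarith [pow_pos he 4] : 1 - e ^ 4 < 1) (-(1 / 2))
  have hα₀ : 0 < arctan (1 / e) := arctan_pos.2 (by positivity)
  have hα := arctan_lt_pi_div_two (1 / e)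
  have cot_eq : cos (arctan (1 / e)) / sin (arctan (1 / e)) / e ^ 2 = 1 / e := by
    rw [← inv_div (sin _), ← tan_eq_sin_div_cos, tan_arctan]
    field_simp
  have lower := integral_le_arsinh_tan he hα₀.le hα
  have upper := integral_le_arsinh_cot he hα₀ hα.le
  rw [tan_arctan] at lower
  rw [cot_eq] at upper
  rw [ellipticPow, ← intervalIntegral.integral_add_adjacent_intervals (hint _ (arctan (1 / e)))
    (hint _ _)]
  linarith

lemma arsinh_one_div_le {e : ℝ} (he : 0 < e) : arsinh (1 / e) ≤ log (2 / e) + e ^ 2 / 4 := by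
  have hsqrt : √(1 + (1 / e) ^ 2) ≤ 1 / e + e / 2 := by
    rw [sqrt_le_left (by positivity)]
    have : (1 / e + e / 2) ^ 2 = 1 + (1 / e) ^ 2 + e ^ 2 / 4 := by field_simp; ring
    linarith [sq_nonneg e]
  calc arsinh (1 / e) ≤ log (2 / e * (1 + e ^ 2 / 4)) := by
        refine log_le_log (by positivity) ?_
        have : 2 / e * (1 + e ^ 2 / 4) = 1 / e + (1 / e + e / 2) := by field_simp; ring
        linarith
    _ = log (2 / e) + log (1 + e ^ 2 / 4) := log_mul (by positivity) (by positivity)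
    _ ≤ log (2 / e) + e ^ 2 / 4 := by
        linarith [log_le_sub_one_of_pos (by positivity : 0 < 1 + e ^ 2 / 4)]

lemma two_mul_ellipticPow_neg_half_le_log {e : ℝ} (he : 0 < e) :
    2 * 𝒦 (1 - e ^ 4) ≤ log (16 / e ^ 4) + e ^ 2 := by
  have log_eq : log (16 / e ^ 4) = 4 * log (2 / e) := by
    rw [show 16 / e ^ 4 = (2 / e) ^ 4 by rw [div_pow]; norm_num, log_pow]
    norm_num
  linarith [ellipticPow_neg_half_le_arsinh he, arsinh_one_div_le he]

lemma hasDerivAt_nome (hm₀ : 0 < m) (hm : m < 1) :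
    HasDerivAt (fun m => π * 𝒦 (1 - m) / 𝒦 m + log m)
      (1 / m - π ^ 2 / (4 * m * (1 - m) * 𝒦 m ^ 2)) m := by
  have hK : 𝒦 m ≠ 0 := (ellipticPow_pos_of_nonpos (by norm_num) hm₀.le hm).ne'
  have h := (((hasDerivAt_ellipticPow_neg_half_one_sub hm₀ hm.ne).const_mul π).div
    (hasDerivAt_ellipticPow_neg_half hm₀.ne' hm) hK).add (hasDerivAt_log hm₀.ne')
  refine h.congr_deriv ?_
  have : 1 - m ≠ 0 := by linarith
  field_simp
  linear_combination (-4 * π) * legendre_relation hm₀ hm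

lemma antitoneOn_nome : AntitoneOn (fun m => π * 𝒦 (1 - m) / 𝒦 m + log m) (Set.Ioo 0 1) := by
  refine antitoneOn_of_hasDerivWithinAt_nonpos (convex_Ioo 0 1)
    (f' := fun m => 1 / m - π ^ 2 / (4 * m * (1 - m) * 𝒦 m ^ 2))
    (fun x hx => (hasDerivAt_nome hx.1 hx.2).continuousAt.continuousWithinAt) ?_ ?_ <;>
    rw [interior_Ioo] <;> intro x ⟨hx₀, hx⟩
  · exact (hasDerivAt_nome hx₀ hx).hasDerivWithinAt
  · have h1x : 0 < 1 - x := by linarith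
    have hK : 0 < 𝒦 x := ellipticPow_pos_of_nonpos (by norm_num) hx₀.le hx
    have hle := ellipticPow_neg_half_le hx₀.le hx
    rw [le_div_iff₀ (sqrt_pos.2 h1x)] at hle
    have hsq := pow_le_pow_left₀ (by positivity) hle 2
    rw [mul_pow, sq_sqrt h1x.le] at hsq
    rw [sub_nonpos, div_le_div_iff₀ hx₀ (by positivity)]
    nlinarith

open Filter Topology in
theorem pi_mul_ellipticPow_neg_half_one_sub_le (hm₀ : 0 < m) (hm : m < 1) :
    π * 𝒦 (1 - m) ≤ 𝒦 m * log (16 / m) := by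
  have bound {e : ℝ} (he : 0 < e) (hem : e ^ 4 ≤ m) :
      π * 𝒦 (1 - m) / 𝒦 m + log m ≤ log 16 + e ^ 2 := by
    have he4 : 0 < e ^ 4 := pow_pos he 4
    refine (antitoneOn_nome ⟨he4, by linarith⟩ ⟨hm₀, hm⟩ hem).trans ?_
    have hlog := two_mul_ellipticPow_neg_half_le_log he
    have hK : π / 2 ≤ 𝒦 (e ^ 4) := pi_div_two_le_ellipticPow (by norm_num) he4.le (by linarith)
    have hK' : 0 < 𝒦 (1 - e ^ 4) :=
      ellipticPow_pos_of_nonpos (by norm_num) (by linarith) (by linarith)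
    have hdiv : π * 𝒦 (1 - e ^ 4) / 𝒦 (e ^ 4) ≤ 2 * 𝒦 (1 - e ^ 4) := by
      rw [div_le_iff₀ (by linarith [pi_pos])]
      nlinarith
    rw [log_div (by norm_num) he4.ne'] at hlog
    linarith
  have limit : π * 𝒦 (1 - m) / 𝒦 m + log m ≤ log 16 := by
    have hlim : Tendsto (fun e : ℝ => log 16 + e ^ 2) (𝓝[>] 0) (𝓝 (log 16)) := by
      have h : ContinuousAt (fun e : ℝ => log 16 + e ^ 2) 0 := by fun_prop
      simpa [ContinuousAt] using h.tendsto.mono_left (nhdsWithin_le_nhds (s := Set.Ioi 0))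
    have hpow : ∀ᶠ e : ℝ in 𝓝 0, e ^ 4 < m :=
      (continuous_pow 4).tendsto' 0 0 (by norm_num) |>.eventually (Iio_mem_nhds hm₀)
    refine ge_of_tendsto hlim ?_
    filter_upwards [self_mem_nhdsWithin, nhdsWithin_le_nhds hpow] with e he hem using
      bound he hem.le
  have hK : 0 < 𝒦 m := ellipticPow_pos_of_nonpos (by norm_num) hm₀.le hm
  rw [mul_comm (𝒦 m), ← div_le_iff₀ hK, log_div (by norm_num) hm₀.ne']
  linarith

lemma one_le_one_add_mul_sqrt_one_sub {y : ℝ} (hy₀ : 0 ≤ y) (hy : y ≤ 9 / 20) :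
    1 ≤ (1 + 39 / 50 * y) * √(1 - y) := by
  refine le_of_sq_le_sq ?_ (by positivity)
  rw [mul_pow, sq_sqrt (by linarith)]
  nlinarith [mul_nonneg hy₀ (sub_nonneg.2 hy), mul_nonneg (mul_nonneg hy₀ hy₀) (sub_nonneg.2 hy)]

lemma ellipticPow_neg_half_sub_half_le_of_le (hm₀ : 0 ≤ m) (hm : m ≤ 9 / 20) :
    𝒦 m - ℰ m ≤ m * (π / 4 * (1 + 117 / 200 * m)) := by
  have hm₁ : m < 1 := by linarith
  rw [ellipticPow_neg_half_sub_half hm₁, intervalIntegral.integral_const_mul]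
  refine mul_le_mul_of_nonneg_left ?_ hm₀
  have integral_sin_sq : ∫ θ in 0..π / 2, sin θ ^ 2 = π / 4 := by
    rw [integral_sin_sq, sin_zero, cos_pi_div_two]
    ring
  have integral_sin_four : ∫ θ in 0..π / 2, sin θ ^ 4 = 3 * π / 16 := by
    rw [show 4 = 2 + 2 from rfl, integral_sin_pow, integral_sin_sq, sin_zero, cos_pi_div_two]
    norm_num
    ring
  have integral_eq : π / 4 * (1 + 117 / 200 * m) =
      ∫ θ in 0..π / 2, (sin θ ^ 2 + 39 / 50 * m * sin θ ^ 4) := by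
    rw [intervalIntegral.integral_add (Continuous.intervalIntegrable (by fun_prop) _ _)
      (Continuous.intervalIntegrable (by fun_prop) _ _), intervalIntegral.integral_const_mul,
      integral_sin_sq, integral_sin_four]
    ring
  have hcont := continuous_one_sub_mul_sin_sq_rpow hm₁ (-(1 / 2))
  rw [integral_eq]
  refine intervalIntegral.integral_mono_on (by positivity)
    (Continuous.intervalIntegrable (by fun_prop) _ _)
    (Continuous.intervalIntegrable (by fun_prop) _ _) fun θ _ => ?_
  have hone := one_le_one_add_mul_sqrt_one_sub (y := m * sin θ ^ 2) (by positivity)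
    (by nlinarith [sin_sq_le_one θ])
  rw [one_sub_mul_sin_sq_rpow_neg_half hm₁, mul_one_div,
    div_le_iff₀ (sqrt_pos.2 (one_sub_mul_sin_sq_pos hm₁ θ))]
  nlinarith [mul_le_mul_of_nonneg_left hone (sq_nonneg (sin θ))]

lemma log_mul_add_one_sub_mul_le_log_div {a m s : ℝ} (ha : 0 < a) (hm : 0 < m) (hs : 0 < s) :
    log (a * s) + 1 - s * m ≤ log (a / m) := by
  have h := log_le_sub_one_of_pos (mul_pos hs hm)
  rw [log_mul hs.ne' hm.ne'] at h
  rw [log_mul ha.ne' hs.ne', log_div ha.ne' hm.ne']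
  linarith

lemma log_le_sq_sub_one_div {ξ : ℝ} (hξ : 1 ≤ ξ) : log ξ ≤ (ξ ^ 2 - 1) / (2 * ξ) := by
  have h := self_le_sinh_iff.2 (log_nonneg hξ)
  rw [sinh_log (by linarith)] at h
  exact h.trans_eq (by field_simp)

/-- An upper bound, for `0 < m ≤ 9/20`, of `16 x / m` where `x` is the small root of
`4π (x - 2 x²) = (𝒦 m - ℰ m) / √(1 - m)`; it is the second order Taylor polynomial of that
quantity with slightly enlarged coefficients. -/
noncomputable def rootMajorant (m : ℝ) : ℝ := 1 + 5 / 4 * m + 9 / 5 * m ^ 2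

lemma rootMajorant_sq_mul_le (hm₀ : 0 ≤ m) (hm : m ≤ 9 / 20) :
    rootMajorant m ^ 2 * (1 - 2579 / 1000 * m + 2 * m ^ 2) ≤ 1 := by
  have h₁ := mul_nonneg hm₀ (sub_nonneg.2 hm)
  have h₂ := mul_nonneg hm₀ h₁
  have h₃ := mul_nonneg hm₀ h₂
  have h₄ := mul_nonneg hm₀ h₃
  have h₅ := mul_nonneg hm₀ h₄
  unfold rootMajorant
  nlinarith [mul_nonneg hm₀ (sq_nonneg (m - 1 / 5)),
    mul_nonneg hm₀ (sq_nonneg (m ^ 2 - 1 / 5 * m))]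

lemma sq_le_rootMajorant_sq_mul (hm₀ : 0 ≤ m) (hm : m ≤ 9 / 20) :
    (1 + 117 / 200 * m) ^ 2 ≤
      (rootMajorant m * (1 - m * rootMajorant m / 8)) ^ 2 * (1 - m) := by
  have h₁ := mul_nonneg hm₀ (sub_nonneg.2 hm)
  have h₂ := mul_nonneg hm₀ h₁
  have h₃ := mul_nonneg hm₀ h₂
  have h₄ := mul_nonneg hm₀ h₃
  have h₅ := mul_nonneg hm₀ h₄
  unfold rootMajorant
  nlinarith [mul_nonneg hm₀ (sq_nonneg (m - 1 / 5)),
    mul_nonneg hm₀ (sq_nonneg (m ^ 2 - 1 / 5 * m))]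

lemma le_rootMajorant {ξ : ℝ} (hm₀ : 0 ≤ m) (hm : m ≤ 9 / 20) (hξ : m * ξ < 4)
    (h : (ξ * (1 - m * ξ / 8)) ^ 2 * (1 - m) ≤ (1 + 117 / 200 * m) ^ 2) :
    ξ ≤ rootMajorant m := by
  have hR₀ : 0 < rootMajorant m := by unfold rootMajorant; positivity
  have hR : rootMajorant m ≤ 2 := by unfold rootMajorant; nlinarith
  by_contra! hlt
  have image_lt : rootMajorant m * (1 - m * rootMajorant m / 8) < ξ * (1 - m * ξ / 8) := by
    nlinarith [mul_pos (sub_pos.2 hlt)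
      (by nlinarith : 0 < 1 - m * (ξ + rootMajorant m) / 8)]
  have image_pos : 0 < rootMajorant m * (1 - m * rootMajorant m / 8) :=
    mul_pos hR₀ (by nlinarith)
  nlinarith [pow_lt_pow_left₀ image_lt image_pos.le two_ne_zero, sq_le_rootMajorant_sq_mul hm₀ hm]

lemma log_le_mul_of_le {ξ : ℝ} (hm₀ : 0 < m) (hm : m ≤ 9 / 20) (hξ₀ : 0 < ξ) (hξ : m * ξ < 4)
    (h : (ξ * (1 - m * ξ / 8)) ^ 2 * (1 - m) ≤ (1 + 117 / 200 * m) ^ 2) :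
    log ξ ≤ m / 4 * log (16 / m) * ξ := by
  have hlog : 2579 / 500 - 4 * m ≤ log (16 / m) := by
    have h64 : log (16 * 4) = 6 * log 2 := by
      rw [show (16 * 4 : ℝ) = 2 ^ 6 by norm_num, log_pow]
      norm_num
    have h := log_mul_add_one_sub_mul_le_log_div (by norm_num : (0 : ℝ) < 16) hm₀ four_pos
    rw [h64] at h
    linarith [log_two_gt_d9]
  have hlog₀ : 0 < log (16 / m) := by linarith
  rcases le_total ξ 1 with hξ₁ | hξ₁
  · exact (log_nonpos hξ₀.le hξ₁).trans (by positivity)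
  refine (log_le_sq_sub_one_div hξ₁).trans ?_
  rw [div_le_iff₀ (by positivity)]
  have hsq : ξ ^ 2 * (1 - 2579 / 1000 * m + 2 * m ^ 2) ≤ 1 :=
    (mul_le_mul_of_nonneg_right (pow_le_pow_left₀ hξ₀.le (le_rootMajorant hm₀.le hm hξ h) 2)
      (by nlinarith [sq_nonneg (m - 2579 / 4000)])).trans (rootMajorant_sq_mul_le hm₀.le hm)
  nlinarith [mul_le_mul_of_nonneg_left hlog (by positivity : 0 ≤ m / 4 * (2 * ξ ^ 2))]

lemma log_le_mul_of_ge {ξ : ℝ} (hm : 9 / 20 ≤ m) (hm₁ : m < 1) (hξ₀ : 0 < ξ) :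
    log ξ ≤ m / 4 * log (16 / m) * ξ := by
  have hlog : 1509 / 400 - m ≤ log (16 / m) := by
    have h16 : log (16 * 1) = 4 * log 2 := by
      rw [show (16 * 1 : ℝ) = 2 ^ 4 by norm_num, log_pow]
      norm_num
    have h := log_mul_add_one_sub_mul_le_log_div (by norm_num : (0 : ℝ) < 16)
      (by linarith : 0 < m) one_pos
    rw [h16] at h
    linarith [log_two_gt_d9]
  have inv_exp_le : 1 / exp 1 ≤ m / 4 * log (16 / m) := by
    have h : 1 / exp 1 ≤ 0.368 := by
      rw [div_le_iff₀ (exp_pos 1)]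
      linarith [exp_one_gt_d9]
    nlinarith [mul_nonneg (sub_nonneg.2 hm) (sub_nonneg.2 hm₁.le)]
  have hlogξ : log ξ ≤ 1 / exp 1 * ξ := by
    have h := log_le_sub_one_of_pos (div_pos hξ₀ (exp_pos 1))
    rw [log_div hξ₀.ne' (exp_pos 1).ne', log_exp] at h
    linarith [one_div_mul_eq_div (exp 1) ξ]
  exact hlogξ.trans (by gcongr)

/-- The quantity `(K - E) / √(1 - m)`; for `m = (χ - c²) / χ` it is `√χ (F - E) / c`. -/
noncomputable def ellipticGap (m : ℝ) : ℝ := (𝒦 m - ℰ m) / √(1 - m)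

/-- The quantity `E(1 - m) / √(1 - m)`; for `m = (χ - c²) / χ` it is `√χ E(c² / χ) / c`, which
controls the number of zeros of a spheroidal function. -/
noncomputable def ellipticPhase (m : ℝ) : ℝ := ℰ (1 - m) / √(1 - m)

@[simp]
lemma ellipticGap_zero : ellipticGap 0 = 0 := by simp [ellipticGap]

@[simp]
lemma ellipticPhase_zero : ellipticPhase 0 = 1 := by
  rw [ellipticPhase, sub_zero, ellipticPow_half_one, sqrt_one, div_one]

lemma hasDerivAt_ellipticGap (hm₀ : m ≠ 0) (hm : m < 1) :
    HasDerivAt ellipticGap (𝒦 m / (2 * (1 - m) * √(1 - m))) m := by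
  have hpos : 0 < 1 - m := by linarith
  have hsqrt := sqrt_pos.2 hpos
  refine (((hasDerivAt_ellipticPow_neg_half hm₀ hm).sub (hasDerivAt_ellipticPow_half hm₀ hm)).div
    (((hasDerivAt_id m).const_sub 1).sqrt hpos.ne') hsqrt.ne').congr_deriv ?_
  simp only [id, Pi.sub_apply, sq_sqrt hpos.le]
  field_simp
  rw [sq_sqrt hpos.le]
  ring

lemma hasDerivAt_ellipticPhase (hm₀ : 0 < m) (hm : m < 1) :
    HasDerivAt ellipticPhase (𝒦 (1 - m) / (2 * (1 - m) * √(1 - m))) m := by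
  have hpos : 0 < 1 - m := by linarith
  have hsqrt := sqrt_pos.2 hpos
  refine ((hasDerivAt_ellipticPow_half_one_sub hm₀ hm.ne).div
    (((hasDerivAt_id m).const_sub 1).sqrt hpos.ne') hsqrt.ne').congr_deriv ?_
  simp only [id, sq_sqrt hpos.le]
  field_simp
  rw [sq_sqrt hpos.le]
  ring

lemma continuousOn_ellipticGap : ContinuousOn ellipticGap (Set.Iio 1) := fun m hm => by
  refine ContinuousAt.continuousWithinAt (.div ?_ (by fun_prop) ?_)
  · exact (continuousAt_ellipticPow hm _).sub (continuousAt_ellipticPow hm _)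
  · exact (sqrt_pos.2 (sub_pos.2 hm)).ne'

lemma continuousOn_ellipticPhase : ContinuousOn ellipticPhase (Set.Iio 1) := by
  refine ContinuousOn.div ?_ (by fun_prop) fun m hm => (sqrt_pos.2 (sub_pos.2 hm)).ne'
  exact ((continuous_ellipticPow one_half_pos.le).comp (continuous_sub_left 1)).continuousOn

lemma strictMonoOn_ellipticGap : StrictMonoOn ellipticGap (Set.Ico 0 1) := by
  refine strictMonoOn_of_hasDerivWithinAt_pos (convex_Ico 0 1)
    (f' := fun m => 𝒦 m / (2 * (1 - m) * √(1 - m)))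
    (continuousOn_ellipticGap.mono Set.Ico_subset_Iio_self) ?_ ?_ <;>
    rw [interior_Ico] <;> intro x ⟨hx₀, hx⟩
  · exact (hasDerivAt_ellipticGap hx₀.ne' hx).hasDerivWithinAt
  · have hK : 0 < 𝒦 x := ellipticPow_pos_of_nonpos (by norm_num) hx₀.le hx
    have : 0 < 1 - x := by linarith
    positivity

lemma ellipticGap_pos (hm₀ : 0 < m) (hm : m < 1) : 0 < ellipticGap m := by
  simpa using strictMonoOn_ellipticGap ⟨le_rfl, one_pos⟩ ⟨hm₀.le, hm⟩ hm₀

-- With `x = m ξ / 16` the claim is `log ξ ≤ (m / 4) log (16 / m) ξ`.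
lemma log_sixteen_div_mul_le {x : ℝ} (hm₀ : 0 < m) (hm : m < 1) (hx₀ : 0 < x) (hx : x < 1 / 4)
    (h : x - 2 * x ^ 2 = ellipticGap m / (4 * π)) :
    log (16 / m) * (1 - 4 * x) ≤ log (1 / x) := by
  obtain ⟨ξ, rfl⟩ : ∃ ξ, x = m * ξ / 16 := ⟨16 * x / m, by field_simp⟩
  have hξ₀ : 0 < ξ := pos_of_mul_pos_right (by linarith : 0 < m * ξ) hm₀.le
  have log_eq : log (1 / (m * ξ / 16)) = log (16 / m) - log ξ := by
    rw [← log_div (by positivity) hξ₀.ne']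
    congr 1
    field_simp
  suffices log ξ ≤ m / 4 * log (16 / m) * ξ by rw [log_eq]; linarith
  rcases le_total m (9 / 20) with hm' | hm'
  swap
  · exact log_le_mul_of_ge hm' hm hξ₀
  have hgap : ξ * (1 - m * ξ / 8) = 4 / (π * m) * (𝒦 m - ℰ m) / √(1 - m) := by
    rw [ellipticGap] at h
    calc ξ * (1 - m * ξ / 8) = 16 / m * (m * ξ / 16 - 2 * (m * ξ / 16) ^ 2) := by field_simp; ring
      _ = 4 / (π * m) * (𝒦 m - ℰ m) / √(1 - m) := by rw [h]; field_simp; ring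
  refine log_le_mul_of_le hm₀ hm' hξ₀ (by linarith) ?_
  rw [hgap, div_pow, sq_sqrt (by linarith), div_mul_cancel₀ _ (by linarith)]
  have hsub := sub_nonneg.2 (ellipticPow_half_le_neg_half hm₀.le hm)
  refine pow_le_pow_left₀ (by positivity) ?_ 2
  calc 4 / (π * m) * (𝒦 m - ℰ m) ≤ 4 / (π * m) * (m * (π / 4 * (1 + 117 / 200 * m))) := by
        gcongr
        exact ellipticPow_neg_half_sub_half_le_of_le hm₀.le hm'
    _ = 1 + 117 / 200 * m := by field_simp

end EllipticIntegrals

section PhaseBound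

variable {g x : ℝ}

/-- The smaller root `x` of `4π (x - 2 x²) = g`, i.e. `d / (4π)` for the smaller solution `d` of
`d (1 - d / (2π)) = g`. -/
noncomputable def gapRoot (g : ℝ) : ℝ := (1 - √(1 - 2 * g / π)) / 4

/-- The bound `1 + (d / π) log (4 e π / d)` of the theorem, as a function of `x = d / (4π)`. -/
noncomputable def phaseBound (x : ℝ) : ℝ := 1 + 4 * x + 4 * negMulLog x

lemma phaseBound_div_four_pi {d : ℝ} (hd : 0 < d) :
    phaseBound (d / (4 * π)) = 1 + d / π * log (4 * exp 1 * π / d) := by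
  have log_eq : log (4 * exp 1 * π / d) = 1 - log (d / (4 * π)) := by
    rw [show 4 * exp 1 * π / d = exp 1 / (d / (4 * π)) by field_simp,
      log_div (exp_pos 1).ne' (by positivity), log_exp]
  rw [phaseBound, negMulLog, log_eq]
  field_simp
  ring

lemma continuous_phaseBound : Continuous phaseBound := by unfold phaseBound; fun_prop

lemma continuous_gapRoot : Continuous gapRoot := by unfold gapRoot; fun_prop

lemma hasDerivAt_phaseBound (hx : x ≠ 0) : HasDerivAt phaseBound (-(4 * log x)) x := by
  refine ((((hasDerivAt_id x).const_mul 4).const_add 1).add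
    ((hasDerivAt_negMulLog hx).const_mul 4)).congr_deriv ?_
  ring

lemma monotoneOn_phaseBound : MonotoneOn phaseBound (Set.Icc 0 1) := by
  refine monotoneOn_of_hasDerivWithinAt_nonneg (convex_Icc 0 1) (f' := fun x => -(4 * log x))
    continuous_phaseBound.continuousOn ?_ ?_ <;>
    rw [interior_Icc] <;> intro x ⟨hx₀, hx⟩
  · exact (hasDerivAt_phaseBound hx₀.ne').hasDerivWithinAt
  · linarith [log_neg hx₀ hx]

lemma one_sub_four_mul_gapRoot (g : ℝ) : 1 - 4 * gapRoot g = √(1 - 2 * g / π) := by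
  unfold gapRoot
  ring

lemma gapRoot_nonneg (hg : 0 ≤ g) : 0 ≤ gapRoot g := by
  have : √(1 - 2 * g / π) ≤ 1 := sqrt_le_one.2 (by linarith [(by positivity : 0 ≤ 2 * g / π)])
  unfold gapRoot
  linarith

lemma one_sub_two_mul_div_pi_pos (hg : g < π / 2) : 0 < 1 - 2 * g / π := by
  rw [sub_pos, div_lt_one pi_pos]
  linarith

lemma gapRoot_pos (hg : 0 < g) : 0 < gapRoot g := by
  have : √(1 - 2 * g / π) < 1 := by
    rw [sqrt_lt' one_pos]
    linarith [(by positivity : 0 < 2 * g / π)]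
  unfold gapRoot
  linarith

lemma gapRoot_lt (hg : g < π / 2) : gapRoot g < 1 / 4 := by
  linarith [one_sub_four_mul_gapRoot g, sqrt_pos.2 (one_sub_two_mul_div_pi_pos hg)]

lemma gapRoot_sub_two_mul_sq (hg : g < π / 2) :
    gapRoot g - 2 * gapRoot g ^ 2 = g / (4 * π) := by
  have h := sq_sqrt (one_sub_two_mul_div_pi_pos hg).le
  rw [← one_sub_four_mul_gapRoot] at h
  have : g / (4 * π) = 2 * g / π / 8 := by field_simp; ring
  linarith

lemma gapRoot_le {d : ℝ} (h : g ≤ d * (1 - d / (2 * π))) : gapRoot g ≤ d / (4 * π) := by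
  have hsqrt : 1 - d / π ≤ √(1 - 2 * g / π) := by
    refine le_sqrt_of_sq_le ?_
    have h' : 2 * g / π ≤ 2 * (d * (1 - d / (2 * π))) / π := by gcongr
    have : 2 * (d * (1 - d / (2 * π))) / π = 1 - (1 - d / π) ^ 2 := by field_simp; ring
    linarith
  have : d / (4 * π) = d / π / 4 := by field_simp
  linarith [one_sub_four_mul_gapRoot g]

lemma hasDerivAt_gapRoot (hg : g < π / 2) :
    HasDerivAt gapRoot (1 / (4 * π * (1 - 4 * gapRoot g))) g := by
  have hpos := one_sub_two_mul_div_pi_pos hg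
  have := sqrt_pos.2 hpos
  refine (((((hasDerivAt_id g).const_mul 2).div_const π).const_sub 1).sqrt
    hpos.ne' |>.const_sub 1 |>.div_const 4).congr_deriv ?_
  simp only [id, one_sub_four_mul_gapRoot]
  field_simp

lemma hasDerivAt_phaseBound_gapRoot (hg₀ : 0 < g) (hg : g < π / 2) :
    HasDerivAt (fun g => phaseBound (gapRoot g))
      (log (1 / gapRoot g) / (π * (1 - 4 * gapRoot g))) g := by
  refine ((hasDerivAt_phaseBound (gapRoot_pos hg₀).ne').comp g
    (hasDerivAt_gapRoot hg)).congr_deriv ?_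
  have : 1 - 4 * gapRoot g ≠ 0 := by linarith [gapRoot_lt hg]
  rw [one_div (gapRoot g), log_inv]
  field_simp

lemma deriv_ellipticPhase_le {m : ℝ} (hm₀ : 0 < m) (hm : m < 1) (hg : ellipticGap m < π / 2) :
    𝒦 (1 - m) / (2 * (1 - m) * √(1 - m)) ≤
      log (1 / gapRoot (ellipticGap m)) / (π * (1 - 4 * gapRoot (ellipticGap m))) *
        (𝒦 m / (2 * (1 - m) * √(1 - m))) := by
  have hX := gapRoot_lt hg
  have : 0 < 1 - m := by linarith
  have hK : 0 < 𝒦 m := ellipticPow_pos_of_nonpos (by norm_num) hm₀.le hm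
  have hkey := log_sixteen_div_mul_le hm₀ hm (gapRoot_pos (ellipticGap_pos hm₀ hm)) hX
    (gapRoot_sub_two_mul_sq hg)
  generalize gapRoot (ellipticGap m) = X at hX hkey ⊢
  have hden : 0 < 1 - 4 * X := by linarith
  rw [← mul_div_assoc]
  refine div_le_div_of_nonneg_right ?_ (by positivity)
  rw [div_mul_eq_mul_div, le_div_iff₀ (by positivity)]
  calc 𝒦 (1 - m) * (π * (1 - 4 * X)) = π * 𝒦 (1 - m) * (1 - 4 * X) := by ring
    _ ≤ 𝒦 m * log (16 / m) * (1 - 4 * X) := by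
        exact mul_le_mul_of_nonneg_right (pi_mul_ellipticPow_neg_half_one_sub_le hm₀ hm) hden.le
    _ = log (16 / m) * (1 - 4 * X) * 𝒦 m := by ring
    _ ≤ log (1 / X) * 𝒦 m := by gcongr

-- Both sides equal `1` at `m = 0`, and `deriv_ellipticPhase_le` compares their derivatives.
lemma ellipticPhase_le_phaseBound_gapRoot {m : ℝ} (hm₀ : 0 ≤ m) (hm : m < 1)
    (hg : ellipticGap m ≤ π / 2) :
    ellipticPhase m ≤ phaseBound (gapRoot (ellipticGap m)) := by
  have hsub : Set.Icc 0 m ⊆ Set.Iio 1 := fun x hx => hx.2.trans_lt hm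
  have gap_lt {x : ℝ} (hx : x ∈ Set.Ioo 0 m) : ellipticGap x < π / 2 :=
    (strictMonoOn_ellipticGap ⟨hx.1.le, hx.2.trans hm⟩ ⟨hm₀, hm⟩ hx.2).trans_le hg
  have hanti : AntitoneOn (fun x => ellipticPhase x - phaseBound (gapRoot (ellipticGap x)))
      (Set.Icc 0 m) := by
    refine antitoneOn_of_hasDerivWithinAt_nonpos (convex_Icc 0 m)
      (f' := fun x => 𝒦 (1 - x) / (2 * (1 - x) * √(1 - x)) -
        log (1 / gapRoot (ellipticGap x)) / (π * (1 - 4 * gapRoot (ellipticGap x))) *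
          (𝒦 x / (2 * (1 - x) * √(1 - x)))) ?_ ?_ ?_
    · exact (continuousOn_ellipticPhase.mono hsub).sub
        ((continuous_phaseBound.comp continuous_gapRoot).comp_continuousOn
          (continuousOn_ellipticGap.mono hsub))
    all_goals
      rw [interior_Icc]
      intro x hx
      have hx₁ := hx.2.trans hm
    · exact ((hasDerivAt_ellipticPhase hx.1 hx₁).sub
        ((hasDerivAt_phaseBound_gapRoot (ellipticGap_pos hx.1 hx₁) (gap_lt hx)).comp x
          (hasDerivAt_ellipticGap hx.1.ne' hx₁))).hasDerivWithinAt
    · exact sub_nonpos.2 (deriv_ellipticPhase_le hx.1 hx₁ (gap_lt hx))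
  have h := hanti ⟨le_rfl, hm₀⟩ ⟨hm₀, le_rfl⟩ hm₀
  simp only [ellipticPhase_zero, ellipticGap_zero] at h
  have hzero : phaseBound (gapRoot 0) = 1 := by simp [phaseBound, gapRoot]
  linarith

theorem ellipticPhase_le_of_ellipticGap_le {m d : ℝ} (hm₀ : 0 < m) (hm : m < 1) (hd : 0 < d)
    (h : ellipticGap m ≤ d * (1 - d / (2 * π))) :
    ellipticPhase m ≤ 1 + d / π * log (4 * exp 1 * π / d) := by
  have hgap := ellipticGap_pos hm₀ hm
  have hgap_le : ellipticGap m ≤ π / 2 := by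
    have : π / 2 - d * (1 - d / (2 * π)) = (π - d) ^ 2 / (2 * π) := by field_simp; ring
    linarith [(by positivity : 0 ≤ (π - d) ^ 2 / (2 * π))]
  have hd_lt : d / (4 * π) ≤ 1 := by
    have hpos := pos_of_mul_pos_right (hgap.trans_le h) hd.le
    have : d / (4 * π) = d / (2 * π) / 2 := by field_simp; norm_num
    linarith
  have hroot := gapRoot_le h
  have hroot₀ := gapRoot_nonneg hgap.le
  rw [← phaseBound_div_four_pi hd]
  exact (ellipticPhase_le_phaseBound_gapRoot hm₀.le hm hgap_le).trans
    (monotoneOn_phaseBound ⟨hroot₀, hroot.trans hd_lt⟩ ⟨hroot₀.trans hroot, hd_lt⟩ hroot)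

end PhaseBound

section ZeroCount

open Set Filter Topology

section RealAnalysis

lemma nonpos_of_le_sub_mul_deriv {f f' : ℝ → ℝ} {a b M η : ℝ} (hab : a < b)
    (hf : ∀ t ∈ Ico a b, HasDerivAt f (f' t) t) (hM : ∀ t ∈ Ico a b, f t ≤ M)
    (hη : ∀ t ∈ Ico a b, η ≤ (b - t) * f' t) : η ≤ 0 := by
  by_contra! hpos
  have hderiv (t) (ht : t ∈ Ico a b) :
      HasDerivAt (fun t => f t + η * log (b - t)) (f' t + η * (-1 / (b - t))) t :=
    (hf t ht).add ((((hasDerivAt_id t).const_sub b).log (sub_pos.2 ht.2).ne').const_mul η)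
  have hmono : MonotoneOn (fun t => f t + η * log (b - t)) (Ico a b) := by
    refine monotoneOn_of_hasDerivWithinAt_nonneg (convex_Ico a b)
      (fun t ht => (hderiv t ht).continuousAt.continuousWithinAt)
      (fun t ht => (hderiv t (interior_subset ht)).hasDerivWithinAt) fun t ht => ?_
    have ht' := interior_subset ht
    have hbt : 0 < b - t := sub_pos.2 ht'.2
    have : f' t + η * (-1 / (b - t)) = ((b - t) * f' t - η) / (b - t) := by field_simp; ring
    rw [this]
    exact div_nonneg (sub_nonneg.2 (hη t ht')) hbt.le
  -- At this point `η * log (b - t)` has dropped by more than `f` can have risen.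
  set t := b - (b - a) * exp (-((M - f a) / η) - 1)
  have ha : a ∈ Ico a b := ⟨le_rfl, hab⟩
  have hexp : exp (-((M - f a) / η) - 1) ≤ 1 :=
    exp_le_one_iff.2 (by linarith [div_nonneg (sub_nonneg.2 (hM a ha)) hpos.le])
  have ht : t ∈ Ico a b :=
    ⟨by nlinarith [sub_pos.2 hab], sub_lt_self _ (mul_pos (sub_pos.2 hab) (exp_pos _))⟩
  have hlog : η * log (b - t) = η * log (b - a) - (M - f a) - η := by
    rw [sub_sub_cancel, log_mul (sub_pos.2 hab).ne' (exp_pos _).ne', log_exp]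
    field_simp
    ring
  have hle := hmono ha ht ht.1
  simp only [hlog] at hle
  linarith [hM t ht]

lemma exists_first_zero {f : ℝ → ℝ} {a b : ℝ} (hab : a < b) (hf : ContinuousOn f (Ioc a b))
    (hpos : ∀ᶠ t in 𝓝[>] a, 0 < f t) (hb : f b ≤ 0) :
    ∃ τ ∈ Ioc a b, f τ = 0 ∧ ∀ t ∈ Ioo a τ, 0 < f t := by
  obtain ⟨u, hu : a < u, hsub⟩ := mem_nhdsGT_iff_exists_Ioo_subset.1 hpos
  obtain ⟨v, hav, hvu⟩ := exists_between (lt_min hu hab)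
  have hcont : ContinuousOn f (Icc v b) := hf.mono fun t ht => ⟨hav.trans_le ht.1, ht.2⟩
  have hv : 0 < f v := hsub ⟨hav, hvu.trans_le (min_le_left _ _)⟩
  have hvb : v ≤ b := (hvu.trans_le (min_le_right _ _)).le
  have hcompact : IsCompact (Icc v b ∩ f ⁻¹' Iic 0) :=
    isCompact_Icc.of_isClosed_subset (hcont.preimage_isClosed_of_isClosed isClosed_Icc isClosed_Iic)
      inter_subset_left
  obtain ⟨τ, ⟨hτ, hfτ⟩, hleast⟩ := hcompact.exists_isLeast ⟨b, ⟨hvb, le_rfl⟩, hb⟩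
  obtain ⟨σ, hσ, hfσ⟩ : 0 ∈ f '' Icc v τ :=
    intermediate_value_Icc' hτ.1 (hcont.mono (Icc_subset_Icc_right hτ.2)) ⟨hfτ, hv.le⟩
  have hστ : σ = τ := le_antisymm hσ.2 (hleast ⟨⟨hσ.1, hσ.2.trans hτ.2⟩, hfσ.le⟩)
  refine ⟨τ, ⟨hav.trans_le hτ.1, hτ.2⟩, hστ ▸ hfσ, fun t ht => ?_⟩
  by_contra! hft
  rcases lt_or_ge t v with htv | htv
  · exact hft.not_gt (hsub ⟨ht.1, htv.trans (hvu.trans_le (min_le_left _ _))⟩)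
  · exact ht.2.not_ge (hleast ⟨⟨htv, ht.2.le.trans hτ.2⟩, hft⟩)

lemma add_card_sub_one_mul_le {α : Type*} [LinearOrder α] {b : α → ℝ} {γ : ℝ} {Z : Finset α}
    (hZ : Z.Nonempty)
    (hb : ∀ t ∈ Z, ∀ t' ∈ Z, t < t' → (∀ u ∈ Z, u ∉ Ioo t t') → b t + γ ≤ b t') :
    b (Z.min' hZ) + (Z.card - 1) * γ ≤ b (Z.max' hZ) := by
  induction Z using Finset.induction_on_max with
  | empty => simp at hZ
  | insert x Z hx ih =>
    rcases Z.eq_empty_or_nonempty with rfl | hZ'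
    · simp
    have hmax := hx _ (Z.max'_mem hZ')
    have hmin := hx _ (Z.min'_mem hZ')
    have hprev := ih hZ' fun t ht t' ht' htt' hcons =>
      hb t (by simp [ht]) t' (by simp [ht']) htt' fun u hu => by
        rcases Finset.mem_insert.1 hu with rfl | hu
        · exact fun h => (hx t' ht').not_gt h.2
        · exact hcons u hu
    have hlast := hb _ (by simp [Z.max'_mem hZ']) x (by simp) hmax fun u hu => by
      rcases Finset.mem_insert.1 hu with rfl | hu
      · exact fun h => h.2.false
      · exact fun h => h.1.not_ge (Z.le_max' u hu)
    rw [Finset.max'_insert _ _ hZ', Finset.min'_insert _ _ hZ', max_eq_left hmax.le,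
      min_eq_right hmin.le, Finset.card_insert_of_notMem fun h => (hx x h).false]
    push_cast
    linarith

end RealAnalysis

section ModifiedAngle

variable {z s a : ℝ → ℝ}

/-- A modified Prüfer angle. If `z` solves the Riccati equation `z' = s' (2 a z - ρ - z²)`, the
plain angle `arctan z + s` is not monotone because of the term `2 a z`; the correction
`a z² / (1 + z²)` makes it so as soon as `a` is increasing and `ρ = 1`. -/
noncomputable def modifiedAngle (z s a : ℝ → ℝ) (t : ℝ) : ℝ :=
  arctan (z t) + s t + a t * (z t ^ 2 / (1 + z t ^ 2))

lemma hasDerivAt_modifiedAngle {t s' a' ρ : ℝ} (hs : HasDerivAt s s' t) (ha : HasDerivAt a a' t)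
    (hz : HasDerivAt z (s' * (2 * a t * z t - ρ - z t ^ 2)) t) :
    HasDerivAt (modifiedAngle z s a)
      (s' * (4 * a t ^ 2 * z t ^ 2 / (1 + z t ^ 2) ^ 2) + a' * (z t ^ 2 / (1 + z t ^ 2)) +
        s' * ((1 - ρ) * (1 + z t ^ 2 + 2 * a t * z t) / (1 + z t ^ 2) ^ 2)) t := by
  have hpos : 0 < 1 + z t ^ 2 := by positivity
  refine ((hz.arctan.add hs).add
    (ha.mul ((hz.pow 2).div ((hz.pow 2).const_add 1) hpos.ne'))).congr_deriv ?_
  simp only [Pi.pow_apply, Pi.div_apply, Nat.cast_ofNat, Nat.add_one_sub_one, pow_one]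
  field_simp
  ring

lemma tendsto_sq_div_one_add_sq {l : Filter ℝ} (hz : Tendsto (fun t => z t ^ 2) l atTop) :
    Tendsto (fun t => z t ^ 2 / (1 + z t ^ 2)) l (𝓝 1) := by
  have h := (tendsto_atTop_add_const_left l 1 hz).inv_tendsto_atTop.const_sub 1
  rw [sub_zero] at h
  refine h.congr fun t => ?_
  have : 0 < 1 + z t ^ 2 := by positivity
  simp only [Pi.inv_apply]
  field_simp
  ring

variable {l : Filter ℝ} {s₀ a₀ : ℝ}

lemma tendsto_modifiedAngle_of_atTop (hz : Tendsto z l atTop) (hs : Tendsto s l (𝓝 s₀))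
    (ha : Tendsto a l (𝓝 a₀)) : Tendsto (modifiedAngle z s a) l (𝓝 (π / 2 + (s₀ + a₀))) := by
  have h := (((tendsto_arctan_atTop.mono_right nhdsWithin_le_nhds).comp hz).add hs).add
    (ha.mul (tendsto_sq_div_one_add_sq ((tendsto_pow_atTop two_ne_zero).comp hz)))
  rwa [mul_one, add_assoc] at h

lemma tendsto_modifiedAngle_of_atBot (hz : Tendsto z l atBot) (hs : Tendsto s l (𝓝 s₀))
    (ha : Tendsto a l (𝓝 a₀)) : Tendsto (modifiedAngle z s a) l (𝓝 (-(π / 2) + (s₀ + a₀))) := by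
  have hsq : Tendsto (fun t => z t ^ 2) l atTop := by
    simpa [Function.comp_def] using
      (tendsto_pow_atTop two_ne_zero).comp (tendsto_neg_atBot_atTop.comp hz)
  have h := (((tendsto_arctan_atBot.mono_right nhdsWithin_le_nhds).comp hz).add hs).add
    (ha.mul (tendsto_sq_div_one_add_sq hsq))
  rwa [mul_one, add_assoc] at h

end ModifiedAngle

section Comparison

variable {c κ t : ℝ}

/-- The factor `q` for which `z = q ψ' / ψ` solves the Riccati equation of `modifiedAngle` when `ψ`
is a spheroidal function of band limit `c`, with `κ` in place of its eigenvalue. -/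
noncomputable def spheroidalScale (c κ t : ℝ) : ℝ := √((1 - t ^ 2) / (κ - c ^ 2 * t ^ 2))

/-- The coefficient `a` of `modifiedAngle` that belongs to `spheroidalScale`. -/
noncomputable def spheroidalDamping (c κ t : ℝ) : ℝ :=
  spheroidalScale c κ t / 2 * (t * (1 / (1 - t ^ 2) + c ^ 2 / (κ - c ^ 2 * t ^ 2)))

/-- The phase `s(t) = ∫₀ᵗ √((κ - c² x²) / (1 - x²)) dx` of `modifiedAngle` that belongs to
`spheroidalScale`, written with `x = sin θ` to remove the singularity of the integrand at `±1`. -/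
noncomputable def spheroidalPhase (c κ t : ℝ) : ℝ :=
  ∫ θ in 0..arcsin t, √(κ - c ^ 2 * sin θ ^ 2)

lemma hasDerivAt_one_sub_sq (x : ℝ) : HasDerivAt (fun t : ℝ => 1 - t ^ 2) (-(2 * x)) x := by
  simpa using (hasDerivAt_pow 2 x).const_sub 1

lemma one_sub_sq_pos (ht : t ∈ Ioo (-1 : ℝ) 1) : 0 < 1 - t ^ 2 := by nlinarith [ht.1, ht.2]

lemma sub_mul_sq_pos (hκ : 0 < κ) (hcκ : c ^ 2 ≤ κ) (ht : t ∈ Ioo (-1 : ℝ) 1) :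
    0 < κ - c ^ 2 * t ^ 2 := by
  nlinarith [mul_pos hκ (one_sub_sq_pos ht), mul_le_mul_of_nonneg_right hcκ (sq_nonneg t)]

@[simp]
lemma spheroidalDamping_neg : spheroidalDamping c κ (-t) = -spheroidalDamping c κ t := by
  simp only [spheroidalDamping, spheroidalScale, neg_sq]
  ring

@[simp]
lemma spheroidalPhase_neg : spheroidalPhase c κ (-t) = -spheroidalPhase c κ t := by
  have h := intervalIntegral.integral_comp_neg (fun θ => √(κ - c ^ 2 * sin θ ^ 2))
    (a := 0) (b := arcsin t)
  simp only [sin_neg, neg_sq, neg_zero] at h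
  rw [spheroidalPhase, spheroidalPhase, arcsin_neg, h, intervalIntegral.integral_symm]

lemma spheroidalPhase_le_one (c κ t : ℝ) : spheroidalPhase c κ t ≤ spheroidalPhase c κ 1 := by
  have hint (a b : ℝ) : IntervalIntegrable (fun θ => √(κ - c ^ 2 * sin θ ^ 2))
      MeasureTheory.volume a b := Continuous.intervalIntegrable (by fun_prop) a b
  rw [← sub_nonneg, spheroidalPhase, spheroidalPhase,
    intervalIntegral.integral_interval_sub_left (hint _ _) (hint _ _)]
  refine intervalIntegral.integral_nonneg ?_ fun θ _ => sqrt_nonneg _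
  rw [arcsin_one]
  exact arcsin_le_pi_div_two t

lemma spheroidalPhase_one (hκ : 0 < κ) :
    spheroidalPhase c κ 1 = √κ * ℰ (c ^ 2 / κ) := by
  rw [spheroidalPhase, arcsin_one, ellipticPow, ← intervalIntegral.integral_const_mul]
  congr 1 with θ
  rw [one_sub_mul_sin_sq_rpow_half, ← sqrt_mul hκ.le]
  congr 1
  field_simp

lemma spheroidalScale_pos (hκ : 0 < κ) (hcκ : c ^ 2 ≤ κ) (ht : t ∈ Ioo (-1 : ℝ) 1) :
    0 < spheroidalScale c κ t :=
  sqrt_pos.2 (div_pos (one_sub_sq_pos ht) (sub_mul_sq_pos hκ hcκ ht))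

lemma spheroidalScale_sq (hκ : 0 < κ) (hcκ : c ^ 2 ≤ κ) (ht : t ∈ Ioo (-1 : ℝ) 1) :
    spheroidalScale c κ t ^ 2 = (1 - t ^ 2) / (κ - c ^ 2 * t ^ 2) :=
  sq_sqrt (div_pos (one_sub_sq_pos ht) (sub_mul_sq_pos hκ hcκ ht)).le

lemma spheroidalScale_mul (hκ : 0 < κ) (hcκ : c ^ 2 ≤ κ) (ht : t ∈ Ioo (-1 : ℝ) 1) :
    spheroidalScale c κ t * (κ - c ^ 2 * t ^ 2) = √((1 - t ^ 2) * (κ - c ^ 2 * t ^ 2)) := by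
  have hw := sub_mul_sq_pos hκ hcκ ht
  refine (sqrt_eq_iff_mul_self_eq (mul_pos (one_sub_sq_pos ht) hw).le
    (mul_pos (spheroidalScale_pos hκ hcκ ht) hw).le).2 ?_ |>.symm
  rw [mul_mul_mul_comm, ← sq, spheroidalScale_sq hκ hcκ ht]
  field_simp

lemma hasDerivAt_spheroidalScale (hκ : 0 < κ) (hcκ : c ^ 2 ≤ κ)
    (ht : t ∈ Ioo (-1 : ℝ) 1) :
    HasDerivAt (spheroidalScale c κ)
      (spheroidalScale c κ t * (t * (c ^ 2 / (κ - c ^ 2 * t ^ 2) - 1 / (1 - t ^ 2)))) t := by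
  have hp := one_sub_sq_pos ht
  have hw := sub_mul_sq_pos hκ hcκ ht
  have hscale := spheroidalScale_pos hκ hcκ ht
  have hsq := spheroidalScale_sq hκ hcκ ht
  refine ((((hasDerivAt_pow 2 t).const_sub 1).div
    (((hasDerivAt_pow 2 t).const_mul (c ^ 2)).const_sub κ) hw.ne').sqrt
      (div_pos hp hw).ne').congr_deriv ?_
  change _ / (2 * spheroidalScale c κ t) = _
  rw [div_eq_iff (by positivity),
    show ∀ q r : ℝ, q * r * (2 * q) = 2 * r * q ^ 2 by intros; ring, hsq]
  push_cast
  generalize κ - c ^ 2 * t ^ 2 = w at hw ⊢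
  field_simp
  ring

lemma hasDerivAt_spheroidalDamping (hκ : 0 < κ) (hcκ : c ^ 2 ≤ κ)
    (ht : t ∈ Ioo (-1 : ℝ) 1) :
    HasDerivAt (spheroidalDamping c κ)
      (spheroidalScale c κ t / 2 * (1 / (1 - t ^ 2) + c ^ 2 / (κ - c ^ 2 * t ^ 2) +
        t ^ 2 * (1 / (1 - t ^ 2) ^ 2 + 3 * c ^ 4 / (κ - c ^ 2 * t ^ 2) ^ 2))) t := by
  have hp := one_sub_sq_pos ht
  have hw := sub_mul_sq_pos hκ hcκ ht
  have hdw : HasDerivAt (fun t : ℝ => κ - c ^ 2 * t ^ 2) (-(c ^ 2 * (2 * t))) t := by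
    simpa using ((hasDerivAt_pow 2 t).const_mul (c ^ 2)).const_sub κ
  refine (((hasDerivAt_spheroidalScale hκ hcκ ht).div_const 2).mul ((hasDerivAt_id t).mul
    (((hasDerivAt_const t 1).div (hasDerivAt_one_sub_sq t) hp.ne').add
      ((hasDerivAt_const t (c ^ 2)).div hdw hw.ne')))).congr_deriv ?_
  simp only [id, Pi.add_apply, Pi.div_apply, Pi.mul_apply]
  generalize 1 - t ^ 2 = p at hp ⊢
  generalize κ - c ^ 2 * t ^ 2 = w at hw ⊢
  field_simp
  ring

lemma monotoneOn_spheroidalDamping (hκ : 0 < κ) (hcκ : c ^ 2 ≤ κ) :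
    MonotoneOn (spheroidalDamping c κ) (Ioo (-1) 1) := by
  refine monotoneOn_of_hasDerivWithinAt_nonneg (convex_Ioo _ _)
    (fun t ht => (hasDerivAt_spheroidalDamping hκ hcκ ht).continuousAt.continuousWithinAt)
    (fun t ht => (hasDerivAt_spheroidalDamping hκ hcκ (interior_subset ht)).hasDerivWithinAt)
    fun t ht => ?_
  have hp := one_sub_sq_pos (interior_subset ht)
  have hw := sub_mul_sq_pos hκ hcκ (interior_subset ht)
  have hq := spheroidalScale_pos hκ hcκ (interior_subset ht)
  positivity

lemma hasDerivAt_spheroidalPhase (ht : t ∈ Ioo (-1 : ℝ) 1) :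
    HasDerivAt (spheroidalPhase c κ) (1 / spheroidalScale c κ t) t := by
  have hcont : Continuous fun θ => √(κ - c ^ 2 * sin θ ^ 2) := by fun_prop
  refine ((hcont.integral_hasStrictDerivAt 0 (arcsin t)).hasDerivAt.comp t
    (hasDerivAt_arcsin ht.1.ne' ht.2.ne)).congr_deriv ?_
  rw [sin_arcsin ht.1.le ht.2.le, spheroidalScale, sqrt_div (one_sub_sq_pos ht).le, one_div_div,
    mul_one_div]

lemma spheroidalPhase_sq (hc : 0 ≤ c) (ht : t ∈ Icc (-1 : ℝ) 1) :
    spheroidalPhase c (c ^ 2) t = c * t := by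
  have hcos : EqOn (fun θ => √(c ^ 2 - c ^ 2 * sin θ ^ 2)) (fun θ => c * cos θ)
      (uIcc 0 (arcsin t)) := fun θ hθ => by
    have hθ' : θ ∈ Icc (-(π / 2)) (π / 2) := uIcc_subset_Icc
      ⟨by linarith [pi_pos], by linarith [pi_pos]⟩
      ⟨neg_pi_div_two_le_arcsin t, arcsin_le_pi_div_two t⟩ hθ
    change √(c ^ 2 - c ^ 2 * sin θ ^ 2) = c * cos θ
    rw [← mul_one_sub, ← cos_sq', ← mul_pow, sqrt_sq (mul_nonneg hc (cos_nonneg_of_mem_Icc hθ'))]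
  rw [spheroidalPhase, intervalIntegral.integral_congr hcos, intervalIntegral.integral_const_mul,
    integral_cos, sin_arcsin ht.1 ht.2, sin_zero, sub_zero]

lemma spheroidalDamping_sq (hc : 0 < c) (ht : t ∈ Ioo (-1 : ℝ) 1) :
    spheroidalDamping c (c ^ 2) t = t / (c * (1 - t ^ 2)) := by
  have hp := one_sub_sq_pos ht
  have hscale : spheroidalScale c (c ^ 2) t = 1 / c := by
    rw [spheroidalScale, ← mul_one_sub, div_mul_cancel_right₀ hp.ne', sqrt_inv, sqrt_sq hc.le,
      one_div]
  rw [spheroidalDamping, hscale, ← mul_one_sub]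
  field_simp
  ring

end Comparison

section SimpleZero

variable {f f' g : ℝ → ℝ} {t₀ : ℝ}

lemma tendsto_sub_mul_logDeriv (hf : HasDerivAt f (f' t₀) t₀) (hf' : ContinuousAt f' t₀)
    (hg : ContinuousAt g t₀) (hzero : f t₀ = 0) (hne : f' t₀ ≠ 0) :
    Tendsto (fun t => (t - t₀) * (g t * f' t / f t)) (𝓝[≠] t₀) (𝓝 (g t₀)) := by
  have h := ((hg.mul hf').tendsto.mono_left nhdsWithin_le_nhds).div
    (hasDerivAt_iff_tendsto_slope.1 hf) hne
  rw [Pi.mul_apply, mul_div_cancel_right₀ _ hne] at h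
  refine h.congr fun t => ?_
  rw [Pi.div_apply, slope_def_field, hzero, sub_zero, div_div_eq_mul_div, mul_div_assoc', mul_comm,
    Pi.mul_apply]

lemma tendsto_logDeriv_nhdsGT (hf : HasDerivAt f (f' t₀) t₀) (hf' : ContinuousAt f' t₀)
    (hg : ContinuousAt g t₀) (hpos : 0 < g t₀) (hzero : f t₀ = 0) (hne : f' t₀ ≠ 0) :
    Tendsto (fun t => g t * f' t / f t) (𝓝[>] t₀) atTop := by
  have hsub : Tendsto (fun t => t - t₀) (𝓝[>] t₀) (𝓝[>] 0) := tendsto_nhdsWithin_iff.2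
    ⟨((continuous_sub_right t₀).tendsto' t₀ 0 (sub_self t₀)).mono_left nhdsWithin_le_nhds,
      eventually_mem_nhdsWithin.mono fun _ ht => mem_Ioi.2 (sub_pos.2 ht)⟩
  have hlim := (tendsto_sub_mul_logDeriv hf hf' hg hzero hne).mono_left
    (nhdsWithin_mono _ fun _ ht => ne_of_gt ht)
  refine (hlim.pos_mul_atTop hpos hsub.inv_tendsto_nhdsGT_zero).congr' ?_
  filter_upwards [self_mem_nhdsWithin] with t ht
  rw [mul_comm]
  exact inv_mul_cancel_left₀ (sub_ne_zero.2 (ne_of_gt ht)) _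

lemma tendsto_logDeriv_nhdsLT (hf : HasDerivAt f (f' t₀) t₀) (hf' : ContinuousAt f' t₀)
    (hg : ContinuousAt g t₀) (hpos : 0 < g t₀) (hzero : f t₀ = 0) (hne : f' t₀ ≠ 0) :
    Tendsto (fun t => g t * f' t / f t) (𝓝[<] t₀) atBot := by
  have hsub : Tendsto (fun t => t - t₀) (𝓝[<] t₀) (𝓝[<] 0) := tendsto_nhdsWithin_iff.2
    ⟨((continuous_sub_right t₀).tendsto' t₀ 0 (sub_self t₀)).mono_left nhdsWithin_le_nhds,
      eventually_mem_nhdsWithin.mono fun _ ht => mem_Iio.2 (sub_neg.2 ht)⟩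
  have hlim := (tendsto_sub_mul_logDeriv hf hf' hg hzero hne).mono_left
    (nhdsWithin_mono _ fun _ ht => ne_of_lt ht)
  refine (hlim.pos_mul_atBot hpos hsub.inv_tendsto_nhdsLT_zero).congr' ?_
  filter_upwards [self_mem_nhdsWithin] with t ht
  rw [mul_comm]
  exact inv_mul_cancel_left₀ (sub_ne_zero.2 (ne_of_lt ht)) _

end SimpleZero

lemma eqOn_zero_of_hasDerivAt_mul {f g α β : ℝ → ℝ} {u v t₀ : ℝ} (hα : ContinuousOn α (Icc u v))
    (hβ : ContinuousOn β (Icc u v)) (hf : ∀ t ∈ Ioo u v, HasDerivAt f (α t * g t) t)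
    (hg : ∀ t ∈ Ioo u v, HasDerivAt g (β t * f t) t) (ht₀ : t₀ ∈ Ioo u v) (hf₀ : f t₀ = 0)
    (hg₀ : g t₀ = 0) : EqOn f 0 (Ioo u v) := by
  obtain ⟨C, hC⟩ := isCompact_Icc.exists_bound_of_continuousOn hα
  obtain ⟨D, hD⟩ := isCompact_Icc.exists_bound_of_continuousOn hβ
  let field (t : ℝ) (y : ℝ × ℝ) : ℝ × ℝ := (α t • y.2, β t • y.1)
  have hlip (t) (ht : t ∈ Ioo u v) :
      LipschitzOnWith (max C.toNNReal D.toNNReal) (field t) univ := by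
    have hCt := toNNReal_le_toNNReal (hC t (Ioo_subset_Icc_self ht))
    have hDt := toNNReal_le_toNNReal (hD t (Ioo_subset_Icc_self ht))
    rw [norm_toNNReal] at hCt hDt
    refine ((((lipschitzWith_smul (α t)).comp LipschitzWith.prod_snd).prodMk
      ((lipschitzWith_smul (β t)).comp LipschitzWith.prod_fst)).weaken ?_).lipschitzOnWith
    simpa only [mul_one] using max_le_max hCt hDt
  have heq : EqOn (fun t => (f t, g t)) (fun _ => (0, 0)) (Ioo u v) :=
    ODE_solution_unique_of_mem_Ioo hlip ht₀
      (fun t ht => ⟨(hf t ht).prodMk (hg t ht), mem_univ _⟩)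
      (fun t _ => ⟨(hasDerivAt_const t (0, 0)).congr_deriv (by simp [field, Prod.zero_eq_mk]),
        mem_univ _⟩)
      (by simp [hf₀, hg₀])
  exact fun t ht => congr_arg Prod.fst (heq ht)

/-- `ψ` is a nontrivial solution of the spheroidal equation
`((1 - x²) ψ')' + (χ - c² x²) ψ = 0` on `(-1, 1)` that extends continuously to `±1`. Nontriviality
is recorded as the finiteness of the zero set, so that `Set.ncard` counts the zeros. -/
structure IsSpheroidalSol (c χ : ℝ) (ψ : ℝ → ℝ) : Prop where
  continuousOn : ContinuousOn ψ (Icc (-1) 1)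
  differentiableAt : ∀ x ∈ Ioo (-1 : ℝ) 1, DifferentiableAt ℝ ψ x
  hasDerivAt_flux : ∀ x ∈ Ioo (-1 : ℝ) 1,
    HasDerivAt (fun t => (1 - t ^ 2) * deriv ψ t) (-((χ - c ^ 2 * x ^ 2) * ψ x)) x
  finite_zeros : {x | x ∈ Ioo (-1 : ℝ) 1 ∧ ψ x = 0}.Finite

lemma IsPSWF.isSpheroidalSol {c χ : ℝ} {n : ℕ} {ψ : ℝ → ℝ} {lam : ℂ} (h : IsPSWF c n ψ χ lam) :
    IsSpheroidalSol c χ ψ := by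
  obtain ⟨hcont, hdiff, hode, hfin, -⟩ := h
  refine ⟨hcont, fun x hx => (hdiff x hx).1, fun x hx => ?_, hfin⟩
  refine ((hasDerivAt_one_sub_sq x).mul (hdiff x hx).2.hasDerivAt).congr_deriv ?_
  linarith [hode x hx]

lemma neg_mem_Ioo_neg_one_one {x : ℝ} (hx : x ∈ Ioo (-1 : ℝ) 1) : -x ∈ Ioo (-1 : ℝ) 1 :=
  ⟨neg_lt_neg hx.2, neg_lt.1 hx.1⟩

namespace IsSpheroidalSol

variable {c χ : ℝ} {ψ : ℝ → ℝ}

lemma neg (h : IsSpheroidalSol c χ ψ) : IsSpheroidalSol c χ fun x => -ψ x where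
  continuousOn := h.continuousOn.neg
  differentiableAt x hx := (h.differentiableAt x hx).fun_neg
  hasDerivAt_flux x hx := by
    simpa only [deriv.fun_neg, mul_neg] using (h.hasDerivAt_flux x hx).fun_neg
  finite_zeros := by simpa only [neg_eq_zero] using h.finite_zeros

lemma comp_neg (h : IsSpheroidalSol c χ ψ) : IsSpheroidalSol c χ fun x => ψ (-x) where
  continuousOn := h.continuousOn.comp continuousOn_neg fun _ hx => ⟨neg_le_neg hx.2, neg_le.1 hx.1⟩
  differentiableAt x hx :=
    (h.differentiableAt (-x) (neg_mem_Ioo_neg_one_one hx)).comp x differentiableAt_id.neg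
  hasDerivAt_flux x hx := by
    simpa [Function.comp_def, deriv_comp_neg] using
      ((h.hasDerivAt_flux (-x) (neg_mem_Ioo_neg_one_one hx)).comp x (hasDerivAt_neg x)).fun_neg
  finite_zeros := (h.finite_zeros.preimage neg_injective.injOn).subset fun _ hx =>
    ⟨neg_mem_Ioo_neg_one_one hx.1, hx.2⟩

lemma hasDerivAt_deriv (h : IsSpheroidalSol c χ ψ) {x : ℝ} (hx : x ∈ Ioo (-1 : ℝ) 1) :
    HasDerivAt (deriv ψ) ((2 * x * deriv ψ x - (χ - c ^ 2 * x ^ 2) * ψ x) / (1 - x ^ 2)) x := by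
  have hp := (one_sub_sq_pos hx).ne'
  refine (((h.hasDerivAt_flux x hx).div (hasDerivAt_one_sub_sq x) hp).congr_of_eventuallyEq
    ?_).congr_deriv ?_
  · filter_upwards [Ioo_mem_nhds hx.1 hx.2] with y hy
    rw [Pi.div_apply, mul_div_cancel_left₀ _ (one_sub_sq_pos hy).ne']
  · field_simp
    ring

lemma deriv_ne_zero (h : IsSpheroidalSol c χ ψ) {t₀ : ℝ} (ht₀ : t₀ ∈ Ioo (-1 : ℝ) 1)
    (hzero : ψ t₀ = 0) : deriv ψ t₀ ≠ 0 := by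
  intro hderiv
  obtain ⟨u, hu, hut⟩ := exists_between ht₀.1
  obtain ⟨v, htv, hv⟩ := exists_between ht₀.2
  have hsub (t) (ht : t ∈ Icc u v) : t ∈ Ioo (-1 : ℝ) 1 := ⟨hu.trans_le ht.1, ht.2.trans_lt hv⟩
  have hψ : EqOn ψ 0 (Ioo u v) := by
    refine eqOn_zero_of_hasDerivAt_mul (α := fun t => (1 - t ^ 2)⁻¹)
      (β := fun t => -(χ - c ^ 2 * t ^ 2)) (g := fun t => (1 - t ^ 2) * deriv ψ t)
      (ContinuousOn.inv₀ (by fun_prop) fun t ht => (one_sub_sq_pos (hsub t ht)).ne')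
      (by fun_prop) (fun t ht => ?_) (fun t ht => ?_) ⟨hut, htv⟩ hzero (by simp [hderiv])
    · have ht' := hsub t (Ioo_subset_Icc_self ht)
      rw [inv_mul_cancel_left₀ (one_sub_sq_pos ht').ne']
      exact (h.differentiableAt t ht').hasDerivAt
    · rw [neg_mul]
      exact h.hasDerivAt_flux t (hsub t (Ioo_subset_Icc_self ht))
  exact Ioo_infinite (hut.trans htv) (h.finite_zeros.subset fun t ht =>
    ⟨hsub t (Ioo_subset_Icc_self ht), hψ ht⟩)

lemma flux_le (h : IsSpheroidalSol c χ ψ) {t K : ℝ} (ht : t ∈ Ioo (-1 : ℝ) 1) (hK₀ : 0 ≤ K)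
    (hK : ∀ u ∈ Ico t 1, (χ - c ^ 2 * u ^ 2) * ψ u ≤ K) :
    (1 - t ^ 2) * deriv ψ t ≤ K * (1 - t) := by
  have hsub (u) (hu : u ∈ Ico t 1) : u ∈ Ioo (-1 : ℝ) 1 := ⟨ht.1.trans_le hu.1, hu.2⟩
  have hderiv (u) (hu : u ∈ Ico t 1) : HasDerivAt (fun u => (1 - u ^ 2) * deriv ψ u + K * u)
      (-((χ - c ^ 2 * u ^ 2) * ψ u) + K * 1) u :=
    (h.hasDerivAt_flux u (hsub u hu)).add ((hasDerivAt_id u).const_mul K)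
  have hmono : MonotoneOn (fun u => (1 - u ^ 2) * deriv ψ u + K * u) (Ico t 1) :=
    monotoneOn_of_hasDerivWithinAt_nonneg (convex_Ico t 1)
      (fun u hu => (hderiv u hu).continuousAt.continuousWithinAt)
      (fun u hu => (hderiv u (interior_subset hu)).hasDerivWithinAt)
      fun u hu => by linarith [hK u (interior_subset hu)]
  obtain ⟨M, hM⟩ := isCompact_Icc.exists_bound_of_continuousOn h.continuousOn
  -- A flux bounded below by `η > 0` up to `1` would make `ψ` diverge logarithmically there.
  set η := (1 - t ^ 2) * deriv ψ t - K * (1 - t)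
  by_contra! hpos
  have hle : η / 2 ≤ 0 := by
    refine nonpos_of_le_sub_mul_deriv ht.2
      (fun u hu => (h.differentiableAt u (hsub u hu)).hasDerivAt)
      (fun u hu => (le_abs_self _).trans (hM u (Ioo_subset_Icc_self (hsub u hu)))) fun u hu => ?_
    have hflux : η ≤ (1 - u) * deriv ψ u * (1 + u) := by
      have hmon := hmono ⟨le_rfl, ht.2⟩ hu hu.1
      nlinarith [mul_nonneg hK₀ (sub_nonneg.2 hu.2.le)]
    have h1u : 0 < 1 + u := by linarith [(hsub u hu).1]
    have hderiv_pos : 0 < (1 - u) * deriv ψ u :=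
      pos_of_mul_pos_left (by linarith) h1u.le
    linarith [mul_nonneg hderiv_pos.le (sub_nonneg.2 hu.2.le)]
  linarith

end IsSpheroidalSol

section Angle

variable {c κ χ t t₀ u v : ℝ} {ψ : ℝ → ℝ}

/-- The logarithmic derivative `ψ' / ψ` scaled by `spheroidalScale`. -/
noncomputable def scaledLogDeriv (c κ : ℝ) (ψ : ℝ → ℝ) (t : ℝ) : ℝ :=
  spheroidalScale c κ t * deriv ψ t / ψ t

/-- The modified Prüfer angle of `ψ`. Its monotonicity between consecutive zeros of `ψ` makes
`dampedPhase` grow by at least `π` from one zero to the next. -/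
noncomputable def spheroidalAngle (c κ : ℝ) (ψ : ℝ → ℝ) : ℝ → ℝ :=
  modifiedAngle (scaledLogDeriv c κ ψ) (spheroidalPhase c κ) (spheroidalDamping c κ)

/-- The value of `spheroidalAngle` at a zero of `ψ`, up to the jump `±π/2` of the arctangent. -/
noncomputable def dampedPhase (c κ t : ℝ) : ℝ := spheroidalPhase c κ t + spheroidalDamping c κ t

lemma dampedPhase_neg : dampedPhase c κ (-t) = -dampedPhase c κ t := by
  rw [dampedPhase, dampedPhase, spheroidalPhase_neg, spheroidalDamping_neg, neg_add]

lemma scaledLogDeriv_neg : scaledLogDeriv c κ (fun x => -ψ x) = scaledLogDeriv c κ ψ := by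
  ext t
  simp only [scaledLogDeriv, deriv.fun_neg, mul_neg, neg_div_neg_eq]

namespace IsSpheroidalSol

lemma hasDerivAt_scaledLogDeriv (h : IsSpheroidalSol c χ ψ) (hκ : 0 < κ) (hcκ : c ^ 2 ≤ κ)
    (ht : t ∈ Ioo (-1 : ℝ) 1) (hψ : ψ t ≠ 0) :
    HasDerivAt (scaledLogDeriv c κ ψ)
      (1 / spheroidalScale c κ t * (2 * spheroidalDamping c κ t * scaledLogDeriv c κ ψ t -
        (χ - c ^ 2 * t ^ 2) / (κ - c ^ 2 * t ^ 2) - scaledLogDeriv c κ ψ t ^ 2)) t := by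
  have hp := one_sub_sq_pos ht
  have hw := sub_mul_sq_pos hκ hcκ ht
  have hq := spheroidalScale_pos hκ hcκ ht
  have hsq := spheroidalScale_sq hκ hcκ ht
  refine (((hasDerivAt_spheroidalScale hκ hcκ ht).mul (h.hasDerivAt_deriv ht)).div
    (h.differentiableAt t ht).hasDerivAt hψ).congr_deriv ?_
  simp only [scaledLogDeriv, spheroidalDamping, Pi.mul_apply]
  rw [eq_div_iff hw.ne'] at hsq
  generalize spheroidalScale c κ t = q at hq hsq ⊢
  generalize 1 - t ^ 2 = p at hp hsq ⊢
  generalize κ - c ^ 2 * t ^ 2 = w at hw hsq ⊢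
  subst hsq
  field_simp
  ring

lemma continuousAt_spheroidalAngle (h : IsSpheroidalSol c χ ψ) (hκ : 0 < κ) (hcκ : c ^ 2 ≤ κ)
    (ht : t ∈ Ioo (-1 : ℝ) 1) (hψ : ψ t ≠ 0) : ContinuousAt (spheroidalAngle c κ ψ) t :=
  (hasDerivAt_modifiedAngle (hasDerivAt_spheroidalPhase ht) (hasDerivAt_spheroidalDamping hκ hcκ ht)
    (h.hasDerivAt_scaledLogDeriv hκ hcκ ht hψ)).continuousAt

lemma monotoneOn_spheroidalAngle (h : IsSpheroidalSol c χ ψ) (hκ : 0 < κ) (hcκ : c ^ 2 ≤ κ)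
    (hχ : χ ≤ κ) (huv : Ioo u v ⊆ Ioo (-1) 1) (hψ : ∀ t ∈ Ioo u v, ψ t ≠ 0)
    (hdamp : ∀ t ∈ Ioo u v, χ = κ ∨
      0 ≤ 1 + scaledLogDeriv c κ ψ t ^ 2 + 2 * spheroidalDamping c κ t * scaledLogDeriv c κ ψ t) :
    MonotoneOn (spheroidalAngle c κ ψ) (Ioo u v) := by
  have hderiv (t) (ht : t ∈ Ioo u v) := hasDerivAt_modifiedAngle
    (hasDerivAt_spheroidalPhase (huv ht)) (hasDerivAt_spheroidalDamping hκ hcκ (huv ht))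
    (h.hasDerivAt_scaledLogDeriv hκ hcκ (huv ht) (hψ t ht))
  refine monotoneOn_of_hasDerivWithinAt_nonneg (convex_Ioo u v)
    (fun t ht => (hderiv t ht).continuousAt.continuousWithinAt)
    (fun t ht => (hderiv t (interior_subset ht)).hasDerivWithinAt) fun t ht => ?_
  replace ht := interior_subset ht
  have hp := one_sub_sq_pos (huv ht)
  have hw := sub_mul_sq_pos hκ hcκ (huv ht)
  have hq := spheroidalScale_pos hκ hcκ (huv ht)
  have hlast : 0 ≤ (1 - (χ - c ^ 2 * t ^ 2) / (κ - c ^ 2 * t ^ 2)) * (1 +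
      scaledLogDeriv c κ ψ t ^ 2 + 2 * spheroidalDamping c κ t * scaledLogDeriv c κ ψ t) := by
    rcases hdamp t ht with rfl | hnonneg
    · simp [div_self hw.ne']
    · exact mul_nonneg (sub_nonneg.2 ((div_le_one hw).2 (by linarith))) hnonneg
  positivity

lemma tendsto_scaledLogDeriv_nhdsGT (h : IsSpheroidalSol c χ ψ) (hκ : 0 < κ) (hcκ : c ^ 2 ≤ κ)
    (ht₀ : t₀ ∈ Ioo (-1 : ℝ) 1) (hzero : ψ t₀ = 0) :
    Tendsto (scaledLogDeriv c κ ψ) (𝓝[>] t₀) atTop :=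
  tendsto_logDeriv_nhdsGT (h.differentiableAt t₀ ht₀).hasDerivAt
    (h.hasDerivAt_deriv ht₀).continuousAt (hasDerivAt_spheroidalScale hκ hcκ ht₀).continuousAt
    (spheroidalScale_pos hκ hcκ ht₀) hzero (h.deriv_ne_zero ht₀ hzero)

lemma tendsto_spheroidalAngle_nhdsGT (h : IsSpheroidalSol c χ ψ) (hκ : 0 < κ) (hcκ : c ^ 2 ≤ κ)
    (ht₀ : t₀ ∈ Ioo (-1 : ℝ) 1) (hzero : ψ t₀ = 0) :
    Tendsto (spheroidalAngle c κ ψ) (𝓝[>] t₀) (𝓝 (π / 2 + dampedPhase c κ t₀)) :=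
  tendsto_modifiedAngle_of_atTop (h.tendsto_scaledLogDeriv_nhdsGT hκ hcκ ht₀ hzero)
    ((hasDerivAt_spheroidalPhase ht₀).continuousAt.tendsto.mono_left nhdsWithin_le_nhds)
    ((hasDerivAt_spheroidalDamping hκ hcκ ht₀).continuousAt.tendsto.mono_left nhdsWithin_le_nhds)

lemma tendsto_spheroidalAngle_nhdsLT (h : IsSpheroidalSol c χ ψ) (hκ : 0 < κ) (hcκ : c ^ 2 ≤ κ)
    (ht₀ : t₀ ∈ Ioo (-1 : ℝ) 1) (hzero : ψ t₀ = 0) :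
    Tendsto (spheroidalAngle c κ ψ) (𝓝[<] t₀) (𝓝 (-(π / 2) + dampedPhase c κ t₀)) :=
  tendsto_modifiedAngle_of_atBot
    (tendsto_logDeriv_nhdsLT (h.differentiableAt t₀ ht₀).hasDerivAt
      (h.hasDerivAt_deriv ht₀).continuousAt (hasDerivAt_spheroidalScale hκ hcκ ht₀).continuousAt
      (spheroidalScale_pos hκ hcκ ht₀) hzero (h.deriv_ne_zero ht₀ hzero))
    ((hasDerivAt_spheroidalPhase ht₀).continuousAt.tendsto.mono_left nhdsWithin_le_nhds)
    ((hasDerivAt_spheroidalDamping hκ hcκ ht₀).continuousAt.tendsto.mono_left nhdsWithin_le_nhds)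

lemma pi_div_two_add_dampedPhase_le (h : IsSpheroidalSol c χ ψ) (hκ : 0 < κ) (hcκ : c ^ 2 ≤ κ)
    (ht₀ : t₀ ∈ Ioo (-1 : ℝ) 1) (hzero : ψ t₀ = 0)
    (hmono : MonotoneOn (spheroidalAngle c κ ψ) (Ioo t₀ v)) (ht : t ∈ Ioo t₀ v) :
    π / 2 + dampedPhase c κ t₀ ≤ spheroidalAngle c κ ψ t := by
  refine le_of_tendsto (h.tendsto_spheroidalAngle_nhdsGT hκ hcκ ht₀ hzero) ?_
  filter_upwards [Ioo_mem_nhdsGT ht.1] with u hu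
  exact hmono ⟨hu.1, hu.2.trans ht.2⟩ ht hu.2.le

lemma dampedPhase_add_pi_le (h : IsSpheroidalSol c χ ψ) (hκ : 0 < κ) (hcκ : c ^ 2 ≤ κ)
    (hu : u ∈ Ioo (-1 : ℝ) 1) (hv : v ∈ Ioo (-1 : ℝ) 1) (huv : u < v) (hψu : ψ u = 0)
    (hψv : ψ v = 0) (hmono : MonotoneOn (spheroidalAngle c κ ψ) (Ioo u v)) :
    dampedPhase c κ u + π ≤ dampedPhase c κ v := by
  have hle : π / 2 + dampedPhase c κ u ≤ -(π / 2) + dampedPhase c κ v := by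
    refine ge_of_tendsto (h.tendsto_spheroidalAngle_nhdsLT hκ hcκ hv hψv) ?_
    filter_upwards [Ioo_mem_nhdsLT huv] with t ht
    exact h.pi_div_two_add_dampedPhase_le hκ hcκ hu hψu hmono ht
  linarith

end IsSpheroidalSol

end Angle

section LastZero

variable {c κ χ t t₀ v : ℝ} {ψ : ℝ → ℝ}

lemma spheroidalDamping_mul_le (hκ : 0 < κ) (hcκ : c ^ 2 ≤ κ) (ht : t ∈ Ico (0 : ℝ) 1) :
    spheroidalDamping c κ t * ((1 - t ^ 2) * (κ - c ^ 2 * t ^ 2)) ≤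
      √((1 - t ^ 2) * (κ - c ^ 2 * t ^ 2)) := by
  have ht' : t ∈ Ioo (-1 : ℝ) 1 := ⟨by linarith [ht.1], ht.2⟩
  have hp := one_sub_sq_pos ht'
  have hw := sub_mul_sq_pos hκ hcκ ht'
  have hq := spheroidalScale_pos hκ hcκ ht'
  have hle : spheroidalDamping c κ t ≤ spheroidalScale c κ t / (1 - t ^ 2) := by
    have hsum : 1 / (1 - t ^ 2) + c ^ 2 / (κ - c ^ 2 * t ^ 2) ≤ 2 / (1 - t ^ 2) := by
      have : c ^ 2 / (κ - c ^ 2 * t ^ 2) ≤ 1 / (1 - t ^ 2) := by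
        rw [div_le_div_iff₀ hw hp, one_mul]
        linarith
      linarith [add_div 1 1 (1 - t ^ 2), one_add_one_eq_two (R := ℝ)]
    calc spheroidalDamping c κ t
        ≤ spheroidalScale c κ t / 2 * (1 * (2 / (1 - t ^ 2))) := by
          unfold spheroidalDamping
          gcongr
          exact ht.2.le
      _ = _ := by ring
  calc spheroidalDamping c κ t * ((1 - t ^ 2) * (κ - c ^ 2 * t ^ 2))
      ≤ spheroidalScale c κ t / (1 - t ^ 2) * ((1 - t ^ 2) * (κ - c ^ 2 * t ^ 2)) := by gcongr
    _ = spheroidalScale c κ t * (κ - c ^ 2 * t ^ 2) := by field_simp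
    _ = _ := spheroidalScale_mul hκ hcκ ht'

lemma spheroidalAngle_le (hκ : 0 < κ) (hcκ : c ^ 2 ≤ κ)
    (ht : t ∈ Ico (0 : ℝ) 1) {C : ℝ} (hz : 0 < scaledLogDeriv c κ ψ t)
    (hC : scaledLogDeriv c κ ψ t ≤ C * √((1 - t ^ 2) * (κ - c ^ 2 * t ^ 2))) :
    spheroidalAngle c κ ψ t ≤ arctan (C * √((1 - t ^ 2) * (κ - c ^ 2 * t ^ 2))) +
      spheroidalPhase c κ 1 + C ^ 2 * √((1 - t ^ 2) * (κ - c ^ 2 * t ^ 2)) := by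
  have ht' : t ∈ Ioo (-1 : ℝ) 1 := ⟨by linarith [ht.1], ht.2⟩
  have hpw := (mul_pos (one_sub_sq_pos ht') (sub_mul_sq_pos hκ hcκ ht')).le
  have ha : 0 ≤ spheroidalDamping c κ t := by
    have hp := one_sub_sq_pos ht'
    have hw := sub_mul_sq_pos hκ hcκ ht'
    have hq := spheroidalScale_pos hκ hcκ ht'
    have := ht.1
    unfold spheroidalDamping
    positivity
  refine add_le_add (add_le_add (arctan_strictMono.monotone hC) (spheroidalPhase_le_one c κ t)) ?_
  calc spheroidalDamping c κ t * (scaledLogDeriv c κ ψ t ^ 2 / (1 + scaledLogDeriv c κ ψ t ^ 2))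
      ≤ spheroidalDamping c κ t * scaledLogDeriv c κ ψ t ^ 2 := by
        gcongr
        exact div_le_self (sq_nonneg _) (by linarith [sq_nonneg (scaledLogDeriv c κ ψ t)])
    _ ≤ spheroidalDamping c κ t * (C * √((1 - t ^ 2) * (κ - c ^ 2 * t ^ 2))) ^ 2 := by gcongr
    _ = C ^ 2 * (spheroidalDamping c κ t * ((1 - t ^ 2) * (κ - c ^ 2 * t ^ 2))) := by
        rw [mul_pow, sq_sqrt hpw]
        ring
    _ ≤ _ := mul_le_mul_of_nonneg_left (spheroidalDamping_mul_le hκ hcκ ht) (sq_nonneg C)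

lemma spheroidalAngle_of_scaledLogDeriv_eq_zero (hz : scaledLogDeriv c κ ψ t = 0) :
    spheroidalAngle c κ ψ t = spheroidalPhase c κ t := by
  simp [spheroidalAngle, modifiedAngle, hz]

lemma forall_pos_or_forall_neg {f : ℝ → ℝ} {s : Set ℝ} (hs : IsPreconnected s)
    (hf : ContinuousOn f s) (hne : ∀ t ∈ s, f t ≠ 0) : (∀ t ∈ s, 0 < f t) ∨ ∀ t ∈ s, f t < 0 := by
  by_contra! ⟨⟨a, ha, hfa⟩, b, hb, hfb⟩
  obtain ⟨t, ht, hft⟩ := hs.intermediate_value ha hb hf ⟨hfa, hfb⟩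
  exact hne t ht hft

namespace IsSpheroidalSol

lemma scaledLogDeriv_le (h : IsSpheroidalSol c χ ψ) (hκ : 0 < κ) (hcκ : c ^ 2 ≤ κ) (hχ : χ ≤ κ)
    (ht : t ∈ Ico (0 : ℝ) 1) {m M : ℝ} (hm : 0 < m) (hmψ : m ≤ ψ t)
    (hψ : ∀ u ∈ Ico t 1, 0 ≤ ψ u) (hψM : ∀ u ∈ Ico t 1, ψ u ≤ M) :
    scaledLogDeriv c κ ψ t ≤ M / m * √((1 - t ^ 2) * (κ - c ^ 2 * t ^ 2)) := by
  have ht' : t ∈ Ioo (-1 : ℝ) 1 := ⟨by linarith [ht.1], ht.2⟩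
  have hp := one_sub_sq_pos ht'
  have hw := sub_mul_sq_pos hκ hcκ ht'
  have hq := spheroidalScale_pos hκ hcκ ht'
  have hM : 0 ≤ M := (hψ t ⟨le_rfl, ht.2⟩).trans (hψM t ⟨le_rfl, ht.2⟩)
  have hbound (u) (hu : u ∈ Ico t 1) :
      (χ - c ^ 2 * u ^ 2) * ψ u ≤ (κ - c ^ 2 * t ^ 2) * M := by
    have hut : t ^ 2 ≤ u ^ 2 := pow_le_pow_left₀ ht.1 hu.1 2
    have hcoef : χ - c ^ 2 * u ^ 2 ≤ κ - c ^ 2 * t ^ 2 := by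
      linarith [mul_le_mul_of_nonneg_left hut (sq_nonneg c)]
    exact (mul_le_mul_of_nonneg_right hcoef (hψ u hu)).trans
      (mul_le_mul_of_nonneg_left (hψM u hu) hw.le)
  have hderiv : deriv ψ t ≤ (κ - c ^ 2 * t ^ 2) * M := by
    have hflux := h.flux_le ht' (mul_nonneg hw.le hM) hbound
    refine le_of_mul_le_mul_left (hflux.trans ?_) hp
    rw [mul_comm]
    exact mul_le_mul_of_nonneg_right (by nlinarith [ht.1, ht.2]) (mul_nonneg hw.le hM)
  calc scaledLogDeriv c κ ψ t
      ≤ spheroidalScale c κ t * ((κ - c ^ 2 * t ^ 2) * M) / ψ t := by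
        unfold scaledLogDeriv
        have := hm.trans_le hmψ
        gcongr
    _ ≤ spheroidalScale c κ t * ((κ - c ^ 2 * t ^ 2) * M) / m := by gcongr
    _ = M / m * (spheroidalScale c κ t * (κ - c ^ 2 * t ^ 2)) := by ring
    _ = _ := by rw [spheroidalScale_mul hκ hcκ ht']

lemma eventually_scaledLogDeriv_le (h : IsSpheroidalSol c χ ψ) (hκ : 0 < κ) (hcκ : c ^ 2 ≤ κ)
    (hχ : χ ≤ κ) (ht₀ : t₀ ∈ Ioo (-1 : ℝ) 1) (hψ : ∀ t ∈ Ioo t₀ 1, 0 < ψ t)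
    (hz : ∀ t ∈ Ioo t₀ 1, 0 < scaledLogDeriv c κ ψ t) :
    ∃ C, ∀ᶠ t in 𝓝[<] 1,
      scaledLogDeriv c κ ψ t ≤ C * √((1 - t ^ 2) * (κ - c ^ 2 * t ^ 2)) := by
  have hsub (t) (ht : t ∈ Ioo t₀ 1) : t ∈ Ioo (-1 : ℝ) 1 := ⟨ht₀.1.trans ht.1, ht.2⟩
  have hmono : MonotoneOn ψ (Ioo t₀ 1) := by
    refine monotoneOn_of_deriv_nonneg (convex_Ioo t₀ 1)
      (fun t ht => (h.differentiableAt t (hsub t ht)).continuousAt.continuousWithinAt)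
      (fun t ht => (h.differentiableAt t (hsub t (interior_subset ht))).differentiableWithinAt)
      fun t ht => ?_
    replace ht := interior_subset ht
    have hq := spheroidalScale_pos hκ hcκ (hsub t ht)
    have hnum := (div_pos_iff_of_pos_right (hψ t ht)).1 (hz t ht)
    exact ((mul_pos_iff_of_pos_left hq).1 hnum).le
  obtain ⟨M, hM⟩ := isCompact_Icc.exists_bound_of_continuousOn h.continuousOn
  obtain ⟨t₁, ht₁, ht₁'⟩ := exists_between (max_lt ht₀.2 one_pos)
  have ht₀₁ : t₁ ∈ Ioo t₀ 1 := ⟨(le_max_left _ _).trans_lt ht₁, ht₁'⟩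
  refine ⟨M / ψ t₁, ?_⟩
  filter_upwards [Ioo_mem_nhdsLT ht₁'] with t ht
  have hmem (u) (hu : u ∈ Ico t 1) : u ∈ Ioo t₀ 1 := ⟨ht₀₁.1.trans (ht.1.trans_le hu.1), hu.2⟩
  exact h.scaledLogDeriv_le hκ hcκ hχ ⟨((le_max_right _ _).trans_lt (ht₁.trans ht.1)).le, ht.2⟩
    (hψ t₁ ht₀₁) (hmono ht₀₁ (hmem t ⟨le_rfl, ht.2⟩) ht.1.le) (fun u hu => (hψ u (hmem u hu)).le)
    fun u hu => (le_abs_self _).trans (hM u (Ioo_subset_Icc_self (hsub u (hmem u hu))))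

lemma le_spheroidalPhase_one_of_le_angle (h : IsSpheroidalSol c χ ψ) (hκ : 0 < κ)
    (hcκ : c ^ 2 ≤ κ) (hχ : χ ≤ κ) (ht₀ : t₀ ∈ Ioo (-1 : ℝ) 1) (hψ : ∀ t ∈ Ioo t₀ 1, ψ t ≠ 0)
    (hz : ∀ t ∈ Ioo t₀ 1, 0 < scaledLogDeriv c κ ψ t) {L : ℝ}
    (hL : ∀ t ∈ Ioo t₀ 1, L ≤ spheroidalAngle c κ ψ t) : L ≤ spheroidalPhase c κ 1 := by
  obtain ⟨C, hC⟩ : ∃ C, ∀ᶠ t in 𝓝[<] 1,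
      scaledLogDeriv c κ ψ t ≤ C * √((1 - t ^ 2) * (κ - c ^ 2 * t ^ 2)) := by
    have hcont : ContinuousOn ψ (Ioo t₀ 1) :=
      h.continuousOn.mono fun t ht => ⟨(ht₀.1.trans ht.1).le, ht.2.le⟩
    rcases forall_pos_or_forall_neg isPreconnected_Ioo hcont hψ with hpos | hneg
    · exact h.eventually_scaledLogDeriv_le hκ hcκ hχ ht₀ hpos hz
    · rw [← scaledLogDeriv_neg] at hz ⊢
      exact h.neg.eventually_scaledLogDeriv_le hκ hcκ hχ ht₀ (fun t ht => neg_pos.2 (hneg t ht)) hz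
  set g : ℝ → ℝ := fun t => arctan (C * √((1 - t ^ 2) * (κ - c ^ 2 * t ^ 2))) +
    spheroidalPhase c κ 1 + C ^ 2 * √((1 - t ^ 2) * (κ - c ^ 2 * t ^ 2)) with hg
  have hlim : Tendsto g (𝓝[<] 1) (𝓝 (spheroidalPhase c κ 1)) :=
    (Continuous.tendsto' (by fun_prop) 1 _ (by simp [hg])).mono_left nhdsWithin_le_nhds
  refine ge_of_tendsto hlim ?_
  filter_upwards [hC, Ioo_mem_nhdsLT (max_lt ht₀.2 one_pos)] with t hCt ht
  have ht' : t ∈ Ioo t₀ 1 := ⟨(le_max_left _ _).trans_lt ht.1, ht.2⟩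
  exact (hL t ht').trans (spheroidalAngle_le hκ hcκ
    ⟨((le_max_right _ _).trans_lt ht.1).le, ht.2⟩ (hz t ht') hCt)

lemma monotoneOn_spheroidalAngle_of_pos (h : IsSpheroidalSol c χ ψ) (hκ : 0 < κ)
    (hcκ : c ^ 2 ≤ κ) (hχ : χ ≤ κ) (ht₀ : t₀ ∈ Ioo (-1 : ℝ) 1) (hv : v ≤ 1)
    (hψ : ∀ t ∈ Ioo t₀ v, ψ t ≠ 0) (hdamp : χ = κ ∨ -1 ≤ spheroidalDamping c κ t₀)
    (hz : ∀ t ∈ Ioo t₀ v, 0 < scaledLogDeriv c κ ψ t) :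
    MonotoneOn (spheroidalAngle c κ ψ) (Ioo t₀ v) := by
  have hsub : Ioo t₀ v ⊆ Ioo (-1) 1 := Ioo_subset_Ioo ht₀.1.le hv
  refine h.monotoneOn_spheroidalAngle hκ hcκ hχ hsub hψ fun t ht => hdamp.imp_right fun hdamp => ?_
  have ha := monotoneOn_spheroidalDamping hκ hcκ ht₀ (hsub ht) ht.1.le
  nlinarith [hz t ht, sq_nonneg (scaledLogDeriv c κ ψ t - 1)]

lemma pi_div_two_add_dampedPhase_le_phase_one (h : IsSpheroidalSol c χ ψ) (hκ : 0 < κ)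
    (hcκ : c ^ 2 ≤ κ) (hχ : χ ≤ κ) (ht₀ : t₀ ∈ Ioo (-1 : ℝ) 1) (hzero : ψ t₀ = 0)
    (hψ : ∀ t ∈ Ioo t₀ 1, ψ t ≠ 0) (hdamp : χ = κ ∨ -1 ≤ spheroidalDamping c κ t₀) :
    π / 2 + dampedPhase c κ t₀ ≤ spheroidalPhase c κ 1 := by
  by_cases hz : ∀ t ∈ Ioo t₀ 1, 0 < scaledLogDeriv c κ ψ t
  · have hmono := h.monotoneOn_spheroidalAngle_of_pos hκ hcκ hχ ht₀ le_rfl hψ hdamp hz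
    exact h.le_spheroidalPhase_one_of_le_angle hκ hcκ hχ ht₀ hψ hz fun t ht =>
      h.pi_div_two_add_dampedPhase_le hκ hcκ ht₀ hzero hmono ht
  push Not at hz
  obtain ⟨t₁, ht₁, hzt₁⟩ := hz
  have hsub {t} (ht : t ∈ Ioo t₀ 1) : t ∈ Ioo (-1 : ℝ) 1 := ⟨ht₀.1.trans ht.1, ht.2⟩
  obtain ⟨τ, hτ, hzτ, hz⟩ := exists_first_zero ht₁.1
    (fun t ht =>
      have ht' : t ∈ Ioo t₀ 1 := ⟨ht.1, ht.2.trans_lt ht₁.2⟩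
      (h.hasDerivAt_scaledLogDeriv hκ hcκ (hsub ht') (hψ t ht')).continuousAt.continuousWithinAt)
    ((h.tendsto_scaledLogDeriv_nhdsGT hκ hcκ ht₀ hzero).eventually_gt_atTop 0) hzt₁
  have hτ' : τ ∈ Ioo t₀ 1 := ⟨hτ.1, hτ.2.trans_lt ht₁.2⟩
  have hmono := h.monotoneOn_spheroidalAngle_of_pos hκ hcκ hχ ht₀ hτ'.2.le
    (fun t ht => hψ t ⟨ht.1, ht.2.trans hτ'.2⟩) hdamp hz
  have hle : π / 2 + dampedPhase c κ t₀ ≤ spheroidalAngle c κ ψ τ := by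
    have hcont := h.continuousAt_spheroidalAngle hκ hcκ (hsub hτ') (hψ τ hτ')
    refine ge_of_tendsto (hcont.tendsto.mono_left (nhdsWithin_le_nhds (s := Iio τ))) ?_
    filter_upwards [Ioo_mem_nhdsLT hτ.1] with t ht
    exact h.pi_div_two_add_dampedPhase_le hκ hcκ ht₀ hzero hmono ht
  rw [spheroidalAngle_of_scaledLogDeriv_eq_zero hzτ] at hle
  exact hle.trans (spheroidalPhase_le_one c κ τ)

end IsSpheroidalSol

end LastZero

section Counting

variable {c κ χ t u v : ℝ} {ψ : ℝ → ℝ}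

namespace IsSpheroidalSol

lemma pi_div_two_sub_phase_one_le (h : IsSpheroidalSol c χ ψ) (hκ : 0 < κ)
    (hcκ : c ^ 2 ≤ κ) (hχ : χ ≤ κ) {t₀ : ℝ} (ht₀ : t₀ ∈ Ioo (-1 : ℝ) 1) (hzero : ψ t₀ = 0)
    (hψ : ∀ t ∈ Ioo (-1) t₀, ψ t ≠ 0) (hdamp : χ = κ ∨ spheroidalDamping c κ t₀ ≤ 1) :
    π / 2 - spheroidalPhase c κ 1 ≤ dampedPhase c κ t₀ := by
  have hle := h.comp_neg.pi_div_two_add_dampedPhase_le_phase_one hκ hcκ hχ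
    (neg_mem_Ioo_neg_one_one ht₀) (by simpa using hzero)
    (fun t ht => hψ (-t) ⟨neg_lt_neg ht.2, neg_lt.1 ht.1⟩)
    (by simpa using hdamp)
  rw [dampedPhase_neg] at hle
  linarith

lemma spheroidalDamping_le_one (h : IsSpheroidalSol c χ ψ) (hc : 0 < c) (hχ : χ ≤ c ^ 2) {t₀ : ℝ}
    (ht₀ : t₀ ∈ Ioo (-1 : ℝ) 1) (hzero : ψ t₀ = 0) (hψ : ∀ t ∈ Ioo t₀ 1, ψ t ≠ 0) :
    spheroidalDamping c (c ^ 2) t₀ ≤ 1 := by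
  by_contra! hdamp
  have hle := h.pi_div_two_add_dampedPhase_le_phase_one (pow_pos hc 2) le_rfl hχ ht₀ hzero hψ
    (.inr (by linarith))
  rw [dampedPhase, spheroidalPhase_sq hc.le (Ioo_subset_Icc_self ht₀),
    spheroidalPhase_sq hc.le (right_mem_Icc.2 (by norm_num))] at hle
  have hgap : 1 ≤ c * (1 - t₀) := by linarith [pi_pos]
  have hp := one_sub_sq_pos ht₀
  rw [spheroidalDamping_sq hc ht₀, one_lt_div (by positivity)] at hdamp
  nlinarith [ht₀.1]

lemma abs_spheroidalDamping_le_one (h : IsSpheroidalSol c χ ψ) (hc : 0 < c) (hχ : χ ≤ c ^ 2)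
    (ht : t ∈ Ioo (-1 : ℝ) 1) (hzero : ψ t = 0) : |spheroidalDamping c (c ^ 2) t| ≤ 1 := by
  have hle {φ : ℝ → ℝ} {u : ℝ} (hφ : IsSpheroidalSol c χ φ) (hu : u ∈ Ioo (-1 : ℝ) 1)
      (hφu : φ u = 0) : spheroidalDamping c (c ^ 2) u ≤ 1 := by
    obtain ⟨t₀, ⟨ht₀, hφ₀⟩, hmax⟩ := hφ.finite_zeros.exists_maximalFor id _ ⟨u, hu, hφu⟩
    have hlast (v) (hv : v ∈ Ioo (-1 : ℝ) 1) (hφv : φ v = 0) : v ≤ t₀ :=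
      (le_total v t₀).elim id (hmax ⟨hv, hφv⟩)
    exact (monotoneOn_spheroidalDamping (pow_pos hc 2) le_rfl hu ht₀ (hlast u hu hφu)).trans
      (hφ.spheroidalDamping_le_one hc hχ ht₀ hφ₀ fun v hv hφv =>
        hv.1.not_ge (hlast v ⟨ht₀.1.trans hv.1, hv.2⟩ hφv))
  have hneg := hle h.comp_neg (neg_mem_Ioo_neg_one_one ht) (by simpa using hzero)
  rw [spheroidalDamping_neg] at hneg
  exact abs_le.2 ⟨neg_le.1 hneg, hle h ht hzero⟩

lemma dampedPhase_add_pi_le_of_abs_damping_le (h : IsSpheroidalSol c χ ψ) (hκ : 0 < κ)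
    (hcκ : c ^ 2 ≤ κ) (hχ : χ ≤ κ) (hu : u ∈ Ioo (-1 : ℝ) 1) (hv : v ∈ Ioo (-1 : ℝ) 1)
    (huv : u < v) (hψu : ψ u = 0) (hψv : ψ v = 0) (hψ : ∀ t ∈ Ioo u v, ψ t ≠ 0)
    (hdamp : χ = κ ∨ |spheroidalDamping c κ u| ≤ 1 ∧ |spheroidalDamping c κ v| ≤ 1) :
    dampedPhase c κ u + π ≤ dampedPhase c κ v := by
  have hsub : Ioo u v ⊆ Ioo (-1) 1 := Ioo_subset_Ioo hu.1.le hv.2.le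
  refine h.dampedPhase_add_pi_le hκ hcκ hu hv huv hψu hψv
    (h.monotoneOn_spheroidalAngle hκ hcκ hχ hsub hψ fun t ht =>
      hdamp.imp_right fun ⟨hdu, hdv⟩ => ?_)
  have hau := monotoneOn_spheroidalDamping hκ hcκ hu (hsub ht) ht.1.le
  have hav := monotoneOn_spheroidalDamping hκ hcκ (hsub ht) hv ht.2.le
  have hsq : spheroidalDamping c κ t ^ 2 ≤ 1 := (sq_le_one_iff_abs_le_one _).2
    (abs_le.2 ⟨(abs_le.1 hdu).1.trans hau, hav.trans (abs_le.1 hdv).2⟩)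
  nlinarith [sq_nonneg (scaledLogDeriv c κ ψ t + spheroidalDamping c κ t)]

lemma ncard_zeros_mul_pi_le (h : IsSpheroidalSol c χ ψ) (hκ : 0 < κ) (hcκ : c ^ 2 ≤ κ)
    (hχ : χ ≤ κ) (hdamp : χ = κ ∨ ∀ t ∈ Ioo (-1 : ℝ) 1, ψ t = 0 → |spheroidalDamping c κ t| ≤ 1) :
    ({x | x ∈ Ioo (-1 : ℝ) 1 ∧ ψ x = 0}.ncard : ℝ) * π ≤ 2 * spheroidalPhase c κ 1 := by
  set Z := h.finite_zeros.toFinset with hZ_def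
  have hmem {t} : t ∈ Z ↔ t ∈ Ioo (-1 : ℝ) 1 ∧ ψ t = 0 := by simp [hZ_def]
  rw [ncard_eq_toFinset_card _ h.finite_zeros]
  rcases Z.eq_empty_or_nonempty with hZ | hZ
  · rw [← hZ_def, hZ, Finset.card_empty, Nat.cast_zero, zero_mul]
    have := spheroidalPhase_le_one c κ (-1)
    rw [spheroidalPhase_neg] at this
    linarith
  have hgaps := add_card_sub_one_mul_le hZ (b := dampedPhase c κ) (γ := π)
    fun u hu v hv huv hcons => by
      rw [hmem] at hu hv
      exact h.dampedPhase_add_pi_le_of_abs_damping_le hκ hcκ hχ hu.1 hv.1 huv hu.2 hv.2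
        (fun t ht hψ => hcons t (hmem.2 ⟨⟨hu.1.1.trans ht.1, ht.2.trans hv.1.2⟩, hψ⟩) ht)
        (hdamp.imp_right fun hdamp => ⟨hdamp u hu.1 hu.2, hdamp v hv.1 hv.2⟩)
  obtain ⟨hmin, hψmin⟩ := hmem.1 (Z.min'_mem hZ)
  obtain ⟨hmax, hψmax⟩ := hmem.1 (Z.max'_mem hZ)
  have hfirst := h.pi_div_two_sub_phase_one_le hκ hcκ hχ hmin hψmin
    (fun t ht hψ => ht.2.not_ge (Z.min'_le t (hmem.2 ⟨⟨ht.1, ht.2.trans hmin.2⟩, hψ⟩)))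
    (hdamp.imp_right fun hdamp => (abs_le.1 (hdamp _ hmin hψmin)).2)
  have hlast := h.pi_div_two_add_dampedPhase_le_phase_one hκ hcκ hχ hmax hψmax
    (fun t ht hψ => ht.1.not_ge (Z.le_max' t (hmem.2 ⟨⟨hmax.1.trans ht.1, ht.2⟩, hψ⟩)))
    (hdamp.imp_right fun hdamp => (abs_le.1 (hdamp _ hmax hψmax)).1)
  linarith

lemma ncard_zeros_mul_pi_le_of_le_sq (h : IsSpheroidalSol c χ ψ) (hc : 0 < c) (hχ : χ ≤ c ^ 2) :
    ({x | x ∈ Ioo (-1 : ℝ) 1 ∧ ψ x = 0}.ncard : ℝ) * π ≤ 2 * c := by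
  have hle := h.ncard_zeros_mul_pi_le (pow_pos hc 2) le_rfl hχ
    (.inr fun t ht => h.abs_spheroidalDamping_le_one hc hχ ht)
  rwa [spheroidalPhase_sq hc.le (right_mem_Icc.2 (by norm_num)), mul_one] at hle

lemma sq_lt_of_lt_ncard_zeros_mul_pi (h : IsSpheroidalSol c χ ψ) (hc : 0 < c)
    (hn : 2 * c < {x | x ∈ Ioo (-1 : ℝ) 1 ∧ ψ x = 0}.ncard * π) : c ^ 2 < χ := by
  contrapose! hn
  exact h.ncard_zeros_mul_pi_le_of_le_sq hc hn

lemma ncard_zeros_mul_pi_le_of_sq_le (h : IsSpheroidalSol c χ ψ) (hχ : 0 < χ) (hcχ : c ^ 2 ≤ χ) :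
    ({x | x ∈ Ioo (-1 : ℝ) 1 ∧ ψ x = 0}.ncard : ℝ) * π ≤ 2 * (√χ * ℰ (c ^ 2 / χ)) := by
  rw [← spheroidalPhase_one hχ]
  exact h.ncard_zeros_mul_pi_le hχ hcχ le_rfl (.inl rfl)

end IsSpheroidalSol

end Counting

end ZeroCount

section Scaling

variable {c χ : ℝ}

lemma sqrt_one_sub_sub_sq_div (hc : 0 ≤ c) (hχ : 0 < χ) : √(1 - (χ - c ^ 2) / χ) = c / √χ := by
  rw [one_sub_div hχ.ne', sub_sub_cancel, sqrt_div (sq_nonneg c), sqrt_sq hc]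

lemma sqrt_mul_ellipticF_sub_ellipticE (hc : 0 < c) (hcχ : c ^ 2 ≤ χ) :
    √χ * (EllipticF √((χ - c ^ 2) / χ) - EllipticE √((χ - c ^ 2) / χ)) =
      c * ellipticGap ((χ - c ^ 2) / χ) := by
  have hχ : 0 < χ := (pow_pos hc 2).trans_le hcχ
  have hm₀ : 0 ≤ (χ - c ^ 2) / χ := div_nonneg (sub_nonneg.2 hcχ) hχ.le
  have hm : (χ - c ^ 2) / χ < 1 := (div_lt_one hχ).2 (sub_lt_self χ (pow_pos hc 2))
  rw [ellipticF_sqrt hm₀ hm, ellipticE_sqrt hm₀, ellipticGap, sqrt_one_sub_sub_sq_div hc.le hχ]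
  field_simp

lemma sqrt_mul_ellipticPow_half_sq_div (hc : 0 < c) (hχ : 0 < χ) :
    √χ * ℰ (c ^ 2 / χ) = c * ellipticPhase ((χ - c ^ 2) / χ) := by
  rw [ellipticPhase, sqrt_one_sub_sub_sq_div hc.le hχ, one_sub_div hχ.ne', sub_sub_cancel]
  field_simp

end Scaling

theorem stmt8_general {c δ χ : ℝ} {ψ : ℝ → ℝ} (hc : 0 < c) (hδ₀ : 0 < δ)
    (hδ : δ ≤ 4 * exp 1 * π * c) (hψ : IsSpheroidalSol c χ ψ)
    (hzeros : 2 * c / π + 2 / π ^ 2 * δ * log (4 * exp 1 * π * c / δ) <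
      {x | x ∈ Set.Ioo (-1 : ℝ) 1 ∧ ψ x = 0}.ncard) :
    δ * (1 - δ / (2 * π * c)) <
      √χ * (EllipticF √((χ - c ^ 2) / χ) - EllipticE √((χ - c ^ 2) / χ)) := by
  have hcount : 2 * c * (1 + δ / c / π * log (4 * exp 1 * π / (δ / c))) <
      {x | x ∈ Set.Ioo (-1 : ℝ) 1 ∧ ψ x = 0}.ncard * π := by
    refine (mul_lt_mul_of_pos_right hzeros pi_pos).trans_eq' ?_
    rw [div_div_eq_mul_div]
    field_simp
  have hlog : 0 ≤ log (4 * exp 1 * π / (δ / c)) :=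
    log_nonneg (by rwa [one_le_div (by positivity), div_le_iff₀ hc])
  have hcχ : c ^ 2 < χ := hψ.sq_lt_of_lt_ncard_zeros_mul_pi hc (hcount.trans_le' (by
    linarith [(by positivity : 0 ≤ 2 * c * (δ / c / π * log (4 * exp 1 * π / (δ / c))))]))
  have hχ : 0 < χ := (pow_pos hc 2).trans hcχ
  rw [sqrt_mul_ellipticF_sub_ellipticE hc hcχ.le]
  by_contra! hgap
  have hgap' : ellipticGap ((χ - c ^ 2) / χ) ≤ δ / c * (1 - δ / c / (2 * π)) := by
    rw [div_mul_eq_mul_div, le_div_iff₀' hc, div_div, mul_comm c (2 * π)]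
    exact hgap
  have hphase := ellipticPhase_le_of_ellipticGap_le (div_pos (sub_pos.2 hcχ) hχ)
    ((div_lt_one hχ).2 (sub_lt_self χ (pow_pos hc 2))) (div_pos hδ₀ hc) hgap'
  have hle := hψ.ncard_zeros_mul_pi_le_of_sq_le hχ hcχ.le
  rw [sqrt_mul_ellipticPow_half_sq_div hc hχ] at hle
  linarith [mul_le_mul_of_nonneg_left hphase (by positivity : 0 ≤ 2 * c)]

theorem stmt8 (c : ℝ) (hc : 0 < c) (δ : ℝ) (hδ1 : 0 < δ) (hδ2 : δ < 5 * π / 4 * c)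
    (n : ℕ) (hn : 0 < n)
    (hnlow : (n : ℝ) > 2 * c / π + 2 / π ^ 2 * δ * Real.log (4 * Real.exp 1 * π * c / δ))
    (ψ : ℝ → ℝ) (χ : ℝ) (lam : ℂ)
    (hpswf : IsPSWF c n ψ χ lam) :
    δ * (1 - δ / (2 * π * c)) <
      Real.sqrt χ *
        (EllipticF (Real.sqrt ((χ - c ^ 2) / χ)) -
          EllipticE (Real.sqrt ((χ - c ^ 2) / χ))) :=
  stmt8_general hc hδ1 (by nlinarith [exp_one_gt_d9, mul_pos pi_pos hc]) hpswf.isSpheroidalSol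
    (by rwa [hpswf.2.2.2.2.1])
end

section
/- Let c > 0 be a real number, let n be a positive integer with n > 2c/π, and let ψ be the n-th PSWF with band limit c, with ODE eigenvalue χ_n. Define f(x) = −1 + ∫_0^{π/2} √(x + cos²θ) dθ for x ≥ 0 and G(x) = ∫_0^{π/2} sin²θ / √(1 + x·cos²θ) dθ for x ≥ 0. Then: (i) every real h₁ ≥ 0 with f(h₁) = n·π/(2c) − 1 satisfies h₁ < (χ_n − c²)/c²; (ii) every real h₂ ≥ 0 with f(h₂) = n·π/(2c) − 1 + 3π/(2c) satisfies (χ_n − c²)/c² < h₂; (iii) for every real h₁ ≥ 0 with f(h₁) = n·π/(2c) − 1, one has c·h₁·G(h₁) < √χ_n · ( F(√((χ_n − c²)/χ_n)) − E(√((χ_n − c²)/χ_n)) ). -/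
open Real

/-- The function `f(x) = -1 + ∫_0^{π/2} √(x + cos²θ) dθ`. -/
noncomputable def fFun (x : ℝ) : ℝ :=
  -1 + ∫ θ in (0 : ℝ)..(π / 2), Real.sqrt (x + Real.cos θ ^ 2)

/-- The function `G(x) = ∫_0^{π/2} sin²θ / √(1 + x·cos²θ) dθ`. -/
noncomputable def GFun (x : ℝ) : ℝ :=
  ∫ θ in (0 : ℝ)..(π / 2), Real.sin θ ^ 2 / Real.sqrt (1 + x * Real.cos θ ^ 2)

/-!
Write `p = 1 - x²`, `q = χ - c²x²` and let `w = pψ'`, so that `pψ' = w` and `w' = -qψ`. In the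
phase variable `t = ∫ √(q/p) dx` both `y = (pq)^{1/4} ψ` and `v = (pq)^{-1/4} w` solve equations
of the form `u'' + (1 + ρ)u = 0`: with `γ = -(log (pq))'/4` the potentials are `ρ = γ' - γ²` for
`y` and `ρ = -(γ' + γ²)` for `v`. One computes `γ' ≥ γ²` and `γ' > 0`. Sturm comparison with `sin`,
carried out through `arctan (u'/u) + t`, then shows that a zero-free interval of `ψ` has phase
length at most `π`, while an interval between neighbouring critical points has phase length more
than `π`; the latter survives at the singular end points `±1`, where the boundedness of `ψ` forces
`v'/v → ∓∞`. Since the total phase is `2c(f((χ - c²)/c²) + 1)`, counting the `n` zeros gives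
`nπ/(2c) < f((χ - c²)/c²) + 1 ≤ (n + 1)π/(2c)`.

The inequality `c² < χ` comes from the same lower estimate, applied with the phase of a parameter
`X > c²` with `χ ≤ X` in place of `χ`.
-/

namespace Prolate

open Set Filter Topology

/-! ### Phase comparison -/

theorem hasDerivAt_arctan_add {R T : ℝ → ℝ} {τ k x : ℝ}
    (hR : HasDerivAt R (-(τ * (1 + R x ^ 2)) - k) x) (hT : HasDerivAt T τ x) :
    HasDerivAt (fun y => arctan (R y) + T y) (-k / (1 + R x ^ 2)) x :=
  (hR.arctan.add hT).congr_deriv (by field_simp; ring)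

theorem sub_le_pi_of_antitoneOn_arctan_add {R T : ℝ → ℝ} {a b : ℝ} (hT : Continuous T)
    (hab : a < b) (hanti : AntitoneOn (fun x => arctan (R x) + T x) (Ioo a b)) :
    T b - T a ≤ π := by
  have hlim : Tendsto (fun s : ℝ × ℝ => T s.2 - T s.1) (𝓝[>] a ×ˢ 𝓝[<] b) (𝓝 (T b - T a)) :=
    (((hT.tendsto b).mono_left nhdsWithin_le_nhds).comp tendsto_snd).sub
      (((hT.tendsto a).mono_left nhdsWithin_le_nhds).comp tendsto_fst)
  obtain ⟨m, ham, hmb⟩ := exists_between hab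
  refine le_of_tendsto hlim ?_
  filter_upwards [prod_mem_prod (Ioo_mem_nhdsGT ham) (Ioo_mem_nhdsLT hmb)] with ⟨s, t⟩ hst
  obtain ⟨hs, ht⟩ : s ∈ Ioo a m ∧ t ∈ Ioo m b := hst
  have hle := hanti ⟨hs.1, hs.2.trans hmb⟩ ⟨ham.trans ht.1, ht.2⟩ (hs.2.trans ht.1).le
  dsimp only at hle ⊢
  linarith [arctan_lt_pi_div_two (R s), neg_pi_div_two_lt_arctan (R t)]

theorem pi_lt_sub_of_strictMonoOn_arctan_add {R T : ℝ → ℝ} {a b : ℝ} (hT : Continuous T)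
    (hab : a < b) (hmono : StrictMonoOn (fun x => arctan (R x) + T x) (Ioo a b))
    (ha : Tendsto R (𝓝[>] a) atTop) (hb : Tendsto R (𝓝[<] b) atBot) :
    π < T b - T a := by
  have hlim_a : Tendsto (fun x => arctan (R x) + T x) (𝓝[>] a) (𝓝 (π / 2 + T a)) :=
    ((tendsto_arctan_atTop.mono_right nhdsWithin_le_nhds).comp ha).add
      ((hT.tendsto a).mono_left nhdsWithin_le_nhds)
  have hlim_b : Tendsto (fun x => arctan (R x) + T x) (𝓝[<] b) (𝓝 (-(π / 2) + T b)) :=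
    ((tendsto_arctan_atBot.mono_right nhdsWithin_le_nhds).comp hb).add
      ((hT.tendsto b).mono_left nhdsWithin_le_nhds)
  obtain ⟨s, has, hsb⟩ := exists_between hab
  obtain ⟨t, hst, htb⟩ := exists_between hsb
  have hs : s ∈ Ioo a b := ⟨has, hsb⟩
  have ht : t ∈ Ioo a b := ⟨has.trans hst, htb⟩
  have hle_s : π / 2 + T a ≤ arctan (R s) + T s := by
    refine le_of_tendsto hlim_a ?_
    filter_upwards [Ioo_mem_nhdsGT has] with x hx
    exact hmono.monotoneOn ⟨hx.1, hx.2.trans hsb⟩ hs hx.2.le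
  have hle_t : arctan (R t) + T t ≤ -(π / 2) + T b := by
    refine ge_of_tendsto hlim_b ?_
    filter_upwards [Ioo_mem_nhdsLT htb] with x hx
    exact hmono.monotoneOn ht ⟨ht.1.trans hx.1, hx.2⟩ hx.1.le
  have hlt := hmono hs ht hst
  dsimp only at hlt
  linarith

/-! ### Counting with separated intervals -/

theorem sub_le_card_add_one_mul {α : Type*} [LinearOrder α] {T : α → ℝ} {a b : α} {d : ℝ}
    (Z : Finset α) (hab : a < b) (hZ : ∀ z ∈ Z, z ∈ Ioo a b)
    (hgap : ∀ x y, a ≤ x → x < y → y ≤ b → (∀ t ∈ Ioo x y, t ∉ Z) → T y - T x ≤ d) :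
    T b - T a ≤ (Z.card + 1) * d := by
  induction Z using Finset.induction_on_max generalizing b with
  | empty => simpa using hgap a b le_rfl hab le_rfl (by simp)
  | insert m Z hm ih =>
    obtain ⟨ham, hmb⟩ := hZ m (Finset.mem_insert_self m Z)
    have hleft : T m - T a ≤ (Z.card + 1) * d := by
      refine ih ham (fun z hz => ⟨(hZ z (Finset.mem_insert_of_mem hz)).1, hm z hz⟩) ?_
      intro x y hax hxy hym hfree
      refine hgap x y hax hxy (hym.trans hmb.le) fun t ht hmem => ?_
      rcases Finset.mem_insert.1 hmem with rfl | hmem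
      · exact (ht.2.trans_le hym).false
      · exact hfree t ht hmem
    have hright : T b - T m ≤ d := by
      refine hgap m b ham.le hmb le_rfl fun t ht hmem => ?_
      rcases Finset.mem_insert.1 hmem with rfl | hmem
      · exact ht.1.false
      · exact (ht.1.trans (hm t hmem)).false
    rw [Finset.card_insert_of_notMem fun hmem => (hm m hmem).false]
    push_cast
    linarith

theorem sum_sub_le_of_separated {ι α : Type*} [LinearOrder ι] [Preorder α] {T : α → ℝ}
    (hT : Monotone T) {a b : α} {l r : ι → α} (Z : Finset ι) (hab : a ≤ b)
    (hl : ∀ z ∈ Z, a ≤ l z) (hr : ∀ z ∈ Z, r z ≤ b)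
    (hsep : ∀ y ∈ Z, ∀ z ∈ Z, y < z → r y ≤ l z) :
    ∑ z ∈ Z, (T (r z) - T (l z)) ≤ T b - T a := by
  induction Z using Finset.induction_on_max generalizing b with
  | empty => simpa using hT hab
  | insert m Z hm ih =>
    have hmZ := Finset.mem_insert_self m Z
    have hinit : ∑ z ∈ Z, (T (r z) - T (l z)) ≤ T (l m) - T a :=
      ih (hl m hmZ) (fun z hz => hl z (Finset.mem_insert_of_mem hz))
        (fun z hz => hsep z (Finset.mem_insert_of_mem hz) m hmZ (hm z hz))
        (fun y hy z hz =>
          hsep y (Finset.mem_insert_of_mem hy) z (Finset.mem_insert_of_mem hz))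
    rw [Finset.sum_insert fun hmem => (hm m hmem).false]
    linarith [hT (hr m hmZ)]

/-! ### Nodal intervals -/

/-- `(l, r)` is a nodal interval of `f` in `(A, B)`: `f` has no zero in `(l, r)`, and each of `l`
and `r` is a zero of `f` or the corresponding end point of `(A, B)`. -/
structure IsNodalInterval (f : ℝ → ℝ) (A B l r : ℝ) : Prop where
  le_left : A ≤ l
  right_le : r ≤ B
  ne_zero : ∀ x ∈ Ioo l r, f x ≠ 0
  left_eq_or : l = A ∨ f l = 0
  right_eq_or : r = B ∨ f r = 0

theorem IsNodalInterval.right_le_left {f : ℝ → ℝ} {A B l r l' r' y e z : ℝ}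
    (h : IsNodalInterval f A B l r) (h' : IsNodalInterval f A B l' r')
    (hy : y ∈ Ioo l r) (hz : z ∈ Ioo l' r') (he : e ∈ Ioo y z) (hfe : f e = 0) : r ≤ l' :=
  calc r ≤ e := not_lt.1 fun hlt => h.ne_zero e ⟨hy.1.trans he.1, hlt⟩ hfe
    _ ≤ l' := not_lt.1 fun hlt => h'.ne_zero e ⟨hlt, he.2.trans hz.2⟩ hfe

theorem exists_forall_Ico_ne_zero {f : ℝ → ℝ} {m B : ℝ} (hmB : m < B)
    (hf : ContinuousOn f (Ico m B)) (hm : f m ≠ 0) :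
    ∃ r ∈ Ioc m B, (∀ x ∈ Ico m r, f x ≠ 0) ∧ (r = B ∨ f r = 0) := by
  by_cases hex : ∃ e ∈ Ico m B, f e = 0
  · obtain ⟨e, he, hfe⟩ := hex
    have hclosed : IsClosed (Icc m e ∩ f ⁻¹' {0}) :=
      (hf.mono (Icc_subset_Ico_right he.2)).preimage_isClosed_of_isClosed isClosed_Icc
        isClosed_singleton
    obtain ⟨r, ⟨hr, hfr⟩, hmin⟩ :=
      (isCompact_Icc.of_isClosed_subset hclosed inter_subset_left).exists_isLeast
        ⟨e, right_mem_Icc.2 he.1, hfe⟩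
    have hmr : m < r := hr.1.lt_of_ne fun heq => hm (heq ▸ hfr)
    exact ⟨r, ⟨hmr, hr.2.trans he.2.le⟩,
      fun x hx hfx => hx.2.not_ge (hmin ⟨⟨hx.1, hx.2.le.trans hr.2⟩, hfx⟩), Or.inr hfr⟩
  · push Not at hex
    exact ⟨B, right_mem_Ioc.2 hmB, hex, Or.inl rfl⟩

theorem exists_isNodalInterval {f : ℝ → ℝ} {A B m : ℝ} (hf : ContinuousOn f (Ioo A B))
    (hm : m ∈ Ioo A B) (hfm : f m ≠ 0) :
    ∃ l r, m ∈ Ioo l r ∧ IsNodalInterval f A B l r := by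
  obtain ⟨r, hr, hright, hr_eq⟩ :=
    exists_forall_Ico_ne_zero hm.2 (hf.mono (Ico_subset_Ioo_left hm.1)) hfm
  have hf_neg : ContinuousOn (fun x => f (-x)) (Ico (-m) (-A)) :=
    hf.comp continuousOn_neg fun x hx => ⟨by linarith [hx.2], by linarith [hx.1, hm.2]⟩
  obtain ⟨l, hl, hleft, hl_eq⟩ :=
    exists_forall_Ico_ne_zero (neg_lt_neg hm.1) hf_neg (by simpa using hfm)
  refine ⟨-l, r, ⟨by linarith [hl.1], hr.1⟩, ⟨by linarith [hl.2], hr.2, fun x hx => ?_, ?_, hr_eq⟩⟩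
  · rcases le_total m x with hmx | hxm
    · exact hright x ⟨hmx, hx.2⟩
    · simpa using hleft (-x) ⟨by linarith, by linarith [hx.1]⟩
  · exact hl_eq.imp_left neg_eq_iff_eq_neg.2

theorem pos_of_isPreconnected_of_ne_zero {f : ℝ → ℝ} {s : Set ℝ} (hs : IsPreconnected s)
    (hf : ContinuousOn f s) (hne : ∀ x ∈ s, f x ≠ 0) {z : ℝ} (hz : z ∈ s) (hpos : 0 < f z) :
    ∀ x ∈ s, 0 < f x := by
  intro x hx
  by_contra! hle
  obtain ⟨y, hy, hfy⟩ := hs.intermediate_value hx hz hf ⟨hle, hpos.le⟩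
  exact hne y hy hfy

/-! ### The Liouville transformation -/

/-- The coefficient `q = X - c²x²` of `ψ` in the prolate equation with parameter `X`. -/
def potential (c X x : ℝ) : ℝ := X - c ^ 2 * x ^ 2

/-- The Liouville weight `S = √(pq)` with `p = 1 - x²`. -/
noncomputable def weight (c X x : ℝ) : ℝ := √((1 - x ^ 2) * potential c X x)

/-- The factor `N` in `(pq)' = -2xN`. -/
def weightSlope (c X x : ℝ) : ℝ := potential c X x + c ^ 2 * (1 - x ^ 2)

/-- The function `γ = -pS'/(2S²)`, minus half the logarithmic derivative of the Liouville weight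
with respect to the phase. -/
noncomputable def damping (c X x : ℝ) : ℝ :=
  x * weightSlope c X x / (2 * potential c X x * weight c X x)

/-- The derivative of `damping c X`. -/
noncomputable def dampingDeriv (c X x : ℝ) : ℝ :=
  (weightSlope c X x * (1 - x ^ 2) * potential c X x
    + x ^ 2 * (potential c X x ^ 2 + 3 * c ^ 4 * (1 - x ^ 2) ^ 2))
  / (2 * potential c X x * weight c X x ^ 3)

/-- The Liouville phase `∫₀ˣ √(q/p)`, written with the substitution `x = sin θ`, which removes the
singularity at `±1`. -/
noncomputable def phase (c X x : ℝ) : ℝ :=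
  ∫ θ in (0 : ℝ)..(arcsin x), √(X - c ^ 2 * sin θ ^ 2)

section Coefficients

variable {c X x : ℝ}

theorem one_sub_sq_pos (hx : x ∈ Ioo (-1 : ℝ) 1) : 0 < 1 - x ^ 2 := by
  nlinarith [hx.1, hx.2]

theorem potential_pos (hX : c ^ 2 < X) (hx : x ∈ Icc (-1 : ℝ) 1) : 0 < potential c X x := by
  have hx_sq : x ^ 2 ≤ 1 := by nlinarith [hx.1, hx.2]
  unfold potential
  nlinarith [sq_nonneg c]

theorem weight_sq (hX : c ^ 2 < X) (hx : x ∈ Ioo (-1 : ℝ) 1) :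
    weight c X x ^ 2 = (1 - x ^ 2) * potential c X x :=
  sq_sqrt (mul_pos (one_sub_sq_pos hx) (potential_pos hX (Ioo_subset_Icc_self hx))).le

theorem weight_pos (hX : c ^ 2 < X) (hx : x ∈ Ioo (-1 : ℝ) 1) : 0 < weight c X x :=
  sqrt_pos.2 (mul_pos (one_sub_sq_pos hx) (potential_pos hX (Ioo_subset_Icc_self hx)))

theorem weightSlope_pos (hX : c ^ 2 < X) (hx : x ∈ Ioo (-1 : ℝ) 1) : 0 < weightSlope c X x :=
  add_pos_of_pos_of_nonneg (potential_pos hX (Ioo_subset_Icc_self hx))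
    (mul_nonneg (sq_nonneg c) (one_sub_sq_pos hx).le)

theorem continuous_potential : Continuous (potential c X) := by
  unfold potential; fun_prop

theorem continuous_weight : Continuous (weight c X) := by
  unfold weight potential; fun_prop

theorem tendsto_inv_weight_nhdsLT_one (hX : c ^ 2 < X) :
    Tendsto (weight c X)⁻¹ (𝓝[<] 1) atTop := by
  have hzero : Tendsto (weight c X) (𝓝[<] 1) (𝓝 0) := by
    simpa [weight] using ((continuous_weight (c := c) (X := X)).tendsto 1).mono_left
      (nhdsWithin_le_nhds (s := Iio 1))
  refine Tendsto.inv_tendsto_nhdsGT_zero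
    (tendsto_nhdsWithin_of_tendsto_nhds_of_eventually_within _ hzero ?_)
  filter_upwards [Ioo_mem_nhdsLT (show (-1 : ℝ) < 1 by norm_num)] with x hx
  exact weight_pos hX hx

theorem hasDerivAt_one_sub_sq (x : ℝ) : HasDerivAt (fun x : ℝ => 1 - x ^ 2) (-2 * x) x :=
  ((hasDerivAt_pow 2 x).const_sub 1).congr_deriv (by push_cast; ring)

theorem hasDerivAt_potential (c X x : ℝ) : HasDerivAt (potential c X) (-2 * c ^ 2 * x) x :=
  (((hasDerivAt_pow 2 x).const_mul (c ^ 2)).const_sub X).congr_deriv (by push_cast; ring)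

theorem hasDerivAt_weightSlope (c X x : ℝ) : HasDerivAt (weightSlope c X) (-4 * c ^ 2 * x) x :=
  ((hasDerivAt_potential c X x).add ((hasDerivAt_one_sub_sq x).const_mul (c ^ 2))).congr_deriv
    (by ring)

theorem hasDerivAt_weight (hX : c ^ 2 < X) (hx : x ∈ Ioo (-1 : ℝ) 1) :
    HasDerivAt (weight c X) (-x * weightSlope c X x / weight c X x) x := by
  have hpos := mul_pos (one_sub_sq_pos hx) (potential_pos hX (Ioo_subset_Icc_self hx))
  have hS := weight_pos hX hx
  refine (((hasDerivAt_one_sub_sq x).mul (hasDerivAt_potential c X x)).sqrt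
    hpos.ne').congr_deriv (f := weight c X) ?_
  change _ / (2 * weight c X x) = _
  unfold weightSlope
  field_simp
  ring

theorem hasDerivAt_damping (hX : c ^ 2 < X) (hx : x ∈ Ioo (-1 : ℝ) 1) :
    HasDerivAt (damping c X) (dampingDeriv c X x) x := by
  have hS := weight_pos hX hx
  have hq := potential_pos hX (Ioo_subset_Icc_self hx)
  have hderiv := ((hasDerivAt_id x).mul (hasDerivAt_weightSlope c X x)).div
    (((hasDerivAt_potential c X x).const_mul 2).mul (hasDerivAt_weight hX hx))
    (mul_pos (mul_pos two_pos hq) hS).ne'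
  refine hderiv.congr_deriv (f := damping c X) ?_
  simp only [id, Pi.mul_apply, dampingDeriv]
  field_simp
  rw [weight_sq hX hx, weightSlope]
  ring

theorem dampingDeriv_pos (hX : c ^ 2 < X) (hx : x ∈ Ioo (-1 : ℝ) 1) :
    0 < dampingDeriv c X x := by
  have hq := potential_pos hX (Ioo_subset_Icc_self hx)
  have hp := one_sub_sq_pos hx
  have hN := weightSlope_pos hX hx
  have hS := weight_pos hX hx
  unfold dampingDeriv
  positivity

theorem phaseDeriv_mul_damping_sq (hX : c ^ 2 < X) (hx : x ∈ Ioo (-1 : ℝ) 1) :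
    weight c X x / (1 - x ^ 2) * damping c X x ^ 2
      = x ^ 2 * weightSlope c X x ^ 2 / (4 * potential c X x * weight c X x ^ 3) := by
  have hq := potential_pos hX (Ioo_subset_Icc_self hx)
  have hp := one_sub_sq_pos hx
  have hS := weight_pos hX hx
  unfold damping
  field_simp
  rw [weight_sq hX hx]
  ring

theorem phaseDeriv_mul_damping_sq_le (hX : c ^ 2 < X) (hx : x ∈ Ioo (-1 : ℝ) 1) :
    weight c X x / (1 - x ^ 2) * damping c X x ^ 2 ≤ dampingDeriv c X x := by
  have hq := potential_pos hX (Ioo_subset_Icc_self hx)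
  have hp := one_sub_sq_pos hx
  have hN := weightSlope_pos hX hx
  have hS := weight_pos hX hx
  rw [phaseDeriv_mul_damping_sq hX hx, dampingDeriv,
    show 4 * potential c X x * weight c X x ^ 3 = 2 * (2 * potential c X x * weight c X x ^ 3) by
      ring, ← div_div]
  refine div_le_div_of_nonneg_right ?_ (by positivity)
  -- with `s = c²(1 - x²)`, twice the difference of the `x²` terms is `(q - s)² + 4s²`
  have hcross : 0 ≤ x ^ 2 * ((potential c X x - c ^ 2 * (1 - x ^ 2)) ^ 2
      + 4 * (c ^ 2 * (1 - x ^ 2)) ^ 2) := by positivity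
  have hfirst : 0 ≤ weightSlope c X x * (1 - x ^ 2) * potential c X x := by positivity
  have hN_sq : weightSlope c X x ^ 2 = (potential c X x + c ^ 2 * (1 - x ^ 2)) ^ 2 := rfl
  rw [hN_sq]
  nlinarith

theorem damping_neg (c X x : ℝ) : damping c X (-x) = -damping c X x := by
  unfold damping weight weightSlope potential
  simp only [even_two, Even.neg_pow]
  ring

theorem weight_neg (c X x : ℝ) : weight c X (-x) = weight c X x := by
  simp [weight, potential]

theorem continuous_sqrt_sub_mul_sin_sq (c X : ℝ) :
    Continuous fun θ : ℝ => √(X - c ^ 2 * sin θ ^ 2) := by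
  fun_prop

theorem hasDerivAt_phase (hx : x ∈ Ioo (-1 : ℝ) 1) :
    HasDerivAt (phase c X) (weight c X x / (1 - x ^ 2)) x := by
  have hint := (continuous_sqrt_sub_mul_sin_sq c X).integral_hasStrictDerivAt 0 (arcsin x)
  refine (hint.hasDerivAt.comp x (hasDerivAt_arcsin hx.1.ne' hx.2.ne)).congr_deriv
    (f := phase c X) ?_
  have hp := one_sub_sq_pos hx
  rw [sin_arcsin hx.1.le hx.2.le, weight, potential, sqrt_mul hp.le]
  field_simp
  rw [sq_sqrt hp.le]

theorem continuous_phase (c X : ℝ) : Continuous (phase c X) :=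
  (intervalIntegral.continuous_primitive
    (fun a b => (continuous_sqrt_sub_mul_sin_sq c X).intervalIntegrable a b) 0).comp
    continuous_arcsin

theorem phase_neg (c X x : ℝ) : phase c X (-x) = -phase c X x := by
  have hsubst := intervalIntegral.integral_comp_neg (a := 0) (b := arcsin x)
    (fun θ : ℝ => √(X - c ^ 2 * sin θ ^ 2))
  simp only [sin_neg, even_two, Even.neg_pow, neg_zero] at hsubst
  rw [phase, phase, arcsin_neg, hsubst, intervalIntegral.integral_symm]

theorem monotone_phase (c X : ℝ) : Monotone (phase c X) := by
  intro x y hxy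
  have hint (b : ℝ) := (continuous_sqrt_sub_mul_sin_sq c X).intervalIntegrable
    (μ := MeasureTheory.volume) 0 b
  rw [← sub_nonneg, phase, phase,
    intervalIntegral.integral_interval_sub_left (hint _) (hint _)]
  exact intervalIntegral.integral_nonneg (monotone_arcsin hxy) fun _ _ => sqrt_nonneg _

end Coefficients

/-! ### Solutions and their Riccati equations -/

/-- `ψ` is continuous on `[-1, 1]` and solves the prolate equation `(pψ')' + (χ - c²x²)ψ = 0` on
`(-1, 1)`, written as a first-order system for `ψ` and its flux `w = pψ'`, where `p = 1 - x²`. -/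
structure IsSolution (c χ : ℝ) (ψ w : ℝ → ℝ) : Prop where
  continuousOn : ContinuousOn ψ (Icc (-1) 1)
  hasDerivAt : ∀ x ∈ Ioo (-1 : ℝ) 1, HasDerivAt ψ (w x / (1 - x ^ 2)) x
  hasDerivAt_flux : ∀ x ∈ Ioo (-1 : ℝ) 1, HasDerivAt w (-(potential c χ x * ψ x)) x

/-- The logarithmic derivative of `√S ψ` with respect to the phase. -/
noncomputable def riccati (c X : ℝ) (ψ w : ℝ → ℝ) (x : ℝ) : ℝ :=
  w x / (weight c X x * ψ x) - damping c X x

/-- The logarithmic derivative of `w / √S` with respect to the phase, when the potential of the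
equation is `potential c X`. -/
noncomputable def dualRiccati (c X : ℝ) (ψ w : ℝ → ℝ) (x : ℝ) : ℝ :=
  damping c X x - weight c X x * ψ x / w x

theorem dualRiccati_neg (c X : ℝ) (ψ w : ℝ → ℝ) :
    dualRiccati c X (fun x => -ψ x) (fun x => -w x) = dualRiccati c X ψ w := by
  funext x
  simp [dualRiccati]

theorem dualRiccati_reflect (c X : ℝ) (ψ w : ℝ → ℝ) (x : ℝ) :
    dualRiccati c X (fun x => ψ (-x)) (fun x => -w (-x)) x = -dualRiccati c X ψ w (-x) := by
  simp only [dualRiccati, damping_neg, weight_neg]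
  ring

namespace IsSolution

variable {c χ X : ℝ} {ψ w : ℝ → ℝ} {x : ℝ}

theorem neg (h : IsSolution c χ ψ w) : IsSolution c χ (fun x => -ψ x) (fun x => -w x) where
  continuousOn := h.continuousOn.neg
  hasDerivAt x hx := (h.hasDerivAt x hx).neg.congr_deriv (by ring)
  hasDerivAt_flux x hx := (h.hasDerivAt_flux x hx).neg.congr_deriv (by ring)

theorem reflect (h : IsSolution c χ ψ w) :
    IsSolution c χ (fun x => ψ (-x)) (fun x => -w (-x)) where
  continuousOn :=
    h.continuousOn.comp continuousOn_neg fun x hx => ⟨by linarith [hx.2], by linarith [hx.1]⟩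
  hasDerivAt x hx :=
    ((h.hasDerivAt (-x) ⟨by linarith [hx.2], by linarith [hx.1]⟩).scomp x
      (hasDerivAt_neg x)).congr_deriv (by simp only [smul_eq_mul, neg_sq]; ring)
  hasDerivAt_flux x hx :=
    ((h.hasDerivAt_flux (-x) ⟨by linarith [hx.2], by linarith [hx.1]⟩).scomp x
      (hasDerivAt_neg x)).neg.congr_deriv (by simp [potential])

theorem continuousOn_flux (h : IsSolution c χ ψ w) : ContinuousOn w (Ioo (-1) 1) :=
  fun x hx => (h.hasDerivAt_flux x hx).continuousAt.continuousWithinAt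

theorem hasDerivAt_riccati (h : IsSolution c χ ψ w) (hχ : c ^ 2 < χ) (hx : x ∈ Ioo (-1 : ℝ) 1)
    (hψ : ψ x ≠ 0) :
    HasDerivAt (riccati c χ ψ w)
      (-(weight c χ x / (1 - x ^ 2) * (1 + riccati c χ ψ w x ^ 2))
        - (dampingDeriv c χ x - weight c χ x / (1 - x ^ 2) * damping c χ x ^ 2)) x := by
  have hS := weight_pos hχ hx
  have hq := potential_pos hχ (Ioo_subset_Icc_self hx)
  have hp : 1 - x ^ 2 = weight c χ x ^ 2 / potential c χ x := by
    rw [weight_sq hχ hx]; field_simp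
  have hderiv := ((h.hasDerivAt_flux x hx).div
    ((hasDerivAt_weight hχ hx).mul (h.hasDerivAt x hx)) (mul_ne_zero hS.ne' hψ)).sub
    (hasDerivAt_damping hχ hx)
  refine hderiv.congr_deriv (f := riccati c χ ψ w) ?_
  simp only [Pi.mul_apply, riccati, hp, damping]
  generalize dampingDeriv c χ x = γ'
  generalize weight c χ x = S at *
  generalize potential c χ x = q at *
  field_simp
  ring

theorem hasDerivAt_dualRiccati (h : IsSolution c χ ψ w) (hX : c ^ 2 < X)
    (hx : x ∈ Ioo (-1 : ℝ) 1) (hw : w x ≠ 0) :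
    HasDerivAt (dualRiccati c X ψ w)
      (-(weight c X x / (1 - x ^ 2) * (1 + dualRiccati c X ψ w x ^ 2))
        - -(dampingDeriv c X x + weight c X x / (1 - x ^ 2) * damping c X x ^ 2
          + (X - χ) * weight c X x * (ψ x / w x) ^ 2)) x := by
  have hS := weight_pos hX hx
  have hq := potential_pos hX (Ioo_subset_Icc_self hx)
  have hp : 1 - x ^ 2 = weight c X x ^ 2 / potential c X x := by
    rw [weight_sq hX hx]; field_simp
  have hderiv := (hasDerivAt_damping hX hx).sub
    (((hasDerivAt_weight hX hx).mul (h.hasDerivAt x hx)).div (h.hasDerivAt_flux x hx) hw)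
  refine hderiv.congr_deriv (f := dualRiccati c X ψ w) ?_
  have hqχ : potential c χ x = potential c X x - (X - χ) := by unfold potential; ring
  simp only [Pi.mul_apply, dualRiccati, hp, damping, hqχ]
  generalize dampingDeriv c X x = γ'
  generalize weight c X x = S at *
  generalize potential c X x = q at *
  field_simp
  ring

/-! ### Phase length of zero-free intervals -/

theorem phase_sub_le_pi (h : IsSolution c χ ψ w) (hχ : c ^ 2 < χ) {a b : ℝ} (ha : -1 ≤ a)
    (hab : a < b) (hb : b ≤ 1) (hψ : ∀ x ∈ Ioo a b, ψ x ≠ 0) :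
    phase c χ b - phase c χ a ≤ π := by
  have hmem : ∀ x ∈ Ioo a b, x ∈ Ioo (-1 : ℝ) 1 := fun x hx =>
    ⟨ha.trans_lt hx.1, hx.2.trans_le hb⟩
  have hderiv := fun x hx => hasDerivAt_arctan_add
    (h.hasDerivAt_riccati hχ (hmem x hx) (hψ x hx)) (hasDerivAt_phase (hmem x hx))
  refine sub_le_pi_of_antitoneOn_arctan_add (R := riccati c χ ψ w) (continuous_phase c χ) hab ?_
  refine antitoneOn_of_hasDerivWithinAt_nonpos (convex_Ioo a b)
    (fun x hx => (hderiv x hx).continuousAt.continuousWithinAt)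
    (fun x hx => (hderiv x (interior_subset hx)).hasDerivWithinAt) fun x hx => ?_
  refine div_nonpos_of_nonpos_of_nonneg (neg_nonpos.2 (sub_nonneg.2 ?_)) (by positivity)
  exact phaseDeriv_mul_damping_sq_le hχ (hmem x (interior_subset hx))

theorem strictMonoOn_arctan_dualRiccati_add_phase (h : IsSolution c χ ψ w) (hχ : χ ≤ X)
    (hX : c ^ 2 < X) {a b : ℝ} (ha : -1 ≤ a) (hb : b ≤ 1) (hw : ∀ x ∈ Ioo a b, w x ≠ 0) :
    StrictMonoOn (fun x => arctan (dualRiccati c X ψ w x) + phase c X x) (Ioo a b) := by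
  have hmem : ∀ x ∈ Ioo a b, x ∈ Ioo (-1 : ℝ) 1 := fun x hx =>
    ⟨ha.trans_lt hx.1, hx.2.trans_le hb⟩
  have hderiv := fun x hx => hasDerivAt_arctan_add
    (h.hasDerivAt_dualRiccati hX (hmem x hx) (hw x hx)) (hasDerivAt_phase (hmem x hx))
  refine strictMonoOn_of_hasDerivWithinAt_pos (convex_Ioo a b)
    (fun x hx => (hderiv x hx).continuousAt.continuousWithinAt)
    (fun x hx => (hderiv x (interior_subset hx)).hasDerivWithinAt) fun x hx => ?_
  have hx' := hmem x (interior_subset hx)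
  have hγ := dampingDeriv_pos hX hx'
  have hS := weight_pos hX hx'
  have hp := one_sub_sq_pos hx'
  have : 0 ≤ X - χ := sub_nonneg.2 hχ
  rw [neg_neg]
  positivity

/-! ### Behaviour at critical points and at the end points -/

theorem tendsto_dualRiccati_of_flux_eq_zero (h : IsSolution c χ ψ w) (hX : c ^ 2 < X) {b : ℝ}
    (hb : b ∈ Ioo (-1 : ℝ) 1) (hψb : 0 < ψ b) (hwb : w b = 0)
    (hw : ∀ᶠ x in 𝓝[<] b, 0 < w x) :
    Tendsto (dualRiccati c X ψ w) (𝓝[<] b) atBot := by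
  have hγ : Tendsto (damping c X) (𝓝[<] b) (𝓝 (damping c X b)) :=
    (hasDerivAt_damping hX hb).continuousAt.tendsto.mono_left nhdsWithin_le_nhds
  have hSψ : Tendsto (fun x => weight c X x * ψ x) (𝓝[<] b) (𝓝 (weight c X b * ψ b)) :=
    ((hasDerivAt_weight hX hb).continuousAt.tendsto.mul
      (h.hasDerivAt b hb).continuousAt.tendsto).mono_left nhdsWithin_le_nhds
  have hw_zero : Tendsto w (𝓝[<] b) (𝓝 0) :=
    hwb ▸ (h.hasDerivAt_flux b hb).continuousAt.tendsto.mono_left nhdsWithin_le_nhds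
  have hw_inv : Tendsto w⁻¹ (𝓝[<] b) atTop :=
    (tendsto_nhdsWithin_of_tendsto_nhds_of_eventually_within w hw_zero hw).inv_tendsto_nhdsGT_zero
  have hratio := hSψ.pos_mul_atTop (mul_pos (weight_pos hX hb) hψb) hw_inv
  refine (hγ.add_atBot (tendsto_neg_atTop_atBot.comp hratio)).congr fun x => ?_
  simp only [Function.comp_apply, Pi.inv_apply, dualRiccati, div_eq_mul_inv, sub_eq_add_neg]

theorem tendsto_nhdsLT_one (h : IsSolution c χ ψ w) : Tendsto ψ (𝓝[<] 1) (𝓝 (ψ 1)) :=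
  (h.continuousOn 1 (by norm_num)).mono_left
    (nhdsWithin_le_of_mem (mem_of_superset (Ioo_mem_nhdsLT (by norm_num)) Ioo_subset_Icc_self))

-- If the flux stayed above `δ`, then `ψ` would grow at least like `-(δ/2) log (1 - x)`.
theorem exists_flux_lt (h : IsSolution c χ ψ w) (hx : x ∈ Ioo (-1 : ℝ) 1) {δ : ℝ} (hδ : 0 < δ) :
    ∃ y ∈ Ico x 1, w y < δ := by
  by_contra! hw
  have hmem : ∀ y ∈ Ico x 1, y ∈ Ioo (-1 : ℝ) 1 := fun y hy => ⟨hx.1.trans_le hy.1, hy.2⟩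
  have hderiv : ∀ y ∈ Ico x 1, HasDerivAt (fun y => ψ y + δ / 2 * log (1 - y))
      (w y / (1 - y ^ 2) + δ / 2 * (-1 / (1 - y))) y := fun y hy =>
    (h.hasDerivAt y (hmem y hy)).add
      ((((hasDerivAt_id y).const_sub 1).log (sub_pos.2 hy.2).ne').const_mul (δ / 2))
  have hmono : MonotoneOn (fun y => ψ y + δ / 2 * log (1 - y)) (Ico x 1) := by
    refine monotoneOn_of_hasDerivWithinAt_nonneg (convex_Ico x 1)
      (fun y hy => (hderiv y hy).continuousAt.continuousWithinAt)
      (fun y hy => (hderiv y (interior_subset hy)).hasDerivWithinAt) fun y hy => ?_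
    have hy' := interior_subset hy
    have hp := one_sub_sq_pos (hmem y hy')
    have hy1 : 0 < 1 - y := sub_pos.2 hy'.2
    have hslope : δ / (2 * (1 - y)) ≤ w y / (1 - y ^ 2) :=
      div_le_div₀ (hδ.le.trans (hw y hy')) (hw y hy') hp (by nlinarith)
    have hlog : δ / 2 * (-1 / (1 - y)) = -(δ / (2 * (1 - y))) := by field_simp
    linarith
  have hone_sub : Tendsto (fun y : ℝ => 1 - y) (𝓝[<] 1) (𝓝[>] 0) := by
    have hcont : Continuous fun y : ℝ => 1 - y := by fun_prop
    simpa using hcont.continuousWithinAt.tendsto_nhdsWithin (x := 1) (s := Iio 1) (t := Ioi 0)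
      fun y hy => sub_pos.2 hy
  have hbot : Tendsto (fun y => ψ y + δ / 2 * log (1 - y)) (𝓝[<] 1) atBot :=
    h.tendsto_nhdsLT_one.add_atBot
      ((tendsto_log_nhdsGT_zero.comp hone_sub).const_mul_atBot (half_pos hδ))
  obtain ⟨y, hlt, hy⟩ :=
    ((hbot.eventually_lt_atBot (ψ x + δ / 2 * log (1 - x))).and (Ioo_mem_nhdsLT hx.2)).exists
  exact hlt.not_ge (hmono (left_mem_Ico.2 hx.2) (Ioo_subset_Ico_self hy) hy.1.le)

theorem flux_le (h : IsSolution c χ ψ w) (hχ : χ ≤ X) (hX : c ^ 2 < X)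
    (hx : x ∈ Ico (0 : ℝ) 1) (hψ : MonotoneOn ψ (Icc x 1)) (hψx : 0 ≤ ψ x) :
    w x ≤ (1 - x) * (potential c X x * ψ 1) := by
  set K := potential c X x * ψ 1
  have hmem : ∀ y ∈ Ico x 1, y ∈ Ioo (-1 : ℝ) 1 := fun y hy =>
    ⟨by linarith [hx.1, hy.1], hy.2⟩
  have hx_left := left_mem_Icc.2 hx.2.le
  have hq : 0 < potential c X x := potential_pos hX ⟨by linarith [hx.1], hx.2.le⟩
  have hψ1 : 0 ≤ ψ 1 := hψx.trans (hψ hx_left (right_mem_Icc.2 hx.2.le) hx.2.le)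
  have hderiv : ∀ y ∈ Ico x 1,
      HasDerivAt (fun y => w y + K * y) (-(potential c χ y * ψ y) + K * 1) y := fun y hy =>
    (h.hasDerivAt_flux y (hmem y hy)).add ((hasDerivAt_id y).const_mul K)
  have hmono : MonotoneOn (fun y => w y + K * y) (Ico x 1) := by
    refine monotoneOn_of_hasDerivWithinAt_nonneg (convex_Ico x 1)
      (fun y hy => (hderiv y hy).continuousAt.continuousWithinAt)
      (fun y hy => (hderiv y (interior_subset hy)).hasDerivWithinAt) fun y hy => ?_
    have hy' := Ico_subset_Icc_self (interior_subset hy)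
    have hq_le : potential c χ y ≤ potential c X x := by
      have hsq : x ^ 2 ≤ y ^ 2 := pow_le_pow_left₀ hx.1 hy'.1 2
      unfold potential
      nlinarith [sq_nonneg c]
    have hψy : 0 ≤ ψ y := hψx.trans (hψ hx_left hy' hy'.1)
    have hprod : potential c χ y * ψ y ≤ K :=
      mul_le_mul hq_le (hψ hy' (right_mem_Icc.2 hx.2.le) hy'.2) hψy hq.le
    linarith
  by_contra! hlt
  obtain ⟨y, hy, hwy⟩ := h.exists_flux_lt (hmem x (left_mem_Ico.2 hx.2)) (sub_pos.2 hlt)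
  have hle := hmono (left_mem_Ico.2 hx.2) hy hy.1
  have hK0 : 0 ≤ K := mul_nonneg hq.le hψ1
  dsimp only at hle
  nlinarith [mul_nonneg hK0 (sub_nonneg.2 hy.2.le)]

theorem dualRiccati_le (h : IsSolution c χ ψ w) (hχ : χ ≤ X) (hX : c ^ 2 < X)
    (hx : x ∈ Ico (0 : ℝ) 1) (hψ : MonotoneOn ψ (Icc x 1)) (hψx : 0 ≤ ψ x) (hψ1 : 0 < ψ 1)
    (hwx : 0 < w x) :
    dualRiccati c X ψ w x ≤ (weight c X x)⁻¹ *
      (x * (1 + c ^ 2 * (1 - x ^ 2) / potential c X x) / 2 - (1 + x) * ψ x / ψ 1) := by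
  have hx' : x ∈ Ioo (-1 : ℝ) 1 := ⟨by linarith [hx.1], hx.2⟩
  have hS := weight_pos hX hx'
  have hq := potential_pos hX (Ioo_subset_Icc_self hx')
  have hx1 : 0 < 1 - x := sub_pos.2 hx.2
  have hdamping : damping c X x
      = (weight c X x)⁻¹ * (x * (1 + c ^ 2 * (1 - x ^ 2) / potential c X x) / 2) := by
    unfold damping weightSlope
    field_simp
  have hratio : (weight c X x)⁻¹ * ((1 + x) * ψ x / ψ 1) ≤ weight c X x * ψ x / w x :=
    calc (weight c X x)⁻¹ * ((1 + x) * ψ x / ψ 1)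
        = weight c X x * ψ x / ((1 - x) * (potential c X x * ψ 1)) := by
          field_simp
          rw [weight_sq hX hx']
          ring
      _ ≤ weight c X x * ψ x / w x :=
          div_le_div_of_nonneg_left (mul_nonneg hS.le hψx) hwx (h.flux_le hχ hX hx hψ hψx)
  rw [dualRiccati, hdamping, mul_sub]
  linarith

theorem tendsto_dualRiccati_nhdsLT_one (h : IsSolution c χ ψ w) (hχ : χ ≤ X) (hX : c ^ 2 < X)
    {z : ℝ} (hz : z < 1) (hψ : MonotoneOn ψ (Icc z 1)) (hψz : 0 ≤ ψ z) (hψ1 : 0 < ψ 1)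
    (hw : ∀ x ∈ Ico z 1, 0 < w x) :
    Tendsto (dualRiccati c X ψ w) (𝓝[<] 1) atBot := by
  have hbracket : Tendsto (fun x => x * (1 + c ^ 2 * (1 - x ^ 2) / potential c X x) / 2
      - (1 + x) * ψ x / ψ 1) (𝓝[<] 1) (𝓝 (-(3 / 2))) := by
    have hq : potential c X 1 ≠ 0 := (potential_pos hX (by norm_num)).ne'
    have hfirst : ContinuousAt
        (fun x => x * (1 + c ^ 2 * (1 - x ^ 2) / potential c X x) / 2) 1 := by
      have := continuous_potential (c := c) (X := X)
      fun_prop (disch := assumption)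
    have hsecond : Tendsto (fun x : ℝ => 1 + x) (𝓝[<] 1) (𝓝 (1 + 1)) :=
      (continuous_const.add continuous_id).continuousWithinAt
    convert (hfirst.tendsto.mono_left nhdsWithin_le_nhds).sub
      ((hsecond.mul h.tendsto_nhdsLT_one).div_const (ψ 1)) using 2
    field_simp
    ring
  refine tendsto_atBot_mono' _ ?_
    ((tendsto_inv_weight_nhdsLT_one hX).atTop_mul_neg (by norm_num) hbracket)
  filter_upwards [Ioo_mem_nhdsLT (max_lt hz one_pos)] with x hx
  have hzx : z ≤ x := (le_max_left z 0).trans hx.1.le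
  exact h.dualRiccati_le hχ hX ⟨(le_max_right z 0).trans hx.1.le, hx.2⟩
    (hψ.mono (Icc_subset_Icc_left hzx))
    (hψz.trans (hψ (left_mem_Icc.2 hz.le) ⟨hzx, hx.2.le⟩ hzx)) hψ1 (hw x ⟨hzx, hx.2⟩)

theorem strictMonoOn_of_flux_pos (h : IsSolution c χ ψ w) {a b : ℝ} (ha : -1 ≤ a) (hb : b ≤ 1)
    (hw : ∀ x ∈ Ioo a b, 0 < w x) : StrictMonoOn ψ (Icc a b) := by
  have hmem : ∀ x ∈ interior (Icc a b), x ∈ Ioo a b ∧ x ∈ Ioo (-1 : ℝ) 1 := fun x hx => by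
    rw [interior_Icc] at hx
    exact ⟨hx, ha.trans_lt hx.1, hx.2.trans_le hb⟩
  exact strictMonoOn_of_hasDerivWithinAt_pos (convex_Icc a b)
    (h.continuousOn.mono (Icc_subset_Icc ha hb))
    (fun x hx => (h.hasDerivAt x (hmem x hx).2).hasDerivWithinAt)
    fun x hx => div_pos (hw x (hmem x hx).1) (one_sub_sq_pos (hmem x hx).2)

theorem tendsto_dualRiccati_nhdsLT (h : IsSolution c χ ψ w) (hχ : χ ≤ X) (hX : c ^ 2 < X)
    {z b : ℝ} (hz : -1 < z) (hzb : z < b) (hb : b ≤ 1) (hψz : ψ z = 0)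
    (hw : ∀ x ∈ Ico z b, w x ≠ 0) (hb_eq : b = 1 ∨ w b = 0) :
    Tendsto (dualRiccati c X ψ w) (𝓝[<] b) atBot := by
  wlog hpos : 0 < w z generalizing ψ w with hwlog
  · have hneg : 0 < -w z := neg_pos.2
      ((not_lt.1 hpos).lt_of_ne (hw z (left_mem_Ico.2 hzb)))
    rw [← dualRiccati_neg]
    exact hwlog h.neg (by simpa using hψz) (by simpa using hw) (by simpa using hb_eq) hneg
  have hw_pos : ∀ x ∈ Ico z b, 0 < w x :=
    pos_of_isPreconnected_of_ne_zero isPreconnected_Ico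
      (h.continuousOn_flux.mono fun x hx => ⟨hz.trans_le hx.1, hx.2.trans_le hb⟩) hw
      (left_mem_Ico.2 hzb) hpos
  have hmono : StrictMonoOn ψ (Icc z b) :=
    h.strictMonoOn_of_flux_pos hz.le hb fun x hx => hw_pos x (Ioo_subset_Ico_self hx)
  have hψb : 0 < ψ b :=
    hψz ▸ hmono (left_mem_Icc.2 hzb.le) (right_mem_Icc.2 hzb.le) hzb
  rcases hb.eq_or_lt with rfl | hb1
  · exact h.tendsto_dualRiccati_nhdsLT_one hχ hX hzb hmono.monotoneOn hψz.ge hψb hw_pos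
  · refine h.tendsto_dualRiccati_of_flux_eq_zero hX ⟨hz.trans hzb, hb1⟩ hψb
      (hb_eq.resolve_left hb1.ne) ?_
    filter_upwards [Ioo_mem_nhdsLT hzb] with x hx using hw_pos x (Ioo_subset_Ico_self hx)

theorem tendsto_dualRiccati_nhdsGT (h : IsSolution c χ ψ w) (hχ : χ ≤ X) (hX : c ^ 2 < X)
    {a z : ℝ} (ha : -1 ≤ a) (haz : a < z) (hz : z < 1) (hψz : ψ z = 0)
    (hw : ∀ x ∈ Ioc a z, w x ≠ 0) (ha_eq : a = -1 ∨ w a = 0) :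
    Tendsto (dualRiccati c X ψ w) (𝓝[>] a) atTop := by
  have hbot := h.reflect.tendsto_dualRiccati_nhdsLT hχ hX (z := -z) (b := -a) (by linarith)
    (by linarith) (by linarith) (by simpa using hψz)
    (fun x hx => neg_ne_zero.2 (hw (-x) ⟨by linarith [hx.2], by linarith [hx.1]⟩))
    (ha_eq.imp (by rintro rfl; norm_num) (by simp))
  refine (tendsto_neg_atBot_atTop.comp (hbot.comp tendsto_neg_nhdsGT)).congr fun x => ?_
  simp [dualRiccati_reflect]

/-! ### Counting zeros -/

theorem pi_lt_phase_sub (h : IsSolution c χ ψ w) (hχ : χ ≤ X) (hX : c ^ 2 < X) {a z b : ℝ}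
    (hab : IsNodalInterval w (-1) 1 a b) (hz : z ∈ Ioo a b) (hψz : ψ z = 0) :
    π < phase c X b - phase c X a :=
  pi_lt_sub_of_strictMonoOn_arctan_add (continuous_phase c X) (hz.1.trans hz.2)
    (h.strictMonoOn_arctan_dualRiccati_add_phase hχ hX hab.le_left hab.right_le hab.ne_zero)
    (h.tendsto_dualRiccati_nhdsGT hχ hX hab.le_left hz.1 (hz.2.trans_le hab.right_le) hψz
      (fun x hx => hab.ne_zero x ⟨hx.1, hx.2.trans_lt hz.2⟩) hab.left_eq_or)
    (h.tendsto_dualRiccati_nhdsLT hχ hX (hab.le_left.trans_lt hz.1) hz.2 hab.right_le hψz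
      (fun x hx => hab.ne_zero x ⟨hz.1.trans_le hx.1, hx.2⟩) hab.right_eq_or)

theorem eq_zero_of_eq_zero_of_flux_eq_zero (h : IsSolution c χ ψ w) {m r : ℝ} (hm : -1 < m)
    (hr : r < 1) (hψm : ψ m = 0) (hwm : w m = 0) : ∀ x ∈ Icc m r, ψ x = 0 := by
  have hmem : ∀ x ∈ Icc m r, x ∈ Ioo (-1 : ℝ) 1 := fun x hx =>
    ⟨hm.trans_le hx.1, hx.2.trans_lt hr⟩
  obtain ⟨K, hK⟩ : ∃ K, ∀ x ∈ Icc m r, ‖((1 - x ^ 2)⁻¹, potential c χ x)‖ ≤ K := by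
    refine isCompact_Icc.exists_bound_of_continuousOn (ContinuousOn.prodMk ?_
      continuous_potential.continuousOn)
    exact ContinuousOn.inv₀ (by fun_prop) fun x hx => (one_sub_sq_pos (hmem x hx)).ne'
  have hderiv : ∀ x ∈ Icc m r, HasDerivAt (fun x => (ψ x, w x))
      (w x / (1 - x ^ 2), -(potential c χ x * ψ x)) x := fun x hx =>
    (h.hasDerivAt x (hmem x hx)).prodMk (h.hasDerivAt_flux x (hmem x hx))
  have hzero := eq_zero_of_abs_deriv_le_mul_abs_self_of_eq_zero_right (K := K)
    (fun x hx => (hderiv x hx).continuousAt.continuousWithinAt)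
    (fun x hx => (hderiv x (Ico_subset_Icc_self hx)).hasDerivWithinAt)
    (by simp [hψm, hwm]) fun x hx => ?_
  · exact fun x hx => congrArg Prod.fst (hzero x hx)
  · have hKx := hK x (Ico_subset_Icc_self hx)
    rw [norm_prod_le_iff] at hKx
    rw [norm_prod_le_iff, norm_neg, div_eq_inv_mul, norm_mul, norm_mul]
    exact ⟨mul_le_mul hKx.1 (norm_snd_le (ψ x, w x)) (norm_nonneg _)
        ((norm_nonneg _).trans hKx.1),
      mul_le_mul hKx.2 (norm_fst_le (ψ x, w x)) (norm_nonneg _)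
        ((norm_nonneg _).trans hKx.2)⟩

theorem flux_ne_zero (h : IsSolution c χ ψ w)
    (hfin : {x | x ∈ Ioo (-1 : ℝ) 1 ∧ ψ x = 0}.Finite) {m : ℝ} (hm : m ∈ Ioo (-1 : ℝ) 1)
    (hψm : ψ m = 0) : w m ≠ 0 := by
  intro hwm
  obtain ⟨r, hmr, hr⟩ := exists_between hm.2
  have hzero := h.eq_zero_of_eq_zero_of_flux_eq_zero hm.1 hr hψm hwm
  exact Icc_infinite hmr
    (hfin.subset fun x hx => ⟨⟨hm.1.trans_le hx.1, hx.2.trans_lt hr⟩, hzero x hx⟩)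

theorem exists_flux_eq_zero (h : IsSolution c χ ψ w) {y z : ℝ} (hy : -1 < y) (hyz : y < z)
    (hz : z < 1) (hψy : ψ y = 0) (hψz : ψ z = 0) : ∃ e ∈ Ioo y z, w e = 0 := by
  have hmem : ∀ x ∈ Icc y z, x ∈ Ioo (-1 : ℝ) 1 := fun x hx =>
    ⟨hy.trans_le hx.1, hx.2.trans_lt hz⟩
  obtain ⟨e, he, hderiv⟩ := exists_hasDerivAt_eq_zero hyz
    (fun x hx => (h.hasDerivAt x (hmem x hx)).continuousAt.continuousWithinAt)
    (hψy.trans hψz.symm) fun x hx => h.hasDerivAt x (hmem x (Ioo_subset_Icc_self hx))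
  exact ⟨e, he, (div_eq_zero_iff.1 hderiv).resolve_right
    (one_sub_sq_pos (hmem e (Ioo_subset_Icc_self he))).ne'⟩

theorem ncard_mul_pi_lt (h : IsSolution c χ ψ w) (hχ : χ ≤ X) (hX : c ^ 2 < X)
    (hfin : {x | x ∈ Ioo (-1 : ℝ) 1 ∧ ψ x = 0}.Finite)
    (hne : {x | x ∈ Ioo (-1 : ℝ) 1 ∧ ψ x = 0}.Nonempty) :
    {x | x ∈ Ioo (-1 : ℝ) 1 ∧ ψ x = 0}.ncard * π < 2 * phase c X 1 := by
  have hnodal : ∀ z ∈ hfin.toFinset, ∃ l r, z ∈ Ioo l r ∧ IsNodalInterval w (-1) 1 l r :=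
    fun z hz => by
      obtain ⟨hz_mem, hψz⟩ := hfin.mem_toFinset.1 hz
      exact exists_isNodalInterval h.continuousOn_flux hz_mem (h.flux_ne_zero hfin hz_mem hψz)
  choose! l r hmem hlr using hnodal
  have hsep : ∀ y ∈ hfin.toFinset, ∀ z ∈ hfin.toFinset, y < z → r y ≤ l z := by
    intro y hy z hz hyz
    obtain ⟨hy_mem, hψy⟩ := hfin.mem_toFinset.1 hy
    obtain ⟨hz_mem, hψz⟩ := hfin.mem_toFinset.1 hz
    obtain ⟨e, he, hwe⟩ := h.exists_flux_eq_zero hy_mem.1 hyz hz_mem.2 hψy hψz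
    exact (hlr y hy).right_le_left (hlr z hz) (hmem y hy) (hmem z hz) he hwe
  calc {x | x ∈ Ioo (-1 : ℝ) 1 ∧ ψ x = 0}.ncard * π = ∑ _z ∈ hfin.toFinset, π := by
        rw [Finset.sum_const, nsmul_eq_mul, ncard_eq_toFinset_card _ hfin]
    _ < ∑ z ∈ hfin.toFinset, (phase c X (r z) - phase c X (l z)) :=
        Finset.sum_lt_sum_of_nonempty (hfin.toFinset_nonempty.2 hne) fun z hz =>
          h.pi_lt_phase_sub hχ hX (hlr z hz) (hmem z hz) (hfin.mem_toFinset.1 hz).2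
    _ ≤ phase c X 1 - phase c X (-1) :=
        sum_sub_le_of_separated (monotone_phase c X) _ (by norm_num)
          (fun z hz => (hlr z hz).le_left) (fun z hz => (hlr z hz).right_le) hsep
    _ = 2 * phase c X 1 := by rw [phase_neg]; ring

theorem two_mul_phase_one_le (h : IsSolution c χ ψ w) (hχ : c ^ 2 < χ)
    (hfin : {x | x ∈ Ioo (-1 : ℝ) 1 ∧ ψ x = 0}.Finite) :
    2 * phase c χ 1 ≤ ({x | x ∈ Ioo (-1 : ℝ) 1 ∧ ψ x = 0}.ncard + 1) * π := by
  have hcount := sub_le_card_add_one_mul (T := phase c χ) (a := -1) (b := 1) (d := π)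
    hfin.toFinset (by norm_num) (fun z hz => (hfin.mem_toFinset.1 hz).1)
    fun x y hx hxy hy hfree => h.phase_sub_le_pi hχ hx hxy hy fun t ht hψt =>
      hfree t ht (hfin.mem_toFinset.2 ⟨⟨hx.trans_lt ht.1, ht.2.trans_le hy⟩, hψt⟩)
  rw [phase_neg, ← ncard_eq_toFinset_card _ hfin] at hcount
  linarith

end IsSolution

/-! ### The total phase -/

theorem phase_one {c : ℝ} (hc : 0 < c) (X : ℝ) :
    phase c X 1 = c * (fFun ((X - c ^ 2) / c ^ 2) + 1) := by
  rw [phase, arcsin_one, fFun, neg_add_cancel_comm, ← intervalIntegral.integral_const_mul]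
  congr 1 with θ
  have hsubst : X - c ^ 2 * sin θ ^ 2 = c ^ 2 * ((X - c ^ 2) / c ^ 2 + cos θ ^ 2) := by
    rw [sin_sq]
    field_simp
    ring
  rw [hsubst, sqrt_mul (sq_nonneg c), sqrt_sq hc.le]

theorem phase_one_le {c δ : ℝ} (hc : 0 ≤ c) (hδ : 0 ≤ δ) :
    phase c (c ^ 2 + δ ^ 2) 1 ≤ c + π / 2 * δ := by
  have hbound : ∀ θ ∈ Icc 0 (π / 2),
      √(c ^ 2 + δ ^ 2 - c ^ 2 * sin θ ^ 2) ≤ c * cos θ + δ := fun θ hθ => by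
    have hcos : 0 ≤ c * cos θ :=
      mul_nonneg hc (cos_nonneg_of_mem_Icc ⟨by linarith [hθ.1, pi_pos], hθ.2⟩)
    refine sqrt_le_iff.2 ⟨by positivity, ?_⟩
    rw [sin_sq]
    nlinarith [mul_nonneg hcos hδ]
  calc phase c (c ^ 2 + δ ^ 2) 1 ≤ ∫ θ in (0 : ℝ)..(π / 2), (c * cos θ + δ) := by
        rw [phase, arcsin_one]
        exact intervalIntegral.integral_mono_on (by positivity)
          (Continuous.intervalIntegrable (by fun_prop) _ _)
          (Continuous.intervalIntegrable (by fun_prop) _ _) hbound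
    _ = c + π / 2 * δ := by
        rw [intervalIntegral.integral_add (Continuous.intervalIntegrable (by fun_prop) _ _)
          (Continuous.intervalIntegrable (by fun_prop) _ _)]
        simp

theorem monotone_fFun : Monotone fFun := fun x y hxy => by
  unfold fFun
  gcongr
  refine intervalIntegral.integral_mono_on (by positivity)
    (Continuous.intervalIntegrable (by fun_prop) _ _)
    (Continuous.intervalIntegrable (by fun_prop) _ _) fun θ _ => ?_
  gcongr

namespace IsSolution

variable {c χ : ℝ} {ψ w : ℝ → ℝ} {n : ℕ}

-- Otherwise the zero count applies with `X = c² + δ²` for every `δ > 0`, and letting `δ → 0`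
-- contradicts `2c < nπ`.
theorem sq_lt_eigenvalue (h : IsSolution c χ ψ w) (hc : 0 < c)
    (hfin : {x | x ∈ Ioo (-1 : ℝ) 1 ∧ ψ x = 0}.Finite)
    (hcard : {x | x ∈ Ioo (-1 : ℝ) 1 ∧ ψ x = 0}.ncard = n) (hn : 2 * c < n * π) :
    c ^ 2 < χ := by
  by_contra! hχ
  have hne : {x | x ∈ Ioo (-1 : ℝ) 1 ∧ ψ x = 0}.Nonempty := by
    refine nonempty_of_ncard_ne_zero fun hzero => ?_
    rw [← hcard, hzero] at hn
    norm_num at hn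
    linarith
  have hle : ∀ δ > 0, n * π ≤ 2 * c + π * δ := fun δ hδ => by
    have hδ_sq : 0 < δ ^ 2 := by positivity
    have hlt := h.ncard_mul_pi_lt (X := c ^ 2 + δ ^ 2) (by linarith) (by linarith) hfin hne
    rw [hcard] at hlt
    linarith [phase_one_le hc.le hδ.le]
  refine hn.not_ge (le_of_forall_pos_le_add fun ε hε => ?_)
  simpa [mul_div_cancel₀ ε pi_ne_zero] using hle (ε / π) (by positivity)

theorem lt_fFun (h : IsSolution c χ ψ w) (hc : 0 < c)
    (hfin : {x | x ∈ Ioo (-1 : ℝ) 1 ∧ ψ x = 0}.Finite)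
    (hcard : {x | x ∈ Ioo (-1 : ℝ) 1 ∧ ψ x = 0}.ncard = n) (hn : n ≠ 0) (hχ : c ^ 2 < χ) :
    n * π / (2 * c) - 1 < fFun ((χ - c ^ 2) / c ^ 2) := by
  have hlt := h.ncard_mul_pi_lt le_rfl hχ hfin (nonempty_of_ncard_ne_zero (hcard ▸ hn))
  rw [hcard, phase_one hc] at hlt
  rw [sub_lt_iff_lt_add, div_lt_iff₀ (by positivity)]
  linarith

theorem fFun_le (h : IsSolution c χ ψ w) (hc : 0 < c)
    (hfin : {x | x ∈ Ioo (-1 : ℝ) 1 ∧ ψ x = 0}.Finite)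
    (hcard : {x | x ∈ Ioo (-1 : ℝ) 1 ∧ ψ x = 0}.ncard = n) (hχ : c ^ 2 < χ) :
    fFun ((χ - c ^ 2) / c ^ 2) ≤ (n + 1) * π / (2 * c) - 1 := by
  have hle := h.two_mul_phase_one_le hχ hfin
  rw [hcard, phase_one hc] at hle
  rw [le_sub_iff_add_le, le_div_iff₀ (by positivity)]
  linarith

end IsSolution

theorem isSolution_of_isPSWF {c χ : ℝ} {n : ℕ} {ψ : ℝ → ℝ} {lam : ℂ}
    (h : IsPSWF c n ψ χ lam) : IsSolution c χ ψ fun x => (1 - x ^ 2) * deriv ψ x := by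
  obtain ⟨hcont, hdiff, hode, -⟩ := h
  refine ⟨hcont, fun x hx => ?_, fun x hx => ?_⟩
  · have hp := one_sub_sq_pos hx
    exact (hdiff x hx).1.hasDerivAt.congr_deriv (by field_simp)
  · refine ((hasDerivAt_one_sub_sq x).mul (hdiff x hx).2.hasDerivAt).congr_deriv ?_
    unfold potential
    linarith [hode x hx]

/-! ### Elliptic integrals -/

theorem one_add_mul_cos_sq_pos {x : ℝ} (hx : 0 ≤ x) (θ : ℝ) : 0 < 1 + x * cos θ ^ 2 := by
  positivity

theorem continuous_sin_sq_div_sqrt {x : ℝ} (hx : 0 ≤ x) :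
    Continuous fun θ : ℝ => sin θ ^ 2 / √(1 + x * cos θ ^ 2) :=
  Continuous.div (by fun_prop) (by fun_prop) fun θ =>
    (sqrt_pos.2 (one_add_mul_cos_sq_pos hx θ)).ne'

theorem strictMonoOn_div_sqrt_one_add_mul {u : ℝ} (hu : 0 ≤ u) :
    StrictMonoOn (fun x => x / √(1 + x * u)) (Ici 0) := by
  intro x hx y hy hxy
  have hx0 : 0 ≤ x := hx
  have hy0 : 0 ≤ y := hy
  dsimp only
  rw [div_lt_div_iff₀ (by positivity) (by positivity)]
  refine lt_of_pow_lt_pow_left₀ 2 (by positivity) ?_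
  rw [mul_pow, mul_pow, sq_sqrt (by positivity), sq_sqrt (by positivity)]
  have hcross : 0 ≤ x * y * u * (y - x) := mul_nonneg (by positivity) (sub_nonneg.2 hxy.le)
  nlinarith

theorem strictMonoOn_mul_GFun : StrictMonoOn (fun x => x * GFun x) (Ici 0) := by
  intro x hx y hy hxy
  have hcomm (x θ : ℝ) : x * (sin θ ^ 2 / √(1 + x * cos θ ^ 2))
      = sin θ ^ 2 * (x / √(1 + x * cos θ ^ 2)) := by ring
  have hlt (θ : ℝ) := strictMonoOn_div_sqrt_one_add_mul (sq_nonneg (cos θ)) hx hy hxy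
  simp only [GFun, ← intervalIntegral.integral_const_mul]
  refine intervalIntegral.integral_lt_integral_of_continuousOn_of_le_of_exists_lt (by positivity)
    ((continuous_sin_sq_div_sqrt hx).const_mul x).continuousOn
    ((continuous_sin_sq_div_sqrt hy).const_mul y).continuousOn (fun θ _ => ?_)
    ⟨π / 2, ⟨by positivity, le_rfl⟩, ?_⟩
  · rw [hcomm, hcomm]
    exact mul_le_mul_of_nonneg_left (hlt θ).le (sq_nonneg _)
  · rw [hcomm, hcomm]
    exact mul_lt_mul_of_pos_left (hlt _) (by simp)

theorem sqrt_mul_EllipticF_sub_EllipticE {x : ℝ} (hx : 0 ≤ x) :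
    √(1 + x) * (EllipticF √(x / (1 + x)) - EllipticE √(x / (1 + x))) = x * GFun x := by
  have hmodulus (θ : ℝ) :
      √(1 - x / (1 + x) * sin θ ^ 2) = √(1 + x * cos θ ^ 2) / √(1 + x) := by
    rw [← sqrt_div (one_add_mul_cos_sq_pos hx θ).le, sin_sq]
    congr 1
    field_simp
    ring
  have hpos (θ : ℝ) : 0 < √(1 + x * cos θ ^ 2) := sqrt_pos.2 (one_add_mul_cos_sq_pos hx θ)
  have hpos' : 0 < √(1 + x) := by positivity
  have hF : Continuous fun θ : ℝ => 1 / (√(1 + x * cos θ ^ 2) / √(1 + x)) :=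
    Continuous.div (by fun_prop) (by fun_prop) fun θ => (div_pos (hpos θ) hpos').ne'
  simp only [EllipticF, EllipticE, GFun, sq_sqrt (show 0 ≤ x / (1 + x) by positivity), hmodulus]
  rw [← intervalIntegral.integral_sub (hF.intervalIntegrable _ _)
    (Continuous.intervalIntegrable (by fun_prop) _ _),
    ← intervalIntegral.integral_const_mul, ← intervalIntegral.integral_const_mul]
  congr 1 with θ
  have := hpos θ
  field_simp
  rw [sq_sqrt (one_add_mul_cos_sq_pos hx θ).le, sq_sqrt (by positivity), sin_sq]
  ring

theorem sqrt_mul_EllipticF_sub_EllipticE_of_sq_lt {c χ : ℝ} (hc : 0 < c) (hχ : c ^ 2 < χ) :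
    √χ * (EllipticF √((χ - c ^ 2) / χ) - EllipticE √((χ - c ^ 2) / χ))
      = c * ((χ - c ^ 2) / c ^ 2 * GFun ((χ - c ^ 2) / c ^ 2)) := by
  have hx : 0 ≤ (χ - c ^ 2) / c ^ 2 := div_nonneg (sub_nonneg.2 hχ.le) (sq_nonneg c)
  have hχ_eq : χ = c ^ 2 * (1 + (χ - c ^ 2) / c ^ 2) := by field_simp; ring
  have hmodulus : (χ - c ^ 2) / χ = (χ - c ^ 2) / c ^ 2 / (1 + (χ - c ^ 2) / c ^ 2) := by
    field_simp; ring
  have hsqrt : √χ = c * √(1 + (χ - c ^ 2) / c ^ 2) := by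
    conv_lhs => rw [hχ_eq, sqrt_mul (sq_nonneg c), sqrt_sq hc.le]
  rw [hsqrt, hmodulus, mul_assoc, sqrt_mul_EllipticF_sub_EllipticE hx]

end Prolate

theorem stmt9_general {c χ : ℝ} {n : ℕ} {ψ w : ℝ → ℝ} (hc : 0 < c) (hnlow : 2 * c / π < n)
    (h : Prolate.IsSolution c χ ψ w) (hfin : {x | x ∈ Set.Ioo (-1 : ℝ) 1 ∧ ψ x = 0}.Finite)
    (hcard : {x | x ∈ Set.Ioo (-1 : ℝ) 1 ∧ ψ x = 0}.ncard = n) :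
    (∀ h₁ : ℝ, 0 ≤ h₁ → fFun h₁ ≤ n * π / (2 * c) - 1 → h₁ < (χ - c ^ 2) / c ^ 2) ∧
    (∀ h₂ : ℝ, 0 ≤ h₂ → (n + 1) * π / (2 * c) - 1 < fFun h₂ → (χ - c ^ 2) / c ^ 2 < h₂) ∧
    (∀ h₁ : ℝ, 0 ≤ h₁ → fFun h₁ ≤ n * π / (2 * c) - 1 →
      c * h₁ * GFun h₁ <
        √χ * (EllipticF √((χ - c ^ 2) / χ) - EllipticE √((χ - c ^ 2) / χ))) := by
  have hn : n ≠ 0 := by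
    rintro rfl
    exact hnlow.not_ge (by simpa using by positivity)
  have hχ : c ^ 2 < χ := h.sq_lt_eigenvalue hc hfin hcard ((div_lt_iff₀ pi_pos).1 hnlow)
  have hlower : ∀ h₁, fFun h₁ ≤ n * π / (2 * c) - 1 → h₁ < (χ - c ^ 2) / c ^ 2 := fun h₁ hf =>
    Prolate.monotone_fFun.reflect_lt (hf.trans_lt (h.lt_fFun hc hfin hcard hn hχ))
  refine ⟨fun h₁ _ hf => hlower h₁ hf, fun h₂ _ hf =>
    Prolate.monotone_fFun.reflect_lt ((h.fFun_le hc hfin hcard hχ).trans_lt hf),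
    fun h₁ hh₁ hf => ?_⟩
  rw [Prolate.sqrt_mul_EllipticF_sub_EllipticE_of_sq_lt hc hχ, mul_assoc]
  have hlt := hlower h₁ hf
  exact mul_lt_mul_of_pos_left
    (Prolate.strictMonoOn_mul_GFun hh₁ (hh₁.trans hlt.le) hlt) hc

theorem stmt9 (c : ℝ) (hc : 0 < c) (n : ℕ) (hn : 0 < n)
    (hnlow : (n : ℝ) > 2 * c / π)
    (ψ : ℝ → ℝ) (χ : ℝ) (lam : ℂ)
    (hpswf : IsPSWF c n ψ χ lam) :
    (∀ h₁ : ℝ, 0 ≤ h₁ → fFun h₁ = (n : ℝ) * π / (2 * c) - 1 →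
        h₁ < (χ - c ^ 2) / c ^ 2) ∧
    (∀ h₂ : ℝ, 0 ≤ h₂ → fFun h₂ = (n : ℝ) * π / (2 * c) - 1 + 3 * π / (2 * c) →
        (χ - c ^ 2) / c ^ 2 < h₂) ∧
    (∀ h₁ : ℝ, 0 ≤ h₁ → fFun h₁ = (n : ℝ) * π / (2 * c) - 1 →
        c * h₁ * GFun h₁ <
          Real.sqrt χ *
            (EllipticF (Real.sqrt ((χ - c ^ 2) / χ)) -
              EllipticE (Real.sqrt ((χ - c ^ 2) / χ)))) := by
  obtain ⟨hlower, hupper, helliptic⟩ := stmt9_general hc hnlow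
    (Prolate.isSolution_of_isPSWF hpswf) hpswf.2.2.2.1 hpswf.2.2.2.2.1
  exact ⟨fun h₁ hh₁ hf => hlower h₁ hh₁ hf.le,
    fun h₂ hh₂ hf => hupper h₂ hh₂ (by rw [hf]; field_simp; linarith [pi_pos]),
    fun h₁ hh₁ hf => helliptic h₁ hh₁ hf.le⟩
end
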